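/- For every integer Δ ≥ 1 and all reals d, α > 0 there exist η, μ > 0 and n₀ ∈ ℕ such that the following holds for every integer n ≥ n₀. Let G be a (d,η)-dense 3-uniform hypergraph on n vertices with d_G(v) ≥ αn² for every vertex v of G. Then G contains a copy of the 1-expansion of every μ-separable graph H with Δ(H) ≤ Δ and v(H) + e(H) ≤ n. -/

import Mathlib

open Finset
open scoped Classical

/-- Number of ordered pairs `(x,y) ∈ A × B` with `{x,y}` an edge of `G`. -/
noncomputable def pairCount {V : Type*} (G : SimpleGraph V) (A B : Finset V) : ℕ :=
  ((A ×ˢ B).filter (fun p => G.Adj p.1 p.2)).card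

/-- Number of neighbours of `v` in `B`. -/
noncomputable def degIn {V : Type*} (G : SimpleGraph V) (v : V) (B : Finset V) : ℕ :=
  (B.filter (fun w => G.Adj v w)).card

/-- Degree of `v` in `G`. -/
noncomputable def degOf {V : Type*} [Fintype V] (G : SimpleGraph V) (v : V) : ℕ :=
  ((univ : Finset V).filter (fun w => G.Adj v w)).card

/-- Number of edges of `G`. -/
noncomputable def edgeCnt {V : Type*} [Fintype V] (G : SimpleGraph V) : ℕ :=
  ((univ : Finset (Sym2 V)).filter (fun e => e ∈ G.edgeSet)).card

/-- Number of edges of `H` with one endpoint in `A` and the other in `B`. -/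
noncomputable def eBetween {W : Type*} [Fintype W] (H : SimpleGraph W) (A B : Finset W) : ℕ :=
  ((univ : Finset (Sym2 W)).filter
    (fun e => e ∈ H.edgeSet ∧ ∃ x ∈ A, ∃ y ∈ B, e = s(x, y))).card

/-- A graph `H` on `h` vertices is `μ`-separable if there is `X ⊆ V(H)` with `|X| ≤ μ h`
such that every connected component of `H - X` has at most `μ h` vertices. -/
def Separable {W : Type*} [Fintype W] (H : SimpleGraph W) (μ : ℝ) : Prop :=
  ∃ X : Finset W, (X.card : ℝ) ≤ μ * (Fintype.card W : ℝ) ∧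
    ∀ K : (SimpleGraph.induce ((↑X : Set W)ᶜ) H).ConnectedComponent,
      (K.supp.ncard : ℝ) ≤ μ * (Fintype.card W : ℝ)

/-- A transversal copy of `H` in the graph collection `G`. -/
def HasTransversal {V C W : Type*} (G : C → SimpleGraph V) (H : SimpleGraph W) : Prop :=
  ∃ (τ : W → V) (σ : Sym2 W → C),
    Function.Injective τ ∧ Set.InjOn σ H.edgeSet ∧
    ∀ x y, H.Adj x y → (G (σ s(x, y))).Adj (τ x) (τ y)

/-- Density of a collection of bipartite graphs. -/
noncomputable def colDensity {V C : Type*} (G : C → SimpleGraph V)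
    (A B : Finset V) (D : Finset C) : ℝ :=
  (∑ c ∈ D, (pairCount (G c) A B : ℝ)) / ((D.card : ℝ) * (A.card : ℝ) * (B.card : ℝ))

/-- `(ε,d)`-regularity of a collection of bipartite graphs with parts `V₁, V₂`
and colour set `D`. -/
def ColReg {V C : Type*} (ε d : ℝ) (G : C → SimpleGraph V)
    (V₁ V₂ : Finset V) (D : Finset C) : Prop :=
  d ≤ colDensity G V₁ V₂ D ∧
  ∀ V₁' ⊆ V₁, ∀ V₂' ⊆ V₂, ∀ D' ⊆ D,
    ε * (V₁.card : ℝ) ≤ (V₁'.card : ℝ) → ε * (V₂.card : ℝ) ≤ (V₂'.card : ℝ) →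
    ε * (D.card : ℝ) ≤ (D'.card : ℝ) →
    |colDensity G V₁' V₂' D' - colDensity G V₁ V₂ D| < ε

/-- `(ε,d)`-superregularity of a collection of bipartite graphs. -/
def ColSuperReg {V C : Type*} (ε d : ℝ) (G : C → SimpleGraph V)
    (V₁ V₂ : Finset V) (D : Finset C) : Prop :=
  ColReg ε d G V₁ V₂ D ∧
  (∀ v ∈ V₁, d * (V₂.card : ℝ) * (D.card : ℝ) ≤ ∑ c ∈ D, (degIn (G c) v V₂ : ℝ)) ∧
  (∀ v ∈ V₂, d * (V₁.card : ℝ) * (D.card : ℝ) ≤ ∑ c ∈ D, (degIn (G c) v V₁ : ℝ)) ∧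
  (∀ c ∈ D, d * (V₁.card : ℝ) * (V₂.card : ℝ) ≤ (pairCount (G c) V₁ V₂ : ℝ))

/-- `(ε,d)`-half-superregularity of a collection of bipartite graphs. -/
def ColHalfSuperReg {V C : Type*} (ε d : ℝ) (G : C → SimpleGraph V)
    (V₁ V₂ : Finset V) (D : Finset C) : Prop :=
  (∀ V₁' ⊆ V₁, ∀ V₂' ⊆ V₂, ∀ D' ⊆ D,
    ε * (V₁.card : ℝ) ≤ (V₁'.card : ℝ) → ε * (V₂.card : ℝ) ≤ (V₂'.card : ℝ) →
    ε * (D.card : ℝ) ≤ (D'.card : ℝ) →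
    d * (D'.card : ℝ) * (V₁'.card : ℝ) * (V₂'.card : ℝ) ≤
      ∑ c ∈ D', (pairCount (G c) V₁' V₂' : ℝ)) ∧
  (∀ v ∈ V₁, d * (V₂.card : ℝ) * (D.card : ℝ) ≤ ∑ c ∈ D, (degIn (G c) v V₂ : ℝ)) ∧
  (∀ v ∈ V₂, d * (V₁.card : ℝ) * (D.card : ℝ) ≤ ∑ c ∈ D, (degIn (G c) v V₁ : ℝ)) ∧
  (∀ c ∈ D, d * (V₁.card : ℝ) * (V₂.card : ℝ) ≤ (pairCount (G c) V₁ V₂ : ℝ))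

/-- `(ε,d)`-half-superregularity of a bipartite graph (given by an adjacency relation)
with parts `V₁, V₂`. -/
def BipHalfSuper {V : Type*} (ε d : ℝ) (A : V → V → Prop) (V₁ V₂ : Finset V) : Prop :=
  (∀ U₁ ⊆ V₁, ∀ U₂ ⊆ V₂,
    ε * (V₁.card : ℝ) ≤ (U₁.card : ℝ) → ε * (V₂.card : ℝ) ≤ (U₂.card : ℝ) →
    d * (U₁.card : ℝ) * (U₂.card : ℝ) ≤
      (((U₁ ×ˢ U₂).filter (fun p => A p.1 p.2)).card : ℝ)) ∧
  (∀ x ∈ V₁, d * (V₂.card : ℝ) ≤ ((V₂.filter (fun y => A x y)).card : ℝ)) ∧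
  (∀ y ∈ V₂, d * (V₁.card : ℝ) ≤ ((V₁.filter (fun x => A x y)).card : ℝ))

/-- Number of ordered triples `(x₁,x₂,x₃) ∈ U₁ × U₂ × U₃` with `{x₁,x₂,x₃}` an edge. -/
noncomputable def tripCount {V : Type*} (E : Set (Finset V)) (U₁ U₂ U₃ : Finset V) : ℕ :=
  ((U₁ ×ˢ U₂ ×ˢ U₃).filter
    (fun p => ({p.1, p.2.1, p.2.2} : Finset V) ∈ E)).card

/-- Density of the triple `(U₁,U₂,U₃)` in a `3`-graph. -/
noncomputable def tripDensity {V : Type*} (E : Set (Finset V)) (U₁ U₂ U₃ : Finset V) : ℝ :=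
  (tripCount E U₁ U₂ U₃ : ℝ) / ((U₁.card : ℝ) * (U₂.card : ℝ) * (U₃.card : ℝ))

/-- Degree of a vertex in a hypergraph: the number of edges containing it. -/
noncomputable def hDeg {V : Type*} [Fintype V] (E : Set (Finset V)) (v : V) : ℕ :=
  ((univ : Finset (Finset V)).filter (fun e => e ∈ E ∧ v ∈ e)).card

/-- Weak `(ε,d)`-regularity of a 3-partite triple in a 3-graph. -/
def TripReg {V : Type*} (ε d : ℝ) (E : Set (Finset V)) (V₁ V₂ V₃ : Finset V) : Prop :=
  d ≤ tripDensity E V₁ V₂ V₃ ∧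
  ∀ U₁ ⊆ V₁, ∀ U₂ ⊆ V₂, ∀ U₃ ⊆ V₃,
    ε * (V₁.card : ℝ) ≤ (U₁.card : ℝ) → ε * (V₂.card : ℝ) ≤ (U₂.card : ℝ) →
    ε * (V₃.card : ℝ) ≤ (U₃.card : ℝ) →
    |tripDensity E U₁ U₂ U₃ - tripDensity E V₁ V₂ V₃| < ε

/-- Weak `(ε,d)`-half-superregularity of a 3-partite triple in a 3-graph. -/
def TripHalfSuper {V : Type*} (ε d : ℝ) (E : Set (Finset V)) (V₁ V₂ V₃ : Finset V) : Prop :=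
  (∀ U₁ ⊆ V₁, ∀ U₂ ⊆ V₂, ∀ U₃ ⊆ V₃,
    ε * (V₁.card : ℝ) ≤ (U₁.card : ℝ) → ε * (V₂.card : ℝ) ≤ (U₂.card : ℝ) →
    ε * (V₃.card : ℝ) ≤ (U₃.card : ℝ) →
    d * (U₁.card : ℝ) * (U₂.card : ℝ) * (U₃.card : ℝ) ≤ (tripCount E U₁ U₂ U₃ : ℝ)) ∧
  (∀ x ∈ V₁, d * (V₂.card : ℝ) * (V₃.card : ℝ) ≤ (tripCount E {x} V₂ V₃ : ℝ)) ∧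
  (∀ y ∈ V₂, d * (V₁.card : ℝ) * (V₃.card : ℝ) ≤ (tripCount E V₁ {y} V₃ : ℝ)) ∧
  (∀ z ∈ V₃, d * (V₁.card : ℝ) * (V₂.card : ℝ) ≤ (tripCount E V₁ V₂ {z} : ℝ))

/-- A copy of the 1-expansion of `H` in a 3-graph with edge set `E`. -/
def HasExpansionCopy {V W : Type*} (E : Set (Finset V)) (H : SimpleGraph W) : Prop :=
  ∃ (ρv : W → V) (ρe : Sym2 W → V),
    Function.Injective ρv ∧ Set.InjOn ρe H.edgeSet ∧
    (∀ x, ∀ e ∈ H.edgeSet, ρv x ≠ ρe e) ∧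
    ∀ x y, H.Adj x y → ({ρv x, ρv y, ρe s(x, y)} : Finset V) ∈ E

/-- Number of edges (as functions picking one vertex per part) inside the sets `U i`. -/
noncomputable def kCount {V : Type*} {k : ℕ} (E : Set (Fin k → V)) (U : Fin k → Finset V) : ℕ :=
  ((Fintype.piFinset U).filter (fun e => e ∈ E)).card

/-- Density of a `k`-tuple in a `k`-partite `k`-graph. -/
noncomputable def kDensity {V : Type*} {k : ℕ} (E : Set (Fin k → V)) (U : Fin k → Finset V) : ℝ :=
  (kCount E U : ℝ) / ∏ i, ((U i).card : ℝ)

/-- Degree of `x` as a vertex of the `i`-th part of a `k`-partite `k`-graph. -/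
noncomputable def kDegAt {V : Type*} [Fintype V] {k : ℕ} (E : Set (Fin k → V))
    (i : Fin k) (x : V) : ℕ :=
  ((univ : Finset (Fin k → V)).filter (fun e => e ∈ E ∧ e i = x)).card

/-- Weak ε-regularity of a `k`-tuple in a `k`-partite `k`-graph. -/
def KTupleReg {V : Type*} {k : ℕ} (ε : ℝ) (E : Set (Fin k → V)) (Wp : Fin k → Finset V) : Prop :=
  ∀ U : Fin k → Finset V, (∀ i, U i ⊆ Wp i) →
    (∀ i, ε * ((Wp i).card : ℝ) ≤ ((U i).card : ℝ)) →
    |kDensity E U - kDensity E Wp| < ε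

/-- Weak `(ε,d)`-regularity of a `k`-partite `k`-graph with parts `P`. -/
def KReg {V : Type*} {k : ℕ} (ε d : ℝ) (E : Set (Fin k → V)) (P : Fin k → Finset V) : Prop :=
  d ≤ kDensity E P ∧
  ∀ U : Fin k → Finset V, (∀ i, U i ⊆ P i) →
    (∀ i, ε * ((P i).card : ℝ) ≤ ((U i).card : ℝ)) →
    |kDensity E U - kDensity E P| < ε

/-- Weak `(ε,d)`-superregularity of a `k`-partite `k`-graph with parts `P`. -/
def KSuper {V : Type*} [Fintype V] {k : ℕ} (ε d : ℝ) (E : Set (Fin k → V))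
    (P : Fin k → Finset V) : Prop :=
  KReg ε d E P ∧
  ∀ i, ∀ x ∈ P i, d * (∏ j, ((P j).card : ℝ)) / ((P i).card : ℝ) ≤ (kDegAt E i x : ℝ)

/-- Weak `(ε,d)`-half-superregularity of a `k`-partite `k`-graph with parts `P`. -/
def KHalfSuper {V : Type*} [Fintype V] {k : ℕ} (ε d : ℝ) (E : Set (Fin k → V))
    (P : Fin k → Finset V) : Prop :=
  (∀ U : Fin k → Finset V, (∀ i, U i ⊆ P i) →
    (∀ i, ε * ((P i).card : ℝ) ≤ ((U i).card : ℝ)) →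
    d ≤ kDensity E U) ∧
  ∀ i, ∀ x ∈ P i, d * (∏ j, ((P j).card : ℝ)) / ((P i).card : ℝ) ≤ (kDegAt E i x : ℝ)

/-- An `R`-template: vertex clusters `Vc`, colour clusters `Cc i j` (one for each
edge `ij` of `R`), and for each colour `c ∈ Cc i j` a bipartite graph `Ge c i j`
with parts `Vc i`, `Vc j`.  The graph `G_c` of the collection is the union of the
`Ge c i j` over the edges `ij` of `R` whose colour cluster contains `c`. -/
structure GTemplate (V C : Type*) (r : ℕ) where
  R : SimpleGraph (Fin r)
  Vc : Fin r → Finset V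
  Cc : Fin r → Fin r → Finset C
  Ge : C → Fin r → Fin r → SimpleGraph V
  Cc_symm : ∀ i j, Cc i j = Cc j i
  Ge_symm : ∀ c i j, Ge c i j = Ge c j i
  Vc_disj : ∀ i j, i ≠ j → Disjoint (Vc i) (Vc j)
  Cc_support : ∀ i j, ¬ R.Adj i j → Cc i j = ∅
  Ge_support : ∀ c i j, c ∉ Cc i j → Ge c i j = ⊥
  Ge_bipartite : ∀ c i j x y, (Ge c i j).Adj x y →
    (x ∈ Vc i ∧ y ∈ Vc j) ∨ (x ∈ Vc j ∧ y ∈ Vc i)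

namespace GTemplate

variable {V C : Type*} {r : ℕ}

/-- The graph `G_c` of the template: the union of the bipartite pieces. -/
noncomputable def Gc (T : GTemplate V C r) (c : C) : SimpleGraph V :=
  ⨆ i, ⨆ j, T.Ge c i j

/-- `T` is an `R`-template with parameters `(m, ε, d, δ)`. -/
def IsParam (T : GTemplate V C r) (m ε d δ : ℝ) : Prop :=
  (∀ j, m ≤ ((T.Vc j).card : ℝ) ∧ ((T.Vc j).card : ℝ) ≤ m / δ) ∧
  (∀ i j, T.R.Adj i j → δ * m ≤ ((T.Cc i j).card : ℝ)) ∧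
  (∀ i j, T.R.Adj i j →
    ColReg ε d (fun c => T.Ge c i j) (T.Vc i) (T.Vc j) (T.Cc i j))

/-- `T` is a super `R`-template with parameters `(m, ε, d, δ)`. -/
def IsSuperParam (T : GTemplate V C r) (m ε d δ : ℝ) : Prop :=
  (∀ j, m ≤ ((T.Vc j).card : ℝ) ∧ ((T.Vc j).card : ℝ) ≤ m / δ) ∧
  (∀ i j, T.R.Adj i j → δ * m ≤ ((T.Cc i j).card : ℝ)) ∧
  (∀ i j, T.R.Adj i j →
    ColSuperReg ε d (fun c => T.Ge c i j) (T.Vc i) (T.Vc j) (T.Cc i j))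

/-- `T` is a half-super `R`-template with parameters `(m, ε, d, δ)`. -/
def IsHalfSuperParam (T : GTemplate V C r) (m ε d δ : ℝ) : Prop :=
  (∀ j, m ≤ ((T.Vc j).card : ℝ) ∧ ((T.Vc j).card : ℝ) ≤ m / δ) ∧
  (∀ i j, T.R.Adj i j → δ * m ≤ ((T.Cc i j).card : ℝ)) ∧
  (∀ i j, T.R.Adj i j →
    ColHalfSuperReg ε d (fun c => T.Ge c i j) (T.Vc i) (T.Vc j) (T.Cc i j))

/-- `T` is a semi-super `R`-template with parameters `(m, ε, d, δ)`. -/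
def IsSemiSuperParam (T : GTemplate V C r) (m ε d δ : ℝ) : Prop :=
  T.IsParam m ε d δ ∧
  ∀ i j, T.R.Adj i j →
    (∀ v ∈ T.Vc i, d * ((T.Vc j).card : ℝ) * ((T.Cc i j).card : ℝ) ≤
      ∑ c ∈ T.Cc i j, (degIn (T.Ge c i j) v (T.Vc j) : ℝ)) ∧
    (∀ v ∈ T.Vc j, d * ((T.Vc i).card : ℝ) * ((T.Cc i j).card : ℝ) ≤
      ∑ c ∈ T.Cc i j, (degIn (T.Ge c i j) v (T.Vc i) : ℝ))

/-- The template is rainbow: the colour clusters are pairwise disjoint. -/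
def Rainbow (T : GTemplate V C r) : Prop :=
  ∀ i j k l, T.R.Adj i j → T.R.Adj k l → s(i, j) ≠ s(k, l) →
    Disjoint (T.Cc i j) (T.Cc k l)

/-- Adjacency in the `l`-thick graph of the template, between clusters `i` and `j`. -/
def ThickAdj (T : GTemplate V C r) (l : ℝ) (i j : Fin r) (x y : V) : Prop :=
  l * ((T.Cc i j).card : ℝ) ≤
    (((T.Cc i j).filter (fun c => (T.Ge c i j).Adj x y)).card : ℝ)

end GTemplate

section Helpers

lemma xp_sdr {ι β : Type*} [Nonempty β] (I : Finset ι) (F : ι → Finset β)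
    (h : ∀ i ∈ I, I.card ≤ (F i).card) :
    ∃ g : ι → β, (∀ i ∈ I, g i ∈ F i) ∧ Set.InjOn g I := by
  suffices H : ∀ J : Finset ι, J ⊆ I → ∃ g : ι → β, (∀ i ∈ J, g i ∈ F i) ∧ Set.InjOn g J from
    H I (Subset.refl _)
  intro J
  induction J using Finset.induction_on with
  | empty => intro _; exact ⟨fun _ => Classical.arbitrary β, by simp, by simp⟩
  | insert a J ha ih =>
    intro hJ
    obtain ⟨g, hg, hinj⟩ := ih (fun x hx => hJ (mem_insert_of_mem hx))
    have hc : (J.image g).card < (F a).card := by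
      calc (J.image g).card ≤ J.card := card_image_le
        _ < (insert a J).card := by rw [card_insert_of_notMem ha]; omega
        _ ≤ I.card := card_le_card hJ
        _ ≤ _ := h a (hJ (mem_insert_self _ _))
    obtain ⟨b, hb, hb'⟩ := exists_mem_notMem_of_card_lt_card hc
    refine ⟨Function.update g a b, ?_, ?_⟩
    · intro i hi
      by_cases hia : i = a
      · subst hia; simpa using hb
      · rw [Function.update_of_ne hia]; exact hg i (by simpa [hia] using hi)
    · intro i hi j hj hij
      simp only [coe_insert, Set.mem_insert_iff, mem_coe] at hi hj
      by_cases hia : i = a <;> by_cases hja : j = a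
      · rw [hia, hja]
      · subst hia
        rw [Function.update_self, Function.update_of_ne hja] at hij
        exact absurd (mem_image.2 ⟨j, by tauto, hij.symm⟩) hb'
      · subst hja
        rw [Function.update_self, Function.update_of_ne hia] at hij
        exact absurd (mem_image.2 ⟨i, by tauto, hij⟩) hb'
      · rw [Function.update_of_ne hia, Function.update_of_ne hja] at hij
        exact hinj (by simpa [hia] using hi) (by simpa [hja] using hj) hij

/-- `P`-thick pairs. -/
def XThick {V : Type} (R : V → V → V → Prop) (c : ℝ) (P : Finset V) (x y : V) : Prop :=
  c * (P.card : ℝ) ≤ ((P.filter (fun z => R x y z)).card : ℝ)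

def XTyp {V : Type} [Fintype V] (R : V → V → V → Prop) (c ε : ℝ) : Prop :=
  ∀ B P : Finset V, ε * (Fintype.card V : ℝ) ≤ B.card → ε * (Fintype.card V : ℝ) ≤ P.card →
    (((univ : Finset V).filter (fun x =>
      (((B.filter (fun y => XThick R c P x y)).card : ℝ) < c * B.card))).card : ℝ)
      ≤ ε * (Fintype.card V : ℝ)

lemma xp_typ {V : Type} [Fintype V] (R : V → V → V → Prop) (d ε η : ℝ) (hd : 0 < d) (hε : 0 < ε)
    (hη : η < d / 2 * ε ^ 3) (hV : 0 < Fintype.card V)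
    (hden : ∀ U₁ U₂ U₃ : Finset V,
        d * (U₁.card : ℝ) * (U₂.card : ℝ) * (U₃.card : ℝ) - η * (Fintype.card V : ℝ) ^ 3 ≤
          (((U₁ ×ˢ U₂ ×ˢ U₃).filter (fun p => R p.1 p.2.1 p.2.2)).card : ℝ)) :
    XTyp R (d / 4) ε := by
  intro B P hB hP
  by_contra hcon
  push Not at hcon
  set A := (univ : Finset V).filter (fun x =>
      (((B.filter (fun y => XThick R (d/4) P x y)).card : ℝ) < d/4 * B.card)) with hA
  have hn : (0 : ℝ) < Fintype.card V := by exact_mod_cast hV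
  set n : ℝ := (Fintype.card V : ℝ)
  have h1 := hden A B P
  have hcount : (((A ×ˢ B ×ˢ P).filter (fun p => R p.1 p.2.1 p.2.2)).card : ℝ)
      = ∑ x ∈ A, ∑ y ∈ B, ((P.filter (fun z => R x y z)).card : ℝ) := by
    rw [card_filter, sum_product]
    push_cast
    refine sum_congr rfl fun x _ => ?_
    rw [sum_product]
    refine sum_congr rfl fun y _ => ?_
    rw [card_filter]; push_cast; rfl
  have hup : ∀ x ∈ A, ∑ y ∈ B, ((P.filter (fun z => R x y z)).card : ℝ)
      ≤ d / 2 * B.card * P.card := by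
    intro x hx
    have hx' := (mem_filter.1 hx).2
    have : ∀ y ∈ B, ((P.filter (fun z => R x y z)).card : ℝ) ≤
        (if XThick R (d/4) P x y then (P.card : ℝ) else 0) + d / 4 * P.card := by
      intro y _
      split_ifs with h
      · have : ((P.filter (fun z => R x y z)).card : ℝ) ≤ P.card := by
          exact_mod_cast card_filter_le _ _
        have : 0 ≤ d / 4 * (P.card : ℝ) := by positivity
        linarith
      · unfold XThick at h; push Not at h; linarith
    refine (sum_le_sum this).trans ?_
    rw [sum_add_distrib, ← sum_filter, sum_const, sum_const, nsmul_eq_mul, nsmul_eq_mul]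
    have hP0 : (0 : ℝ) ≤ P.card := by positivity
    nlinarith
  have h2 : ∑ x ∈ A, ∑ y ∈ B, ((P.filter (fun z => R x y z)).card : ℝ)
      ≤ A.card * (d / 2 * B.card * P.card) := by
    refine (sum_le_sum hup).trans ?_
    rw [sum_const, nsmul_eq_mul]
  rw [hcount] at h1
  have h3 : d / 2 * (A.card * B.card * P.card : ℝ) ≤ η * n ^ 3 := by nlinarith
  have h4 : (ε * n) * (ε * n) * (ε * n) ≤ (A.card * B.card * P.card : ℝ) := by
    gcongr
  have h5 : η * n ^ 3 < d / 2 * ε ^ 3 * n ^ 3 := by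
    apply mul_lt_mul_of_pos_right hη; positivity
  have h6 : d / 2 * ((ε * n) * (ε * n) * (ε * n)) ≤ d / 2 * (A.card * B.card * P.card : ℝ) := by
    gcongr
  nlinarith

lemma xp_VE {V W : Type} [Fintype V] [Fintype W] [Nonempty V] (R : V → V → V → Prop)
    (hsym : ∀ x y z, R x y z → R y x z) (c ε : ℝ) (hc : 0 < c) (hc1 : c ≤ 1) (hε : 0 < ε)
    (htyp : XTyp R c ε) (H : SimpleGraph W) (Δ : ℕ) (hdeg : ∀ w, degOf H w ≤ Δ)
    (T : Sym2 W → Finset V) (hT : ∀ e, ε * (Fintype.card V : ℝ) ≤ (T e).card) (K : Finset W) :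
    ∀ (F : Finset V) (C : W → Finset V),
      (∀ w, ε * (Fintype.card V : ℝ) ≤ c ^ (K.filter (fun x => H.Adj x w)).card * (C w).card) →
      (∀ w ∈ K, Δ * ε * (Fintype.card V : ℝ) + K.card + F.card <
          c ^ (K.filter (fun x => H.Adj x w)).card * (C w).card) →
      ∃ φ : W → V, Set.InjOn φ K ∧ (∀ w ∈ K, φ w ∈ C w ∧ φ w ∉ F) ∧
        (∀ x ∈ K, ∀ y ∈ K, H.Adj x y → XThick R c (T s(x, y)) (φ x) (φ y)) ∧
        ∀ w, w ∉ K → c ^ (K.filter (fun x => H.Adj x w)).card * (C w).card ≤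
          (((C w).filter (fun v => ∀ x ∈ K, H.Adj x w →
            XThick R c (T s(x, w)) (φ x) v)).card : ℝ) := by
  have hthsym : ∀ P x y, XThick R c P x y → XThick R c P y x := by
    intro P x y h
    unfold XThick at *
    refine h.trans ?_
    exact_mod_cast card_le_card (fun z hz => by
      simp only [mem_filter] at *; exact ⟨hz.1, hsym _ _ _ hz.2⟩)
  induction K using Finset.induction_on with
  | empty =>
    intro F C _ _
    exact ⟨fun _ => Classical.arbitrary V, by simp, by simp, by simp, by simp⟩
  | insert a K ha ih =>
    intro F C hC1 hC2
    set n : ℝ := (Fintype.card V : ℝ)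
    have hpow1 : ∀ k : ℕ, c ^ k ≤ 1 := fun k => pow_le_one₀ hc.le hc1
    have hCle : ∀ w (k : ℕ), c ^ k * ((C w).card : ℝ) ≤ (C w).card := by
      intro w k
      have := hpow1 k
      have h0 : (0 : ℝ) ≤ (C w).card := by positivity
      nlinarith
    let Bad : W → Finset V := fun y => univ.filter (fun v =>
      ((((C y).filter (fun u => XThick R c (T s(a, y)) v u)).card : ℝ) < c * (C y).card))
    have hBad : ∀ y, ((Bad y).card : ℝ) ≤ ε * n := fun y =>
      htyp (C y) (T s(a, y)) ((hC1 y).trans (hCle _ _)) (hT _)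
    let Nb := (univ : Finset W).filter (fun w => H.Adj a w)
    have hNb : Nb.card ≤ Δ := hdeg a
    have hU : (((Nb.biUnion Bad ∪ F).card : ℕ) : ℝ) < (C a).card := by
      have h1 : ((Nb.biUnion Bad).card : ℝ) ≤ Δ * (ε * n) := by
        have : ((Nb.biUnion Bad).card : ℝ) ≤ ∑ y ∈ Nb, ((Bad y).card : ℝ) := by
          exact_mod_cast card_biUnion_le
        refine this.trans ((sum_le_sum fun y _ => hBad y).trans ?_)
        rw [sum_const, nsmul_eq_mul]
        have : (Nb.card : ℝ) ≤ Δ := by exact_mod_cast hNb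
        gcongr
      have h2 : (((Nb.biUnion Bad ∪ F).card : ℕ) : ℝ) ≤ (Nb.biUnion Bad).card + F.card := by
        exact_mod_cast card_union_le _ _
      have h3 := (hC2 a (mem_insert_self _ _)).trans_le (hCle _ _)
      have h4 : (0 : ℝ) ≤ (insert a K).card := by positivity
      linarith
    obtain ⟨v, hv, hv'⟩ := exists_mem_notMem_of_card_lt_card (by exact_mod_cast hU)
    simp only [mem_union, mem_biUnion, not_or, not_exists, not_and] at hv'
    obtain ⟨hvB, hvF⟩ := hv'
    have hgood : ∀ y, H.Adj a y →
        c * (C y).card ≤ (((C y).filter (fun u => XThick R c (T s(a, y)) v u)).card : ℝ) := by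
      intro y hy
      have := hvB y (by simp [Nb, hy])
      simpa [Bad] using this
    let C' : W → Finset V := fun y =>
      if H.Adj a y then (C y).filter (fun u => XThick R c (T s(a, y)) v u) else C y
    have hC'sub : ∀ y, C' y ⊆ C y := by
      intro y
      simp only [C']
      split_ifs
      · exact filter_subset _ _
      · exact Subset.refl _
    have hC' : ∀ y, c ^ ((insert a K).filter (fun x => H.Adj x y)).card * ((C y).card : ℝ) ≤
        c ^ (K.filter (fun x => H.Adj x y)).card * (C' y).card := by
      intro y
      simp only [C']
      split_ifs with h
      · rw [filter_insert, if_pos h, card_insert_of_notMem (by simp [ha]), pow_succ, mul_assoc]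
        gcongr
        exact hgood y h
      · rw [filter_insert, if_neg h]
    obtain ⟨φ, hinj, hmem, hth, hout⟩ := ih (insert v F) C' (fun w => (hC1 w).trans (hC' w))
      (fun w hw => by
        have h1 := (hC2 w (mem_insert_of_mem hw)).trans_le (hC' w)
        rw [card_insert_of_notMem ha] at h1
        rw [card_insert_of_notMem hvF]
        push_cast at *
        linarith)
    have hne : ∀ x ∈ K, x ≠ a := fun x hx h => ha (h ▸ hx)
    have hvK : ∀ x ∈ K, φ x ≠ v := fun x hx h => (hmem x hx).2 (by simp [h])
    have hup : ∀ x ∈ K, Function.update φ a v x = φ x := fun x hx =>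
      Function.update_of_ne (hne x hx) _ _
    have hthv : ∀ y ∈ K, H.Adj a y → XThick R c (T s(a, y)) v (φ y) := by
      intro y hy hay
      have := (hmem y hy).1
      simp only [C', if_pos hay, mem_filter] at this
      exact this.2
    refine ⟨Function.update φ a v, ?_, ?_, ?_, ?_⟩
    · intro x hx y hy hxy
      simp only [coe_insert, Set.mem_insert_iff, mem_coe] at hx hy
      rcases hx with rfl | hx <;> rcases hy with rfl | hy
      · rfl
      · rw [Function.update_self, hup y hy] at hxy
        exact absurd hxy.symm (hvK y hy)
      · rw [Function.update_self, hup x hx] at hxy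
        exact absurd hxy (hvK x hx)
      · rw [hup x hx, hup y hy] at hxy; exact hinj hx hy hxy
    · intro w hw
      rcases mem_insert.1 hw with rfl | hw
      · rw [Function.update_self]; exact ⟨hv, hvF⟩
      · rw [hup w hw]
        exact ⟨hC'sub _ (hmem w hw).1, fun h => (hmem w hw).2 (mem_insert_of_mem h)⟩
    · intro x hx y hy hxy
      rcases mem_insert.1 hx with rfl | hx1 <;> rcases mem_insert.1 hy with rfl | hy1
      · exact absurd hxy (H.loopless.irrefl _)
      · rw [Function.update_self, hup y hy1]; exact hthv y hy1 hxy
      · rw [Function.update_self, hup x hx1, Sym2.eq_swap]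
        exact hthsym _ _ _ (hthv x hx1 hxy.symm)
      · rw [hup x hx1, hup y hy1]; exact hth x hx1 y hy1 hxy
    · intro w hw
      have hw' : w ∉ K := fun h => hw (mem_insert_of_mem h)
      refine (hC' w).trans ((hout w hw').trans ?_)
      norm_cast
      apply card_le_card
      intro u hu
      simp only [mem_filter] at hu ⊢
      refine ⟨hC'sub _ hu.1, ?_⟩
      intro x hx hxw
      rcases mem_insert.1 hx with rfl | hx
      · rw [Function.update_self]
        have := hu.1
        simp only [C', if_pos hxw, mem_filter] at this
        exact this.2
      · rw [hup x hx]; exact hu.2 x hx hxw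

noncomputable def xEdges {W : Type} [Fintype W] (H : SimpleGraph W) (D : Finset W) :
    Finset (Sym2 W) :=
  (univ : Finset (Sym2 W)).filter (fun e => e ∈ H.edgeSet ∧ ∀ x ∈ e, x ∈ D)

lemma xEdges_mk {W : Type} [Fintype W] (H : SimpleGraph W) (D : Finset W) (x y : W) :
    s(x, y) ∈ xEdges H D ↔ H.Adj x y ∧ x ∈ D ∧ y ∈ D := by
  simp [xEdges]

lemma xEdges_mono {W : Type} [Fintype W] (H : SimpleGraph W) {D D' : Finset W} (h : D ⊆ D') :
    xEdges H D ⊆ xEdges H D' := by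
  intro e he
  simp only [xEdges, mem_filter, mem_univ, true_and] at he ⊢
  exact ⟨he.1, fun x hx => h (he.2 x hx)⟩

structure XPE {V W : Type} [Fintype W] (R : V → V → V → Prop) (H : SimpleGraph W)
    (D : Finset W) (φ : W → V) (ψ : Sym2 W → V) : Prop where
  injv : Set.InjOn φ D
  inje : Set.InjOn ψ (xEdges H D)
  disj : ∀ x ∈ D, ∀ e ∈ xEdges H D, φ x ≠ ψ e
  edge : ∀ x ∈ D, ∀ y ∈ D, H.Adj x y → R (φ x) (φ y) (ψ s(x, y))

lemma xp_new_card {W : Type} [Fintype W] (H : SimpleGraph W) (Δ : ℕ)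
    (hdeg : ∀ w, degOf H w ≤ Δ) (D K : Finset W) :
    (xEdges H (D ∪ K) \ xEdges H D).card ≤ Δ * K.card := by
  have : xEdges H (D ∪ K) \ xEdges H D ⊆
      K.biUnion (fun w => ((univ : Finset W).filter (fun x => H.Adj w x)).image
        (fun x => s(w, x))) := by
    intro e he
    induction e using Sym2.ind with
    | _ x y =>
      simp only [mem_sdiff, xEdges_mk, mem_union] at he
      obtain ⟨⟨hadj, hx, hy⟩, h2⟩ := he
      simp only [mem_biUnion, mem_image, mem_filter, mem_univ, true_and]
      by_cases hxK : x ∈ K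
      · exact ⟨x, hxK, y, hadj, rfl⟩
      · have hyK : y ∈ K := by tauto
        exact ⟨y, hyK, x, hadj.symm, Sym2.eq_swap⟩
  refine (card_le_card this).trans (card_biUnion_le.trans ?_)
  have h2 : ∀ w ∈ K, (((univ : Finset W).filter (fun x => H.Adj w x)).image
        (fun x => s(w, x))).card ≤ Δ := fun w _ => card_image_le.trans (hdeg w)
  calc _ ≤ ∑ w ∈ K, Δ := sum_le_sum h2
    _ = _ := by rw [sum_const, smul_eq_mul, mul_comm]

lemma xp_ext {V W : Type} [Nonempty V] [Fintype W] (R : V → V → V → Prop) (H : SimpleGraph W)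
    (D K : Finset W) (φ : W → V) (ψ : Sym2 W → V) (h : XPE R H D φ ψ)
    (hinj : Set.InjOn φ (D ∪ K : Finset W))
    (hd : ∀ x ∈ K, ∀ e ∈ xEdges H D, φ x ≠ ψ e)
    (Ch : Sym2 W → Finset V)
    (hcard : ∀ e ∈ xEdges H (D ∪ K) \ xEdges H D,
      (xEdges H (D ∪ K) \ xEdges H D).card ≤ (Ch e).card)
    (hR : ∀ x y, s(x, y) ∈ xEdges H (D ∪ K) \ xEdges H D → ∀ z ∈ Ch s(x, y), R (φ x) (φ y) z)
    (h1 : ∀ e ∈ xEdges H (D ∪ K) \ xEdges H D, ∀ z ∈ Ch e, ∀ x ∈ D ∪ K, φ x ≠ z)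
    (h2 : ∀ e ∈ xEdges H (D ∪ K) \ xEdges H D, ∀ z ∈ Ch e, ∀ e' ∈ xEdges H D, ψ e' ≠ z) :
    ∃ ψ' : Sym2 W → V, XPE R H (D ∪ K) φ ψ' ∧ (∀ e ∈ xEdges H D, ψ' e = ψ e) ∧
      ∀ e ∈ xEdges H (D ∪ K) \ xEdges H D, ψ' e ∈ Ch e := by
  obtain ⟨g, hg, hginj⟩ := xp_sdr _ Ch hcard
  have hold : ∀ e ∈ xEdges H D, (if e ∈ xEdges H D then ψ e else g e) = ψ e := fun e he => if_pos he
  have hnew : ∀ e, e ∉ xEdges H D → (if e ∈ xEdges H D then ψ e else g e) = g e :=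
    fun e he => if_neg he
  refine ⟨fun e => if e ∈ xEdges H D then ψ e else g e, ⟨hinj, ?_, ?_, ?_⟩, hold, ?_⟩
  · intro e he e' he' hee
    simp only at hee
    by_cases h3 : e ∈ xEdges H D <;> by_cases h4 : e' ∈ xEdges H D
    · rw [if_pos h3, if_pos h4] at hee; exact h.inje h3 h4 hee
    · rw [if_pos h3, if_neg h4] at hee
      have : e' ∈ xEdges H (D ∪ K) \ xEdges H D := mem_sdiff.2 ⟨he', h4⟩
      exact absurd hee (h2 e' this _ (hg _ this) e h3)
    · rw [if_neg h3, if_pos h4] at hee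
      have : e ∈ xEdges H (D ∪ K) \ xEdges H D := mem_sdiff.2 ⟨he, h3⟩
      exact absurd hee.symm (h2 e this _ (hg _ this) e' h4)
    · rw [if_neg h3, if_neg h4] at hee
      exact hginj (mem_coe.2 (mem_sdiff.2 ⟨he, h3⟩)) (mem_coe.2 (mem_sdiff.2 ⟨he', h4⟩)) hee
  · intro x hx e he
    by_cases h3 : e ∈ xEdges H D
    · simp only [if_pos h3]
      rcases mem_union.1 hx with hx | hx
      · exact h.disj x hx e h3
      · exact hd x hx e h3
    · simp only [if_neg h3]
      have : e ∈ xEdges H (D ∪ K) \ xEdges H D := mem_sdiff.2 ⟨he, h3⟩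
      exact h1 e this _ (hg _ this) x hx
  · intro x hx y hy hxy
    by_cases h3 : s(x, y) ∈ xEdges H D
    · simp only [if_pos h3]
      have := (xEdges_mk H D x y).1 h3
      exact h.edge x this.2.1 y this.2.2 hxy
    · simp only [if_neg h3]
      have : s(x, y) ∈ xEdges H (D ∪ K) \ xEdges H D :=
        mem_sdiff.2 ⟨(xEdges_mk H _ x y).2 ⟨hxy, hx, hy⟩, h3⟩
      exact hR x y this _ (hg _ this)
  · intro e he
    simp only [if_neg (mem_sdiff.1 he).2]
    exact hg e he

noncomputable def xCh {V W : Type} (R : V → V → V → Prop) (φ : W → V) (P : Finset V)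
    (e : Sym2 W) : Finset V :=
  P.filter (fun z => ∀ x y, e = s(x, y) → R (φ x) (φ y) z)

lemma xCh_card {V W : Type} (R : V → V → V → Prop) (hsym : ∀ x y z, R x y z → R y x z) (c : ℝ)
    (φ : W → V) (P : Finset V) (x y : W) (h : XThick R c P (φ x) (φ y)) :
    c * (P.card : ℝ) ≤ ((xCh R φ P s(x, y)).card : ℝ) := by
  refine le_trans h ?_
  norm_cast
  apply card_le_card
  intro z hz
  simp only [xCh, mem_filter] at hz ⊢
  refine ⟨hz.1, fun x' y' he => ?_⟩
  rcases Sym2.eq_iff.1 he with ⟨rfl, rfl⟩ | ⟨rfl, rfl⟩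
  · exact hz.2
  · exact hsym _ _ _ hz.2

lemma xp_stage1 {V W : Type} [Fintype V] [Fintype W] [Nonempty V] (R : V → V → V → Prop)
    (hsym : ∀ x y z, R x y z → R y x z) (c ε : ℝ) (hc : 0 < c) (hc1 : c ≤ 1) (hε : 0 < ε)
    (htyp : XTyp R c ε) (H : SimpleGraph W) (Δ : ℕ) (hΔ : 1 ≤ Δ) (hdeg : ∀ w, degOf H w ≤ Δ)
    (D0 K1 : Finset W) (hDK : Disjoint D0 K1) (φ0 : W → V) (hinj0 : Set.InjOn φ0 D0)
    (hno : ∀ x ∈ D0, ∀ y ∈ D0, ¬ H.Adj x y) (Forb : Finset V) (hF : ∀ x ∈ D0, φ0 x ∈ Forb)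
    (S : Finset V) (hS : ε * (Fintype.card V : ℝ) ≤ c ^ Δ * S.card)
    (hcand : ∀ w ∈ K1, Δ * ε * (Fintype.card V : ℝ) + K1.card + Forb.card < c ^ Δ *
      ((univ : Finset V).filter (fun v => ∀ x ∈ D0, H.Adj x w →
        XThick R c univ (φ0 x) v)).card)
    (hout : ∀ w, w ∉ D0 ∪ K1 → ∀ x ∈ D0, ¬ H.Adj x w)
    (hcol : (Forb.card : ℝ) + K1.card + Δ * K1.card ≤ c * (Fintype.card V : ℝ)) :
    ∃ (φ : W → V) (ψ : Sym2 W → V), XPE R H (D0 ∪ K1) φ ψ ∧ (∀ x ∈ D0, φ x = φ0 x) ∧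
      (∀ x ∈ K1, φ x ∉ Forb) ∧ (∀ e ∈ xEdges H (D0 ∪ K1), ψ e ∉ Forb) ∧
      ∀ w, w ∉ D0 ∪ K1 → c ^ Δ * (S.card : ℝ) ≤
        ((S.filter (fun v => ∀ x ∈ D0 ∪ K1, H.Adj x w → XThick R c S (φ x) v)).card : ℝ) := by
  set n : ℝ := (Fintype.card V : ℝ) with hn
  have hn0 : 0 ≤ n := by positivity
  have hSn : (S.card : ℝ) ≤ n := by rw [hn]; exact_mod_cast card_le_univ S
  have hpow1 : ∀ k : ℕ, c ^ k ≤ 1 := fun k => pow_le_one₀ hc.le hc1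
  have hεS : ε * n ≤ S.card := hS.trans (by
    have := hpow1 Δ
    have h0 : (0 : ℝ) ≤ S.card := by positivity
    nlinarith)
  have hb : ∀ w, (K1.filter (fun x => H.Adj x w)).card ≤ Δ := by
    intro w
    refine le_trans (card_le_card ?_) (hdeg w)
    intro x hx
    simp only [mem_filter, mem_univ, true_and] at hx ⊢
    exact hx.2.symm
  have hpow : ∀ w, c ^ Δ ≤ c ^ (K1.filter (fun x => H.Adj x w)).card :=
    fun w => pow_le_pow_of_le_one hc.le hc1 (hb w)
  let Cd : W → Finset V := fun w => (univ : Finset V).filter (fun v => ∀ x ∈ D0, H.Adj x w →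
        XThick R c univ (φ0 x) v)
  let C : W → Finset V := fun w => if w ∈ K1 then Cd w else S
  let T : Sym2 W → Finset V := fun e => if e ∈ xEdges H (D0 ∪ K1) then univ else S
  have hT : ∀ e, ε * n ≤ (T e).card := by
    intro e
    simp only [T]
    split_ifs
    · rw [card_univ]; exact hεS.trans hSn
    · exact hεS
  have hΔ' : (1 : ℝ) ≤ Δ := by exact_mod_cast hΔ
  have hKC : ∀ w ∈ K1, Δ * ε * n + K1.card + Forb.card <
      c ^ (K1.filter (fun x => H.Adj x w)).card * (C w).card := by
    intro w hw
    refine (hcand w hw).trans_le ?_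
    simp only [C, if_pos hw]
    exact mul_le_mul_of_nonneg_right (hpow w) (Nat.cast_nonneg _)
  obtain ⟨φ1, hinj1, hmem1, hth1, hout1⟩ := xp_VE R hsym c ε hc hc1 hε htyp H Δ hdeg T hT K1 Forb C
    (by
      intro w
      by_cases hw : w ∈ K1
      · refine le_trans ?_ (hKC w hw).le
        have h1 : 1 * (ε * n) ≤ Δ * (ε * n) := by gcongr
        have h2 : (0 : ℝ) ≤ K1.card := by positivity
        have h3 : (0 : ℝ) ≤ Forb.card := by positivity
        linarith
      · simp only [C, if_neg hw]
        refine hS.trans ?_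
        exact mul_le_mul_of_nonneg_right (hpow w) (Nat.cast_nonneg _)) hKC
  let φ : W → V := fun w => if w ∈ D0 then φ0 w else φ1 w
  have hφ0 : ∀ x ∈ D0, φ x = φ0 x := fun x hx => if_pos hx
  have hφ1 : ∀ x ∈ K1, φ x = φ1 x := fun x hx =>
    if_neg (fun h => (disjoint_left.1 hDK h hx))
  have hFK : ∀ x ∈ K1, φ x ∉ Forb := fun x hx => by rw [hφ1 x hx]; exact (hmem1 x hx).2
  have hE0 : xEdges H D0 = ∅ := by
    ext e
    induction e using Sym2.ind with
    | _ x y =>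
      simp only [xEdges_mk, notMem_empty, iff_false]
      rintro ⟨h1, h2, h3⟩
      exact hno x h2 y h3 h1
  have hPE0 : XPE R H D0 φ (fun _ => Classical.arbitrary V) := by
    refine ⟨?_, by simp [hE0], by simp [hE0], ?_⟩
    · intro x hx y hy hxy
      rw [hφ0 x hx, hφ0 y hy] at hxy
      exact hinj0 hx hy hxy
    · intro x hx y hy hxy
      exact absurd hxy (hno x hx y hy)
  have hinj : Set.InjOn φ (D0 ∪ K1 : Finset W) := by
    intro x hx y hy hxy
    rcases mem_union.1 (mem_coe.1 hx) with hx | hx <;>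
      rcases mem_union.1 (mem_coe.1 hy) with hy | hy
    · exact hPE0.injv hx hy hxy
    · exact absurd (hxy ▸ (hφ0 x hx ▸ hF x hx)) (hFK y hy)
    · exact absurd (hxy ▸ (hφ0 y hy ▸ hF y hy)) (hFK x hx)
    · rw [hφ1 x hx, hφ1 y hy] at hxy; exact hinj1 hx hy hxy
  have hthsym : ∀ P x y, XThick R c P x y → XThick R c P y x := by
    intro P x y h
    unfold XThick at *
    refine h.trans ?_
    exact_mod_cast card_le_card (fun z hz => by
      simp only [mem_filter] at *; exact ⟨hz.1, hsym _ _ _ hz.2⟩)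
  have hthD : ∀ x ∈ D0, ∀ y ∈ K1, H.Adj x y → XThick R c univ (φ x) (φ y) := by
    intro x hx y hy hxy
    have := (hmem1 y hy).1
    simp only [C, if_pos hy, Cd, mem_filter, mem_univ, true_and] at this
    rw [hφ0 x hx, hφ1 y hy]
    exact this x hx hxy
  have hthall : ∀ x ∈ D0 ∪ K1, ∀ y ∈ D0 ∪ K1, H.Adj x y → XThick R c univ (φ x) (φ y) := by
    intro x hx y hy hxy
    rcases mem_union.1 hx with hx1 | hx1 <;> rcases mem_union.1 hy with hy1 | hy1
    · exact absurd hxy (hno x hx1 y hy1)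
    · exact hthD x hx1 y hy1 hxy
    · exact hthsym _ _ _ (hthD y hy1 x hx1 hxy.symm)
    · have := hth1 x hx1 y hy1 hxy
      rw [hφ1 x hx1, hφ1 y hy1]
      simpa only [T, if_pos ((xEdges_mk H (D0 ∪ K1) x y).2 ⟨hxy, hx, hy⟩)] using this
  obtain ⟨ψ, hPE, -, hψ⟩ := xp_ext R H D0 K1 φ (fun _ => Classical.arbitrary V) hPE0 hinj
    (by simp [hE0]) (fun e => xCh R φ univ e \ (Forb ∪ K1.image φ))
    (by
      intro e he
      refine (xp_new_card H Δ hdeg D0 K1).trans ?_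
      induction e using Sym2.ind with
      | _ x y =>
        have he' := (xEdges_mk _ _ _ _).1 (mem_sdiff.1 he).1
        have h1 := xCh_card R hsym c φ univ x y (hthall x he'.2.1 y he'.2.2 he'.1)
        rw [card_univ] at h1
        have h2 := le_card_sdiff (Forb ∪ K1.image φ) (xCh R φ univ s(x, y))
        have h3 : (Forb ∪ K1.image φ).card ≤ Forb.card + K1.card :=
          (card_union_le _ _).trans (Nat.add_le_add_left card_image_le _)
        have h4 : ((Δ * K1.card + (Forb.card + K1.card) : ℕ) : ℝ) ≤ (xCh R φ univ s(x, y)).card := by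
          refine le_trans ?_ h1
          push_cast
          linarith
        have h5 : Δ * K1.card + (Forb.card + K1.card) ≤ (xCh R φ univ s(x, y)).card := by
          exact_mod_cast h4
        omega)
    (by
      intro x y _ z hz
      have := (mem_sdiff.1 hz).1
      simp only [xCh, mem_filter, mem_univ, true_and] at this
      exact this x y rfl)
    (by
      intro e _ z hz x hx hxz
      have := (mem_sdiff.1 hz).2
      apply this
      rw [mem_union]
      rcases mem_union.1 hx with hx | hx
      · left; rw [← hxz, hφ0 x hx]; exact hF x hx
      · right; exact mem_image.2 ⟨x, hx, hxz⟩)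
    (by simp [hE0])
  refine ⟨φ, ψ, hPE, hφ0, hFK, ?_, ?_⟩
  · intro e he hF'
    have := hψ e (by rw [hE0]; simpa using he)
    exact (mem_sdiff.1 this).2 (mem_union_left _ hF')
  · intro w hw
    have hwK : w ∉ K1 := fun h => hw (mem_union_right _ h)
    have h1 := hout1 w hwK
    simp only [C, if_neg hwK] at h1
    refine le_trans ?_ (h1.trans ?_)
    · exact mul_le_mul_of_nonneg_right (hpow w) (Nat.cast_nonneg _)
    · norm_cast
      apply card_le_card
      intro v hv
      simp only [mem_filter] at hv ⊢
      refine ⟨hv.1, fun x hx hxw => ?_⟩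
      rcases mem_union.1 hx with hx1 | hx1
      · exact absurd hxw (hout w hw x hx1)
      · have := hv.2 x hx1 hxw
        rw [hφ1 x hx1]
        have hne : s(x, w) ∉ xEdges H (D0 ∪ K1) := fun h => hw ((xEdges_mk _ _ _ _).1 h).2.2
        simpa only [T, if_neg hne] using this

lemma mem_xCh {V W : Type} {R : V → V → V → Prop} {φ : W → V} {P : Finset V}
    {e : Sym2 W} {z : V} :
    z ∈ xCh R φ P e ↔ z ∈ P ∧ ∀ x y, e = s(x, y) → R (φ x) (φ y) z := by
  simp only [xCh, mem_filter]

/-- Fibre size of a pool. -/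
noncomputable def xFib {W J : Type} [Fintype W] (H : SimpleGraph W) (D1 : Finset W) (fv : W → J)
    (fe : Sym2 W → J) (j : J) : ℕ :=
  (((univ : Finset W) \ D1).filter (fun w => fv w = j)).card +
    ((xEdges H univ \ xEdges H D1).filter (fun e => fe e = j)).card

structure XInv {V W J : Type} [Fintype W] (R : V → V → V → Prop) (H : SimpleGraph W)
    (D1 : Finset W) (φ1 : W → V) (ψ1 : Sym2 W → V) (P : J → Finset V) (fv : W → J)
    (fe : Sym2 W → J) (D : Finset W) (φ : W → V) (ψ : Sym2 W → V) : Prop where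
  pe : XPE R H D φ ψ
  sub : D1 ⊆ D
  eqv : ∀ x ∈ D1, φ x = φ1 x
  eqe : ∀ e ∈ xEdges H D1, ψ e = ψ1 e
  memv : ∀ w ∈ D, w ∉ D1 → φ w ∈ P (fv w)
  meme : ∀ e ∈ xEdges H D, e ∉ xEdges H D1 → ψ e ∈ P (fe e)

lemma XInv.used_card {V W J : Type} [Fintype W] {R : V → V → V → Prop} {H : SimpleGraph W}
    {D1 : Finset W} {φ1 : W → V} {ψ1 : Sym2 W → V} {P : J → Finset V} {fv : W → J}
    {fe : Sym2 W → J} {D : Finset W} {φ : W → V} {ψ : Sym2 W → V}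
    (h : XInv R H D1 φ1 ψ1 P fv fe D φ ψ)
    (hP : ∀ i j, i ≠ j → Disjoint (P i) (P j))
    (hPv : ∀ j, ∀ x ∈ D1, φ1 x ∉ P j) (hPe : ∀ j, ∀ e ∈ xEdges H D1, ψ1 e ∉ P j) (j : J) :
    ((D.image φ ∪ (xEdges H D).image ψ) ∩ P j).card ≤ xFib H D1 fv fe j := by
  have : (D.image φ ∪ (xEdges H D).image ψ) ∩ P j ⊆
      (((univ : Finset W) \ D1).filter (fun w => fv w = j)).image φ ∪
      ((xEdges H univ \ xEdges H D1).filter (fun e => fe e = j)).image ψ := by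
    intro v hv
    obtain ⟨hv1, hv2⟩ := mem_inter.1 hv
    rcases mem_union.1 hv1 with hv1 | hv1
    · obtain ⟨x, hx, rfl⟩ := mem_image.1 hv1
      apply mem_union_left
      have hx1 : x ∉ D1 := fun hx1 => hPv j x hx1 (h.eqv x hx1 ▸ hv2)
      refine mem_image_of_mem _ (mem_filter.2 ⟨by simp [hx1], ?_⟩)
      by_contra hne
      exact disjoint_left.1 (hP _ _ hne) (h.memv x hx hx1) hv2
    · obtain ⟨x, hx, rfl⟩ := mem_image.1 hv1
      apply mem_union_right
      have hx1 : x ∉ xEdges H D1 := fun hx1 => hPe j x hx1 (h.eqe x hx1 ▸ hv2)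
      refine mem_image_of_mem _ (mem_filter.2 ⟨mem_sdiff.2 ⟨xEdges_mono H (subset_univ _) hx, hx1⟩, ?_⟩)
      by_contra hne
      exact disjoint_left.1 (hP _ _ hne) (h.meme x hx hx1) hv2
  exact (card_le_card this).trans ((card_union_le _ _).trans
    (Nat.add_le_add card_image_le card_image_le))

lemma xp_thick_symm {V : Type} (R : V → V → V → Prop) (hsym : ∀ x y z, R x y z → R y x z) (c : ℝ)
    (P : Finset V) (x y : V) (h : XThick R c P x y) : XThick R c P y x := by
  unfold XThick at *
  refine h.trans ?_
  exact_mod_cast card_le_card (fun z hz => by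
    simp only [mem_filter] at *; exact ⟨hz.1, hsym _ _ _ hz.2⟩)

lemma xp_bulk_step {V W J : Type} [Fintype V] [Fintype W] [Nonempty V] (R : V → V → V → Prop)
    (hsym : ∀ x y z, R x y z → R y x z) (c ε : ℝ) (hc : 0 < c) (hc1 : c ≤ 1) (hε : 0 < ε)
    (htyp : XTyp R c ε) (H : SimpleGraph W) (Δ : ℕ) (hΔ : 1 ≤ Δ) (hdeg : ∀ w, degOf H w ≤ Δ)
    (D1 : Finset W) (φ1 : W → V) (ψ1 : Sym2 W → V) (P : J → Finset V) (fv : W → J)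
    (fe : Sym2 W → J)
    (hP : ∀ i j, i ≠ j → Disjoint (P i) (P j))
    (hPv : ∀ j, ∀ x ∈ D1, φ1 x ∉ P j) (hPe : ∀ j, ∀ e ∈ xEdges H D1, ψ1 e ∉ P j)
    (q m : ℝ)
    (h1 : ∀ w, w ∉ D1 → q + xFib H D1 fv fe (fv w) ≤ (((P (fv w)).filter
      (fun v => ∀ x ∈ D1, H.Adj x w → XThick R c (P (fe s(x, w))) (φ1 x) v)).card : ℝ))
    (h2 : ∀ e ∈ xEdges H univ \ xEdges H D1, q + xFib H D1 fv fe (fe e) ≤ ((P (fe e)).card : ℝ))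
    (h3 : ∀ x ∈ D1, ∀ w, w ∉ D1 → H.Adj x w →
      q + xFib H D1 fv fe (fe s(x, w)) ≤ c * ((P (fe s(x, w))).card : ℝ))
    (hεc : ε ≤ c ^ Δ) (hq : Δ * ε * (Fintype.card V : ℝ) + m < c ^ Δ * q) (hm0 : 0 ≤ m)
    (hq2 : (Δ + 1) * m ≤ c * q)
    (D K : Finset W) (φ : W → V) (ψ : Sym2 W → V)
    (hI : XInv R H D1 φ1 ψ1 P fv fe D φ ψ) (hDK : Disjoint D K) (hKm : (K.card : ℝ) ≤ m)
    (hnadj : ∀ x ∈ D, x ∉ D1 → ∀ y ∈ K, ¬ H.Adj x y) :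
    ∃ φ' ψ', XInv R H D1 φ1 ψ1 P fv fe (D ∪ K) φ' ψ' := by
  set n : ℝ := (Fintype.card V : ℝ) with hn
  have hn0 : 0 ≤ n := by positivity
  have hpow1 : ∀ k : ℕ, c ^ k ≤ 1 := fun k => pow_le_one₀ hc.le hc1
  have hΔ' : (1 : ℝ) ≤ Δ := by exact_mod_cast hΔ
  have hΔε : ε * n ≤ Δ * ε * n := by nlinarith [mul_nonneg hε.le hn0]
  have hcΔ : 0 < c ^ Δ := pow_pos hc _
  have hq0 : 0 ≤ q := by
    by_contra hq0
    push Not at hq0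
    nlinarith [mul_nonneg hε.le hn0]
  have hqle : c ^ Δ * q ≤ q := by nlinarith [hpow1 Δ]
  have hb : ∀ w, (K.filter (fun x => H.Adj x w)).card ≤ Δ := by
    intro w
    refine le_trans (card_le_card ?_) (hdeg w)
    intro x hx
    simp only [mem_filter, mem_univ, true_and] at hx ⊢
    exact hx.2.symm
  have hpow : ∀ w, c ^ Δ ≤ c ^ (K.filter (fun x => H.Adj x w)).card :=
    fun w => pow_le_pow_of_le_one hc.le hc1 (hb w)
  set U := D.image φ ∪ (xEdges H D).image ψ with hU
  have hUc := fun j => hI.used_card hP hPv hPe j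
  have hsd : ∀ (j : J) (A : Finset V), A ⊆ P j → ∀ t : ℝ, t + xFib H D1 fv fe j ≤ A.card →
      t ≤ ((A \ U).card : ℝ) := by
    intro j A hA t ht
    have e1 : A.card ≤ (A \ U).card + (U ∩ P j).card := by
      have : A ⊆ (A \ U) ∪ (U ∩ P j) := by
        intro v hv
        by_cases hvU : v ∈ U
        · exact mem_union_right _ (mem_inter.2 ⟨hvU, hA hv⟩)
        · exact mem_union_left _ (mem_sdiff.2 ⟨hv, hvU⟩)
      exact (card_le_card this).trans (card_union_le _ _)
    have e2 : A.card ≤ (A \ U).card + xFib H D1 fv fe j := e1.trans (Nat.add_le_add_left (hUc j) _)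
    have e3 : (A.card : ℝ) ≤ (A \ U).card + xFib H D1 fv fe j := by exact_mod_cast e2
    linarith
  have hKD1 : ∀ w ∈ K, w ∉ D1 := fun w hw h => disjoint_left.1 hDK (hI.sub h) hw
  let Cd : W → Finset V := fun w => (P (fv w)).filter
      (fun v => ∀ x ∈ D1, H.Adj x w → XThick R c (P (fe s(x, w))) (φ1 x) v)
  let C : W → Finset V := fun w => if w ∈ K then Cd w \ U else univ
  let T : Sym2 W → Finset V := fun e => if e ∈ xEdges H K then P (fe e) \ U else univ
  have hεq : ε * n ≤ q := by linarith
  have hnew : ∀ e ∈ xEdges H K, e ∈ xEdges H univ \ xEdges H D1 := by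
    intro e he
    refine mem_sdiff.2 ⟨xEdges_mono H (subset_univ _) he, ?_⟩
    induction e using Sym2.ind with
    | _ x y =>
      intro h
      exact hKD1 x ((xEdges_mk _ _ _ _).1 he).2.1 ((xEdges_mk _ _ _ _).1 h).2.1
  have hTq : ∀ e ∈ xEdges H K, q ≤ ((P (fe e) \ U).card : ℝ) := fun e he =>
    hsd (fe e) _ (Subset.refl _) q (h2 e (hnew e he))
  have hT : ∀ e, ε * n ≤ (T e).card := by
    intro e
    simp only [T]
    split_ifs with he
    · exact hεq.trans (hTq e he)
    · rw [card_univ, ← hn]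
      nlinarith [hpow1 Δ]
  have hCq : ∀ w ∈ K, q ≤ ((Cd w \ U).card : ℝ) := fun w hw =>
    hsd (fv w) _ (filter_subset _ _) q (h1 w (hKD1 w hw))
  have hKC : ∀ w ∈ K, Δ * ε * n + K.card + (∅ : Finset V).card <
      c ^ (K.filter (fun x => H.Adj x w)).card * (C w).card := by
    intro w hw
    simp only [C, if_pos hw, card_empty, Nat.cast_zero, add_zero]
    calc Δ * ε * n + K.card ≤ Δ * ε * n + m := by linarith
      _ < c ^ Δ * q := hq
      _ ≤ c ^ (K.filter (fun x => H.Adj x w)).card * (Cd w \ U).card :=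
        mul_le_mul (hpow w) (hCq w hw) hq0 (by positivity)
  obtain ⟨χ, hχinj, hχmem, hχth, -⟩ := xp_VE R hsym c ε hc hc1 hε htyp H Δ hdeg T hT K ∅ C
    (by
      intro w
      by_cases hw : w ∈ K
      · refine le_trans ?_ (hKC w hw).le
        have h2 : (0 : ℝ) ≤ K.card := by positivity
        simp only [card_empty, Nat.cast_zero, add_zero]
        linarith
      · simp only [C, if_neg hw, card_univ, ← hn]
        have := hpow w
        nlinarith) hKC
  let φ' : W → V := fun w => if w ∈ K then χ w else φ w
  have hφK : ∀ x ∈ K, φ' x = χ x := fun x hx => if_pos hx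
  have hφD : ∀ x ∈ D, φ' x = φ x := fun x hx => if_neg (fun h => disjoint_left.1 hDK hx h)
  have hχC : ∀ w ∈ K, χ w ∈ Cd w ∧ χ w ∉ U := by
    intro w hw
    have := (hχmem w hw).1
    simp only [C, if_pos hw] at this
    exact mem_sdiff.1 this
  have hPE : XPE R H D φ' ψ := by
    refine ⟨?_, hI.pe.inje, ?_, ?_⟩
    · intro x hx y hy hxy
      rw [hφD x hx, hφD y hy] at hxy
      exact hI.pe.injv hx hy hxy
    · intro x hx e he
      rw [hφD x hx]; exact hI.pe.disj x hx e he
    · intro x hx y hy hxy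
      rw [hφD x hx, hφD y hy]; exact hI.pe.edge x hx y hy hxy
  have hinj : Set.InjOn φ' (D ∪ K : Finset W) := by
    intro x hx y hy hxy
    rcases mem_union.1 (mem_coe.1 hx) with hx | hx <;>
      rcases mem_union.1 (mem_coe.1 hy) with hy | hy
    · exact hPE.injv hx hy hxy
    · rw [hφD x hx, hφK y hy] at hxy
      exact absurd (mem_union_left _ (mem_image.2 ⟨x, hx, hxy⟩)) (hχC y hy).2
    · rw [hφD y hy, hφK x hx] at hxy
      exact absurd (mem_union_left _ (mem_image.2 ⟨y, hy, hxy.symm⟩)) (hχC x hx).2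
    · rw [hφK x hx, hφK y hy] at hxy; exact hχinj hx hy hxy
  have hcore : ∀ x y, s(x, y) ∈ xEdges H (D ∪ K) → y ∈ K →
      q * c ≤ ((xCh R φ' (P (fe s(x, y))) s(x, y) \ U).card : ℝ) := by
    intro x y he hy
    have he' := (xEdges_mk _ _ _ _).1 he
    by_cases hxK : x ∈ K
    · have heK : s(x, y) ∈ xEdges H K := (xEdges_mk _ _ _ _).2 ⟨he'.1, hxK, hy⟩
      have e1 := hχth x hxK y hy he'.1
      simp only [T, if_pos heK] at e1
      rw [← hφK x hxK, ← hφK y hy] at e1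
      have e2 := xCh_card R hsym c φ' _ x y e1
      have e3 : ((xCh R φ' (P (fe s(x, y)) \ U) s(x, y)).card : ℝ) ≤
          ((xCh R φ' (P (fe s(x, y))) s(x, y) \ U).card : ℝ) := by
        norm_cast
        apply card_le_card
        intro z hz
        simp only [xCh, mem_filter, mem_sdiff] at hz ⊢
        exact ⟨⟨hz.1.1, hz.2⟩, hz.1.2⟩
      have := hTq _ heK
      nlinarith
    · have hxD : x ∈ D := by
        rcases mem_union.1 he'.2.1 with h | h
        · exact h
        · exact absurd h hxK
      have hxD1 : x ∈ D1 := by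
        by_contra h
        exact hnadj x hxD h y hy he'.1
      have e1 := (mem_filter.1 (hχC y hy).1).2 x hxD1 he'.1
      rw [← hφK y hy, ← hI.eqv x hxD1, ← hφD x hxD] at e1
      have e2 := xCh_card R hsym c φ' _ x y e1
      have e3 := h3 x hxD1 y (hKD1 y hy) he'.1
      have e4 := hsd (fe s(x, y)) (xCh R φ' (P (fe s(x, y))) s(x, y)) (fun z hz => (mem_xCh.1 hz).1) q
        (e3.trans e2)
      nlinarith
  have hcore' : ∀ e ∈ xEdges H (D ∪ K) \ xEdges H D,
      q * c ≤ ((xCh R φ' (P (fe e)) e \ U).card : ℝ) := by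
    intro e he
    obtain ⟨he1, he2⟩ := mem_sdiff.1 he
    induction e using Sym2.ind with
    | _ x y =>
      have he' := (xEdges_mk _ _ _ _).1 he1
      rw [xEdges_mk] at he2
      by_cases hy : y ∈ K
      · exact hcore x y he1 hy
      · have hx : x ∈ K := by
          simp only [mem_union] at he'
          tauto
        rw [Sym2.eq_swap]
        exact hcore y x (Sym2.eq_swap ▸ he1) hx
  obtain ⟨ψ', hPE', hold, hψ⟩ := xp_ext R H D K φ' ψ hPE hinj
    (by
      intro x hx e he hxe
      rw [hφK x hx] at hxe
      exact (hχC x hx).2 (mem_union_right _ (mem_image.2 ⟨e, he, hxe.symm⟩)))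
    (fun e => (xCh R φ' (P (fe e)) e \ U) \ K.image φ')
    (by
      intro e he
      refine (xp_new_card H Δ hdeg D K).trans ?_
      have e1 := hcore' e he
      have e2 := le_card_sdiff (K.image φ') (xCh R φ' (P (fe e)) e \ U)
      have e3 : (K.image φ').card ≤ K.card := card_image_le
      have e4 : ((Δ * K.card + K.card : ℕ) : ℝ) ≤ ((xCh R φ' (P (fe e)) e \ U).card : ℝ) := by
        refine le_trans ?_ e1
        push_cast
        nlinarith
      have e5 : Δ * K.card + K.card ≤ (xCh R φ' (P (fe e)) e \ U).card := by exact_mod_cast e4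
      omega)
    (by
      intro x y _ z hz
      have := (mem_xCh.1 (mem_sdiff.1 (mem_sdiff.1 hz).1).1).2
      exact this x y rfl)
    (by
      intro e _ z hz x hx hxz
      obtain ⟨hz1, hz2⟩ := mem_sdiff.1 hz
      rcases mem_union.1 hx with hx | hx
      · rw [hφD x hx] at hxz
        exact (mem_sdiff.1 hz1).2 (mem_union_left _ (mem_image.2 ⟨x, hx, hxz⟩))
      · exact hz2 (mem_image.2 ⟨x, hx, hxz⟩))
    (by
      intro e _ z hz e' he' hez
      exact (mem_sdiff.1 (mem_sdiff.1 hz).1).2 (mem_union_right _ (mem_image.2 ⟨e', he', hez⟩)))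
  refine ⟨φ', ψ', hPE', hI.sub.trans subset_union_left, ?_, ?_, ?_, ?_⟩
  · intro x hx
    rw [hφD x (hI.sub hx)]; exact hI.eqv x hx
  · intro e he
    rw [hold e (xEdges_mono H hI.sub he)]; exact hI.eqe e he
  · intro w hw hw1
    rcases mem_union.1 hw with hw | hw
    · rw [hφD w hw]; exact hI.memv w hw hw1
    · rw [hφK w hw]; exact (mem_filter.1 (hχC w hw).1).1
  · intro e he he1
    by_cases h : e ∈ xEdges H D
    · rw [hold e h]; exact hI.meme e h he1
    · have := hψ e (mem_sdiff.2 ⟨he, h⟩)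
      exact (mem_xCh.1 (mem_sdiff.1 (mem_sdiff.1 this).1).1).1

lemma xp_bulk {V W J Q : Type} [Fintype V] [Fintype W] [Nonempty V] (R : V → V → V → Prop)
    (hsym : ∀ x y z, R x y z → R y x z) (c ε : ℝ) (hc : 0 < c) (hc1 : c ≤ 1) (hε : 0 < ε)
    (htyp : XTyp R c ε) (H : SimpleGraph W) (Δ : ℕ) (hΔ : 1 ≤ Δ) (hdeg : ∀ w, degOf H w ≤ Δ)
    (D1 : Finset W) (φ1 : W → V) (ψ1 : Sym2 W → V) (hPE : XPE R H D1 φ1 ψ1)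
    (P : J → Finset V) (fv : W → J) (fe : Sym2 W → J)
    (hP : ∀ i j, i ≠ j → Disjoint (P i) (P j))
    (hPv : ∀ j, ∀ x ∈ D1, φ1 x ∉ P j) (hPe : ∀ j, ∀ e ∈ xEdges H D1, ψ1 e ∉ P j)
    (q m : ℝ)
    (h1 : ∀ w, w ∉ D1 → q + xFib H D1 fv fe (fv w) ≤ (((P (fv w)).filter
      (fun v => ∀ x ∈ D1, H.Adj x w → XThick R c (P (fe s(x, w))) (φ1 x) v)).card : ℝ))
    (h2 : ∀ e ∈ xEdges H univ \ xEdges H D1, q + xFib H D1 fv fe (fe e) ≤ ((P (fe e)).card : ℝ))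
    (h3 : ∀ x ∈ D1, ∀ w, w ∉ D1 → H.Adj x w →
      q + xFib H D1 fv fe (fe s(x, w)) ≤ c * ((P (fe s(x, w))).card : ℝ))
    (hεc : ε ≤ c ^ Δ) (hq : Δ * ε * (Fintype.card V : ℝ) + m < c ^ Δ * q) (hm0 : 0 ≤ m)
    (hq2 : (Δ + 1) * m ≤ c * q)
    (cf : W → Q) (hcf : ∀ x y, x ∉ D1 → y ∉ D1 → H.Adj x y → cf x = cf y)
    (hcfm : ∀ a, ((((univ : Finset W) \ D1).filter (fun w => cf w = a)).card : ℝ) ≤ m) :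
    ∃ φ ψ, XInv R H D1 φ1 ψ1 P fv fe univ φ ψ := by
  have key : ∀ 𝒬 : Finset Q, ∃ φ ψ, XInv R H D1 φ1 ψ1 P fv fe
      (D1 ∪ ((univ : Finset W) \ D1).filter (fun w => cf w ∈ 𝒬)) φ ψ := by
    intro 𝒬
    induction 𝒬 using Finset.induction_on with
    | empty =>
      refine ⟨φ1, ψ1, ?_⟩
      have : D1 ∪ ((univ : Finset W) \ D1).filter (fun w => cf w ∈ (∅ : Finset Q)) = D1 := by simp
      rw [this]
      exact ⟨hPE, Subset.refl _, fun _ _ => rfl, fun _ _ => rfl, fun w h1 h2 => absurd h1 h2,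
        fun w h1 h2 => absurd h1 h2⟩
    | insert a 𝒬 ha ih =>
      obtain ⟨φ, ψ, hI⟩ := ih
      have := xp_bulk_step R hsym c ε hc hc1 hε htyp H Δ hΔ hdeg D1 φ1 ψ1 P fv fe hP hPv hPe q m
        h1 h2 h3 hεc hq hm0 hq2 _ (((univ : Finset W) \ D1).filter (fun w => cf w = a)) φ ψ hI
        (by
          rw [disjoint_left]
          intro x hx hx'
          simp only [mem_filter, mem_sdiff, mem_univ, true_and] at hx'
          rcases mem_union.1 hx with hx | hx
          · exact hx'.1 hx
          · rw [mem_filter, hx'.2] at hx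
            exact ha hx.2)
        (hcfm a)
        (by
          intro x hx hx1 y hy hxy
          simp only [mem_filter, mem_sdiff, mem_univ, true_and, mem_union] at hx hy
          have := hcf x y hx1 hy.1 hxy
          rcases hx with hx | hx
          · exact hx1 hx
          · rw [this, hy.2] at hx; exact ha hx.2)
      obtain ⟨φ', ψ', h'⟩ := this
      refine ⟨φ', ψ', ?_⟩
      convert h' using 1
      ext w
      simp only [mem_filter, mem_sdiff, mem_univ, true_and, mem_union, mem_insert]
      tauto
  obtain ⟨φ, ψ, h⟩ := key (univ.image cf)
  refine ⟨φ, ψ, ?_⟩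
  convert h using 1
  ext w
  simp only [mem_filter, mem_sdiff, mem_univ, true_and, mem_union, mem_image, exists_apply_eq_apply]
  tauto

/-- A graph-theoretic cluster lemma (paths of length three). -/
lemma xp_class {V Ω : Type} [Fintype V] [Fintype Ω] (M : V → Ω → Prop) (α : ℝ) (hα : 0 < α)
    (hα1 : α ≤ 1) (hdeg : ∀ v, α * (Fintype.card Ω : ℝ) ≤ ((univ : Finset Ω).filter (M v)).card)
    (hΩ : 0 < Fintype.card Ω) (Y : Finset V) (hY : Y.Nonempty) :
    ∃ A ⊆ Y, α / 4 * (Y.card : ℝ) ≤ A.card ∧ ∃ Q : Finset Ω,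
      α / 2 * (Fintype.card Ω : ℝ) ≤ Q.card ∧ ∀ v ∈ A, ∀ q ∈ Q,
        α ^ 5 / 128 * Y.card * (Fintype.card Ω : ℝ) ≤
          (((univ : Finset (Ω × V)).filter (fun t => M v t.1 ∧ M t.2 t.1 ∧ M t.2 q)).card : ℝ) := by
  set N : ℝ := (Fintype.card Ω : ℝ) with hN
  have hN0 : 0 < N := by rw [hN]; exact_mod_cast hΩ
  have hY0 : (0 : ℝ) < Y.card := by exact_mod_cast hY.card_pos
  let κ : V → V → ℝ := fun v u => ((univ : Finset Ω).filter (fun p => M v p ∧ M u p)).card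
  let bad : V → V → Prop := fun v u => κ v u < α ^ 3 / 16 * N
  let Nb : Ω → Finset V := fun p => Y.filter (fun v => M v p)
  let bp : Ω → ℝ := fun p => (((Nb p) ×ˢ (Nb p)).filter (fun z => bad z.1 z.2)).card
  -- sum of bad pairs
  have hsumbad : ∑ p, bp p ≤ α ^ 3 / 16 * N * (Y.card : ℝ) ^ 2 := by
    have e1 : ∀ p, bp p = ∑ z ∈ Y ×ˢ Y, if bad z.1 z.2 ∧ M z.1 p ∧ M z.2 p then (1 : ℝ) else 0 := by
      intro p
      simp only [bp]
      rw [← sum_filter, sum_const, nsmul_eq_mul, mul_one]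
      congr 2
      ext z
      simp only [Nb, mem_filter, mem_product]
      tauto
    simp only [e1]
    rw [sum_comm]
    have e2 : ∀ z ∈ Y ×ˢ Y, ∑ p, (if bad z.1 z.2 ∧ M z.1 p ∧ M z.2 p then (1 : ℝ) else 0) ≤
        α ^ 3 / 16 * N := by
      intro z _
      by_cases hz : bad z.1 z.2
      · simp only [hz, true_and]
        rw [← sum_filter, sum_const, nsmul_eq_mul, mul_one]
        exact hz.le
      · simp only [hz, false_and, if_false, sum_const_zero]
        positivity
    refine (sum_le_sum e2).trans ?_
    rw [sum_const, nsmul_eq_mul, card_product]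
    push_cast
    apply le_of_eq; ring
  have hdeg2 : ∀ B : Finset V, ∑ p, ((B.filter (fun v => M v p)).card : ℝ) ≥ α * N * B.card := by
    intro B
    have e1 : ∑ p, ((B.filter (fun v => M v p)).card : ℝ) =
        ∑ v ∈ B, (((univ : Finset Ω).filter (M v)).card : ℝ) := by
      simp only [card_filter]
      push_cast
      rw [sum_comm]
    rw [e1]
    calc α * N * B.card = ∑ v ∈ B, α * N := by rw [sum_const, nsmul_eq_mul]; ring
      _ ≤ _ := sum_le_sum fun v _ => hdeg v
  have hsq : α ^ 2 * (Y.card : ℝ) ^ 2 * N ≤ ∑ p, ((Nb p).card : ℝ) ^ 2 := by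
    have e1 := hdeg2 Y
    have e2 := sq_sum_le_card_mul_sum_sq (s := (univ : Finset Ω)) (f := fun p => ((Nb p).card : ℝ))
    rw [card_univ, ← hN] at e2
    have e3 : (α * N * Y.card) ^ 2 ≤ (∑ p, ((Nb p).card : ℝ)) ^ 2 :=
      pow_le_pow_left₀ (by positivity) e1 2
    have e4 : N * (α ^ 2 * (Y.card : ℝ) ^ 2 * N) ≤ N * ∑ p, ((Nb p).card : ℝ) ^ 2 := by
      calc _ = (α * N * Y.card) ^ 2 := by ring
        _ ≤ _ := e3.trans e2
    exact le_of_mul_le_mul_left e4 hN0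
  obtain ⟨p0, hp0⟩ : ∃ p, α ^ 2 * (Y.card : ℝ) ^ 2 / 2 ≤ ((Nb p).card : ℝ) ^ 2 - 8 / α * bp p := by
    by_contra hcon
    push Not at hcon
    have : Nonempty Ω := Fintype.card_pos_iff.1 hΩ
    have e1 : ∑ p, (((Nb p).card : ℝ) ^ 2 - 8 / α * bp p) < ∑ _p : Ω, α ^ 2 * (Y.card : ℝ) ^ 2 / 2 :=
      sum_lt_sum_of_nonempty univ_nonempty fun p _ => hcon p
    rw [sum_sub_distrib, ← mul_sum, sum_const, nsmul_eq_mul, card_univ, ← hN] at e1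
    have e2 : 8 / α * ∑ p, bp p ≤ 8 / α * (α ^ 3 / 16 * N * (Y.card : ℝ) ^ 2) := by gcongr
    have e3 : 8 / α * (α ^ 3 / 16 * N * (Y.card : ℝ) ^ 2) = α ^ 2 * (Y.card : ℝ) ^ 2 / 2 * N := by
      field_simp; ring
    linarith
  set B := Nb p0 with hB
  have hbp0 : 0 ≤ bp p0 := by simp only [bp]; positivity
  have hB1 : α / 2 * Y.card ≤ B.card := by
    have : (α / 2 * Y.card) ^ 2 ≤ (B.card : ℝ) ^ 2 := by
      have : 0 ≤ 8 / α * bp p0 := by positivity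
      nlinarith [sq_nonneg (α * Y.card)]
    exact le_of_sq_le_sq this (by positivity)
  have hB0 : (0 : ℝ) < B.card := lt_of_lt_of_le (by positivity) hB1
  have hbpB : bp p0 ≤ α / 8 * (B.card : ℝ) ^ 2 := by
    have h : 8 / α * bp p0 ≤ (B.card : ℝ) ^ 2 := by
      have : 0 ≤ α ^ 2 * (Y.card : ℝ) ^ 2 / 2 := by positivity
      linarith
    calc bp p0 = α / 8 * (8 / α * bp p0) := by field_simp
      _ ≤ _ := by gcongr
  let A := B.filter (fun v => ((B.filter (fun u => bad v u)).card : ℝ) ≤ α / 4 * B.card)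
  have hAB : A ⊆ B := filter_subset _ _
  have hbpsum : bp p0 = ∑ v ∈ B, ((B.filter (fun u => bad v u)).card : ℝ) := by
    simp only [bp, ← hB]
    rw [card_filter, sum_product]
    push_cast
    refine sum_congr rfl fun v _ => ?_
    rw [card_filter]
    push_cast; rfl
  have hAcard : (B.card : ℝ) / 2 ≤ A.card := by
    have e1 : ((B \ A).card : ℝ) * (α / 4 * B.card) ≤ bp p0 := by
      rw [hbpsum]
      calc ((B \ A).card : ℝ) * (α / 4 * B.card) = ∑ v ∈ B \ A, α / 4 * (B.card : ℝ) := by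
            rw [sum_const, nsmul_eq_mul]
        _ ≤ ∑ v ∈ B \ A, ((B.filter (fun u => bad v u)).card : ℝ) := by
            refine sum_le_sum fun v hv => ?_
            obtain ⟨h1, h2⟩ := mem_sdiff.1 hv
            by_contra hcon
            push Not at hcon
            exact h2 (mem_filter.2 ⟨h1, hcon.le⟩)
        _ ≤ _ := sum_le_sum_of_subset_of_nonneg sdiff_subset (fun _ _ _ => by positivity)
    have e2 : ((B \ A).card : ℝ) = B.card - A.card := by
      rw [card_sdiff_of_subset hAB, Nat.cast_sub (card_le_card hAB)]
    rw [e2] at e1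
    have e3 : ((B.card : ℝ) - A.card) * (α / 4 * B.card) ≤ (B.card / 2 : ℝ) * (α / 4 * B.card) := by
      refine (e1.trans hbpB).trans (le_of_eq ?_); ring
    have := le_of_mul_le_mul_right e3 (by positivity)
    linarith
  let Q := (univ : Finset Ω).filter (fun q => α / 2 * (B.card : ℝ) ≤ (B.filter (fun v => M v q)).card)
  have hQ : α / 2 * N ≤ Q.card := by
    have e1 := hdeg2 B
    have e2 : ∑ p, ((B.filter (fun v => M v p)).card : ℝ) ≤
        ∑ p, ((if p ∈ Q then (B.card : ℝ) else 0) + α / 2 * B.card) := by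
      refine sum_le_sum fun p _ => ?_
      split_ifs with h
      · have : ((B.filter (fun v => M v p)).card : ℝ) ≤ B.card := by
          exact_mod_cast card_filter_le _ _
        have : 0 ≤ α / 2 * (B.card : ℝ) := by positivity
        linarith
      · simp only [Q, mem_filter, mem_univ, true_and, not_le] at h
        linarith
    rw [sum_add_distrib, ← sum_filter, sum_const, sum_const, nsmul_eq_mul, nsmul_eq_mul, card_univ,
      ← hN, filter_mem_eq_inter, univ_inter] at e2
    have e3 : (α / 2 * N) * B.card ≤ Q.card * B.card := by linarith
    exact le_of_mul_le_mul_right e3 hB0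
  refine ⟨A, hAB.trans (filter_subset _ _), ?_, Q, hQ, ?_⟩
  · linarith
  intro v hv q hq
  have hv' := (mem_filter.1 hv).2
  have hq' := (mem_filter.1 hq).2
  let Uo := (B.filter (fun u => M u q)) \ (B.filter (fun u => bad v u))
  have hU : α / 4 * (B.card : ℝ) ≤ Uo.card := by
    have := le_card_sdiff (B.filter (fun u => bad v u)) (B.filter (fun u => M u q))
    have e : ((B.filter (fun u => M u q)).card : ℝ) ≤ Uo.card + (B.filter (fun u => bad v u)).card := by
      norm_cast
      simp only [Uo]
      omega
    linarith
  have hcount : ∑ u ∈ Uo, κ v u ≤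
      (((univ : Finset (Ω × V)).filter (fun t => M v t.1 ∧ M t.2 t.1 ∧ M t.2 q)).card : ℝ) := by
    have e1 : ∑ u ∈ Uo, κ v u = ((Uo.sigma
        (fun u => (univ : Finset Ω).filter (fun p => M v p ∧ M u p))).card : ℝ) := by
      rw [card_sigma]; push_cast; rfl
    rw [e1]
    norm_cast
    refine card_le_card_of_injOn (fun s => (s.2, s.1)) ?_ ?_
    · rintro ⟨u, p⟩ hs
      simp only [Uo, mem_coe, mem_sigma, mem_sdiff, mem_filter, mem_univ, true_and] at hs ⊢
      exact ⟨hs.2.1, hs.2.2, hs.1.1.2⟩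
    · rintro ⟨u, p⟩ _ ⟨u', p'⟩ _ h
      simp only [Prod.mk.injEq] at h
      obtain ⟨rfl, rfl⟩ := h
      rfl
  refine le_trans ?_ hcount
  have e1 : ∑ u ∈ Uo, κ v u ≥ ∑ u ∈ Uo, α ^ 3 / 16 * N := by
    refine sum_le_sum fun u hu => ?_
    simp only [Uo, mem_sdiff, mem_filter, bad] at hu
    by_contra hcon
    push Not at hcon
    exact hu.2 ⟨hu.1.1, hcon⟩
  rw [sum_const, nsmul_eq_mul] at e1
  refine le_trans ?_ e1
  have e2 : α / 4 * (α / 2 * Y.card) ≤ Uo.card := le_trans (by gcongr) hU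
  calc α ^ 5 / 128 * Y.card * N = (α / 4 * (α / 2 * Y.card)) * (α ^ 3 / 16 * N) := by ring
    _ ≤ _ := by gcongr

/-- Greedy choice with conflicts. -/
lemma xp_greedy {ι T : Type*} [Nonempty T] (I : Finset ι) (F : ι → Finset T) (Nb : T → Finset T)
    (hsymm : ∀ s t, s ∈ Nb t → t ∈ Nb s) (b : ℕ) (hb : ∀ t, (Nb t).card ≤ b)
    (h : ∀ i ∈ I, b * I.card < (F i).card) :
    ∃ g : ι → T, (∀ i ∈ I, g i ∈ F i) ∧ ∀ i ∈ I, ∀ j ∈ I, i ≠ j → g i ∉ Nb (g j) := by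
  suffices H : ∀ J : Finset ι, J ⊆ I → ∃ g : ι → T, (∀ i ∈ J, g i ∈ F i) ∧
      ∀ i ∈ J, ∀ j ∈ J, i ≠ j → g i ∉ Nb (g j) from H I (Subset.refl _)
  intro J
  induction J using Finset.induction_on with
  | empty => intro _; exact ⟨fun _ => Classical.arbitrary T, by simp, by simp⟩
  | insert a J ha ih =>
    intro hJ
    obtain ⟨g, hg, hinj⟩ := ih (fun x hx => hJ (mem_insert_of_mem hx))
    have hc : (J.biUnion (fun i => Nb (g i))).card < (F a).card := by
      calc (J.biUnion (fun i => Nb (g i))).card ≤ ∑ i ∈ J, (Nb (g i)).card := card_biUnion_le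
        _ ≤ ∑ i ∈ J, b := sum_le_sum fun i _ => hb _
        _ = b * J.card := by rw [sum_const, smul_eq_mul, mul_comm]
        _ ≤ b * I.card := Nat.mul_le_mul_left _
            (card_le_card (fun x hx => hJ (mem_insert_of_mem hx)))
        _ < _ := h a (hJ (mem_insert_self _ _))
    obtain ⟨t, ht, ht'⟩ := exists_mem_notMem_of_card_lt_card hc
    simp only [mem_biUnion, not_exists, not_and] at ht'
    refine ⟨Function.update g a t, ?_, ?_⟩
    · intro i hi
      by_cases hia : i = a
      · subst hia; simpa using ht
      · rw [Function.update_of_ne hia]; exact hg i (by simpa [hia] using hi)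
    · intro i hi j hj hij
      rw [mem_insert] at hi hj
      by_cases hia : i = a <;> by_cases hja : j = a
      · exact absurd (hia.trans hja.symm) hij
      · subst hia
        rw [Function.update_self, Function.update_of_ne hja]
        exact ht' j (by tauto)
      · subst hja
        rw [Function.update_self, Function.update_of_ne hia]
        intro hh
        exact ht' i (by tauto) (hsymm _ _ hh)
      · rw [Function.update_of_ne hia, Function.update_of_ne hja]
        exact hinj i (by tauto) j (by tauto) hij

/-- Conditional-expectation selection: many hits for all events. -/
lemma xp_hits {T Ω : Type} [Fintype T] [Fintype Ω] [Nonempty Ω] (S : Ω → Finset T)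
    (Nb : T → Finset T) (hsymm : ∀ s t, s ∈ Nb t → t ∈ Nb s) (b : ℕ) (hb : ∀ t, (Nb t).card ≤ b)
    (lam : ℝ) (hlam : 0 ≤ lam) (hT : 0 < Fintype.card T) (m0 : ℕ)
    (hS : ∀ ω, lam * (Fintype.card T : ℝ) + b * m0 ≤ (S ω).card) (hpos : 0 < lam) :
    ∀ m ≤ m0, ∃ f : ℕ → T, (∀ i < m, ∃ ω, f i ∈ S ω) ∧
      (∀ i < m, ∀ j < m, i ≠ j → f i ∉ Nb (f j)) ∧
      ∑ ω, (1 / 2 : ℝ) ^ ((range m).filter (fun i => f i ∈ S ω)).card ≤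
        (Fintype.card Ω : ℝ) * (1 - lam / 2) ^ m := by
  intro m
  induction m with
  | zero =>
    intro _
    have : Nonempty T := Fintype.card_pos_iff.1 hT
    exact ⟨fun _ => Classical.arbitrary T, by simp, by simp, by simp⟩
  | succ m ih =>
    intro hm
    obtain ⟨f, hf1, hf2, hf3⟩ := ih (by omega)
    have hTr : (0 : ℝ) < Fintype.card T := by exact_mod_cast hT
    have hlam1 : lam ≤ 1 := by
      obtain ⟨ω⟩ := ‹Nonempty Ω›
      have h1 := hS ω
      have h2 : ((S ω).card : ℝ) ≤ Fintype.card T := by exact_mod_cast card_le_univ _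
      have h3 : (0 : ℝ) ≤ b * m0 := by positivity
      by_contra hcon
      push Not at hcon
      nlinarith
    let wt : Ω → ℝ := fun ω => (1 / 2 : ℝ) ^ ((range m).filter (fun i => f i ∈ S ω)).card
    have hwt : ∀ ω, 0 < wt ω := fun ω => by simp only [wt]; positivity
    let Bl := (range m).biUnion (fun i => Nb (f i))
    have hBl : Bl.card ≤ b * m0 := by
      calc Bl.card ≤ ∑ i ∈ range m, (Nb (f i)).card := card_biUnion_le
        _ ≤ ∑ i ∈ range m, b := sum_le_sum fun i _ => hb _
        _ = b * m := by rw [sum_const, smul_eq_mul, mul_comm, card_range]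
        _ ≤ b * m0 := Nat.mul_le_mul_left _ (by omega)
    have hSB : ∀ ω, lam * (Fintype.card T : ℝ) ≤ ((S ω \ Bl).card : ℝ) := by
      intro ω
      have h1 := le_card_sdiff Bl (S ω)
      have h2 : (S ω).card ≤ (S ω \ Bl).card + b * m0 := by omega
      have h3 : ((S ω).card : ℝ) ≤ (S ω \ Bl).card + b * m0 := by exact_mod_cast h2
      have := hS ω
      linarith
    set Wt := ∑ ω, wt ω with hWt
    have hWt0 : 0 < Wt := sum_pos (fun ω _ => hwt ω) univ_nonempty
    obtain ⟨t, ht, htw⟩ : ∃ t, t ∉ Bl ∧ lam * Wt ≤ ∑ ω ∈ univ.filter (fun ω => t ∈ S ω), wt ω := by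
      by_contra hcon
      push Not at hcon
      have e1 : ∑ t ∈ Blᶜ, ∑ ω ∈ univ.filter (fun ω => t ∈ S ω), wt ω =
          ∑ ω, ((S ω \ Bl).card : ℝ) * wt ω := by
        simp only [sum_filter]
        rw [sum_comm]
        refine sum_congr rfl fun ω _ => ?_
        rw [← sum_filter, sum_const, nsmul_eq_mul]
        congr 3
        ext t
        simp only [mem_filter, mem_compl, mem_sdiff]
        tauto
      have e2 : lam * (Fintype.card T : ℝ) * Wt ≤ ∑ ω, ((S ω \ Bl).card : ℝ) * wt ω := by
        rw [hWt, mul_sum]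
        exact sum_le_sum fun ω _ => mul_le_mul_of_nonneg_right (hSB ω) (hwt ω).le
      have hne : (Blᶜ).Nonempty := by
        obtain ⟨ω⟩ := ‹Nonempty Ω›
        have : (0 : ℝ) < (S ω \ Bl).card := lt_of_lt_of_le (by positivity) (hSB ω)
        have : 0 < (S ω \ Bl).card := by exact_mod_cast this
        obtain ⟨x, hx⟩ := card_pos.1 this
        exact ⟨x, mem_compl.2 (mem_sdiff.1 hx).2⟩
      have e3 : ∑ t ∈ Blᶜ, ∑ ω ∈ univ.filter (fun ω => t ∈ S ω), wt ω < ∑ t ∈ Blᶜ, lam * Wt :=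
        sum_lt_sum_of_nonempty hne fun t ht => hcon t (mem_compl.1 ht)
      rw [sum_const, nsmul_eq_mul] at e3
      have e4 : ((Blᶜ).card : ℝ) ≤ Fintype.card T := by exact_mod_cast card_le_univ _
      have e5 : ((Blᶜ).card : ℝ) * (lam * Wt) ≤ (Fintype.card T : ℝ) * (lam * Wt) := by gcongr
      linarith
    simp only [Bl, mem_biUnion, mem_range, not_exists, not_and] at ht
    refine ⟨Function.update f m t, ?_, ?_, ?_⟩
    · intro i hi
      by_cases him : i = m
      · subst him
        rw [Function.update_self]
        by_contra hcon
        push Not at hcon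
        rw [filter_false_of_mem (fun ω _ => hcon ω), sum_empty] at htw
        nlinarith [mul_pos hpos hWt0]
      · rw [Function.update_of_ne him]; exact hf1 i (by omega)
    · intro i hi j hj hij
      by_cases hia : i = m <;> by_cases hja : j = m
      · exact absurd (hia.trans hja.symm) hij
      · subst hia
        rw [Function.update_self, Function.update_of_ne hja]
        exact ht j (by omega)
      · subst hja
        rw [Function.update_self, Function.update_of_ne hia]
        intro hh
        exact ht i (by omega) (hsymm _ _ hh)
      · rw [Function.update_of_ne hia, Function.update_of_ne hja]
        exact hf2 i (by omega) j (by omega) hij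
    · have e1 : ∀ ω, (1 / 2 : ℝ) ^ ((range (m + 1)).filter
          (fun i => Function.update f m t i ∈ S ω)).card =
          wt ω - (if t ∈ S ω then wt ω / 2 else 0) := by
        intro ω
        have e2 : (range m).filter (fun i => Function.update f m t i ∈ S ω) =
            (range m).filter (fun i => f i ∈ S ω) := by
          refine filter_congr fun i hi => ?_
          rw [Function.update_of_ne (by have := mem_range.1 hi; omega)]
        rw [range_add_one, filter_insert, e2, Function.update_self]
        split_ifs with h
        · rw [card_insert_of_notMem (by simp), pow_succ]
          simp only [wt]; ring
        · simp only [wt]; ring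
      simp only [e1]
      rw [sum_sub_distrib, ← hWt, ← sum_filter, ← sum_div]
      calc _ ≤ Wt * (1 - lam / 2) := by linarith
        _ ≤ ((Fintype.card Ω : ℝ) * (1 - lam / 2) ^ m) * (1 - lam / 2) := by
          apply mul_le_mul_of_nonneg_right hf3; linarith
        _ = _ := by rw [pow_succ]; ring

noncomputable def xtv {V : Type} (t : (V × V) × V) : Finset V := {t.1.1, t.1.2, t.2}
noncomputable def xpv {V : Type} (t : V × V) : Finset V := {t.1, t.2}

lemma xp_cnt_pair {V : Type} [Fintype V] (X : Finset V) :
    ((univ : Finset (V × V)).filter (fun p => ¬ Disjoint (xpv p) X)).card ≤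
      2 * X.card * Fintype.card V := by
  have : (univ : Finset (V × V)).filter (fun p => ¬ Disjoint (xpv p) X) ⊆
      X ×ˢ univ ∪ univ ×ˢ X := by
    rintro ⟨a, b⟩ h
    simp only [mem_filter, mem_univ, true_and, not_disjoint_iff, xpv, mem_insert, mem_singleton,
      mem_union, mem_product] at h ⊢
    obtain ⟨x, rfl | rfl, hx⟩ := h <;> simp [hx]
  refine (card_le_card this).trans ((card_union_le _ _).trans ?_)
  rw [card_product, card_product, card_univ]
  apply le_of_eq; ring

lemma xp_cnt_trip {V : Type} [Fintype V] (X : Finset V) :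
    ((univ : Finset ((V × V) × V)).filter (fun p => ¬ Disjoint (xtv p) X)).card ≤
      3 * X.card * Fintype.card V ^ 2 := by
  have : (univ : Finset ((V × V) × V)).filter (fun p => ¬ Disjoint (xtv p) X) ⊆
      (X ×ˢ univ) ×ˢ univ ∪ (univ ×ˢ X) ×ˢ univ ∪ univ ×ˢ X := by
    rintro ⟨⟨a, b⟩, c⟩ h
    simp only [mem_filter, mem_univ, true_and, not_disjoint_iff, xtv, mem_insert, mem_singleton,
      mem_union, mem_product] at h ⊢
    obtain ⟨x, rfl | rfl | rfl, hx⟩ := h <;> simp [hx]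
  refine (card_le_card this).trans ((card_union_le _ _).trans
    ((Nat.add_le_add_right (card_union_le _ _) _).trans ?_))
  simp only [card_product, card_univ, Fintype.card_prod]
  apply le_of_eq; ring

lemma xtv_card {V : Type} (t : (V × V) × V) : (xtv t).card ≤ 3 := card_le_three
lemma xpv_card {V : Type} (t : V × V) : (xpv t).card ≤ 2 := card_le_two

lemma xp_classes {V : Type} [Fintype V] (R : V → V → V → Prop) (α ζ : ℝ) (hα : 0 < α)
    (hα1 : α ≤ 1) (hζ : 0 < ζ) (hV : 0 < Fintype.card V)
    (hdeg : ∀ v, α * (Fintype.card V : ℝ) ^ 2 ≤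
      ((univ : Finset (V × V)).filter (fun p => R v p.1 p.2)).card) :
    ∃ 𝒜 : Finset (Finset V), (∀ A ∈ 𝒜, ∀ B ∈ 𝒜, A ≠ B → Disjoint A B) ∧
      (∀ A ∈ 𝒜, α * ζ / 4 * (Fintype.card V : ℝ) ≤ A.card ∧ ∃ Q : Finset (V × V),
        α / 2 * (Fintype.card V : ℝ) ^ 2 ≤ Q.card ∧ ∀ v ∈ A, ∀ q ∈ Q,
          α ^ 5 * ζ / 128 * (Fintype.card V : ℝ) ^ 3 ≤
          (((univ : Finset ((V × V) × V)).filter (fun t => R v t.1.1 t.1.2 ∧ R t.2 t.1.1 t.1.2 ∧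
            R t.2 q.1 q.2)).card : ℝ)) ∧
      (((univ : Finset V) \ 𝒜.biUnion id).card : ℝ) < ζ * (Fintype.card V : ℝ) := by
  set n : ℝ := (Fintype.card V : ℝ) with hn
  have hn0 : 0 < n := by rw [hn]; exact_mod_cast hV
  let good : Finset V → Prop := fun A => α * ζ / 4 * n ≤ A.card ∧ ∃ Q : Finset (V × V),
        α / 2 * n ^ 2 ≤ Q.card ∧ ∀ v ∈ A, ∀ q ∈ Q,
          α ^ 5 * ζ / 128 * n ^ 3 ≤
          (((univ : Finset ((V × V) × V)).filter (fun t => R v t.1.1 t.1.2 ∧ R t.2 t.1.1 t.1.2 ∧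
            R t.2 q.1 q.2)).card : ℝ)
  let fam := (univ : Finset (Finset (Finset V))).filter (fun 𝒜 =>
    (∀ A ∈ 𝒜, ∀ B ∈ 𝒜, A ≠ B → Disjoint A B) ∧ ∀ A ∈ 𝒜, good A)
  have hfam : fam.Nonempty := ⟨∅, by simp [fam]⟩
  obtain ⟨𝒜, h𝒜, hmax⟩ := exists_max_image fam card hfam
  obtain ⟨h1, h2⟩ := (mem_filter.1 h𝒜).2
  refine ⟨𝒜, h1, h2, ?_⟩
  by_contra hcon
  push Not at hcon
  set Y := (univ : Finset V) \ 𝒜.biUnion id with hY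
  have hYn : Y.Nonempty := by
    rw [← card_pos]
    have : (0 : ℝ) < Y.card := lt_of_lt_of_le (by positivity) hcon
    exact_mod_cast this
  have hc2 : (Fintype.card (V × V) : ℝ) = n ^ 2 := by
    rw [Fintype.card_prod]; push_cast; rw [hn]; ring
  obtain ⟨A, hAY, hA, Q, hQ, hAQ⟩ := xp_class (fun v (p : V × V) => R v p.1 p.2) α hα hα1
    (by intro v; rw [hc2]; exact hdeg v) (by rw [Fintype.card_prod]; positivity) Y hYn
  rw [hc2] at hQ hAQ
  have hgA : good A := by
    refine ⟨?_, Q, hQ, fun v hv q hq => ?_⟩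
    · refine le_trans ?_ hA
      calc α * ζ / 4 * n = α / 4 * (ζ * n) := by ring
        _ ≤ _ := by gcongr
    · refine le_trans ?_ (hAQ v hv q hq)
      calc α ^ 5 * ζ / 128 * n ^ 3 = α ^ 5 / 128 * (ζ * n) * n ^ 2 := by ring
        _ ≤ _ := by gcongr
  have hAne : A.Nonempty := by
    rw [← card_pos]
    have : (0 : ℝ) < A.card := lt_of_lt_of_le (by positivity) hgA.1
    exact_mod_cast this
  have hdis : ∀ B ∈ 𝒜, Disjoint A B := by
    intro B hB
    rw [disjoint_left]
    intro x hx hxB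
    exact (mem_sdiff.1 (hAY hx)).2 (mem_biUnion.2 ⟨B, hB, hxB⟩)
  have hAn : A ∉ 𝒜 := fun h => by
    obtain ⟨x, hx⟩ := hAne
    exact disjoint_left.1 (hdis A h) hx hx
  have := hmax (insert A 𝒜) (mem_filter.2 ⟨mem_univ _, ?_, ?_⟩)
  · rw [card_insert_of_notMem hAn] at this; omega
  · intro B hB B' hB' hne
    rcases mem_insert.1 hB with hB1 | hB1 <;> rcases mem_insert.1 hB' with hB2 | hB2
    · exact absurd (hB1.trans hB2.symm) hne
    · rw [hB1]; exact hdis _ hB2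
    · rw [hB2]; exact (hdis _ hB1).symm
    · exact h1 _ hB1 _ hB2 hne
  · intro B hB
    rcases mem_insert.1 hB with rfl | hB
    · exact hgA
    · exact h2 _ hB

/-- Good pairs. -/
def XGP {V : Type} [Fintype V] (R : V → V → V → Prop) (c : ℝ) (p : V × V) : Prop :=
  c ^ 2 * (Fintype.card V : ℝ) ≤ (((univ : Finset V).filter (fun w =>
    XThick R c univ p.1 w ∧ XThick R c univ p.2 w)).card : ℝ)

lemma xp_gp {V : Type} [Fintype V] (R : V → V → V → Prop) (c ε : ℝ) (hc : 0 < c) (hc1 : c ≤ 1)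
    (hεc : ε ≤ c) (htyp : XTyp R c ε) :
    (((univ : Finset (V × V)).filter (fun p => ¬ XGP R c p)).card : ℝ) ≤
      2 * ε * (Fintype.card V : ℝ) ^ 2 := by
  set n : ℝ := (Fintype.card V : ℝ) with hn
  have hn0 : 0 ≤ n := by positivity
  let Bx : V → Finset V := fun x => univ.filter (fun w => XThick R c univ x w)
  let bad := (univ : Finset V).filter (fun x => ((Bx x).card : ℝ) < c * n)
  have hcu : ((univ : Finset V).card : ℝ) = n := by rw [card_univ]
  have hε1 : ε * n ≤ n := by nlinarith
  have hbad : (bad.card : ℝ) ≤ ε * n := by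
    have := htyp univ univ (by rw [hcu]; exact hε1) (by rw [hcu]; exact hε1)
    rw [hcu] at this
    exact this
  let bad2 : V → Finset V := fun x => univ.filter (fun y =>
    (((Bx x).filter (fun w => XThick R c univ y w)).card : ℝ) < c * (Bx x).card)
  have hbad2 : ∀ x, x ∉ bad → ((bad2 x).card : ℝ) ≤ ε * n := by
    intro x hx
    simp only [bad, mem_filter, mem_univ, true_and, not_lt] at hx
    exact htyp (Bx x) univ (le_trans (by rw [← hn]; gcongr) hx) (by rw [hcu]; exact hε1)
  have hsub : (univ : Finset (V × V)).filter (fun p => ¬ XGP R c p) ⊆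
      bad ×ˢ univ ∪ (badᶜ).biUnion (fun x => (bad2 x).image (fun y => (x, y))) := by
    rintro ⟨x, y⟩ h
    simp only [mem_filter, mem_univ, true_and, XGP, not_le] at h
    by_cases hx : x ∈ bad
    · exact mem_union_left _ (by simp [hx])
    · apply mem_union_right
      refine mem_biUnion.2 ⟨x, mem_compl.2 hx, mem_image.2 ⟨y, ?_, rfl⟩⟩
      simp only [bad2, mem_filter, mem_univ, true_and]
      simp only [bad, mem_filter, mem_univ, true_and, not_lt] at hx
      have e : (Bx x).filter (fun w => XThick R c univ y w) = (univ : Finset V).filter (fun w =>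
          XThick R c univ x w ∧ XThick R c univ y w) := by
        ext w; simp [Bx]
      rw [e]
      refine h.trans_le ?_
      rw [← hn]
      nlinarith
  have hle : (((univ : Finset (V × V)).filter (fun p => ¬ XGP R c p)).card : ℝ) ≤
      bad.card * n + ∑ x ∈ badᶜ, ((bad2 x).card : ℝ) := by
    have := (card_le_card hsub).trans (card_union_le _ _)
    rw [card_product, card_univ] at this
    have h2 : ((badᶜ).biUnion (fun x => (bad2 x).image (fun y => (x, y)))).card ≤
        ∑ x ∈ badᶜ, (bad2 x).card := card_biUnion_le.trans (sum_le_sum fun x _ => card_image_le)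
    rw [hn]
    exact_mod_cast this.trans (Nat.add_le_add_left h2 _)
  refine hle.trans ?_
  have h3 : ∑ x ∈ badᶜ, ((bad2 x).card : ℝ) ≤ n * (ε * n) := by
    calc _ ≤ ∑ x ∈ badᶜ, ε * n := sum_le_sum fun x hx => hbad2 x (mem_compl.1 hx)
      _ = ((badᶜ).card : ℝ) * (ε * n) := by rw [sum_const, nsmul_eq_mul]
      _ ≤ n * (ε * n) := by
        have : ((badᶜ).card : ℝ) ≤ n := by rw [hn]; exact_mod_cast card_le_univ _
        have h0 : 0 ≤ ε * n := (Nat.cast_nonneg _).trans hbad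
        exact mul_le_mul_of_nonneg_right this h0
  nlinarith

lemma xp_istar (κ γ : ℝ) (hκ : 0 < κ) (hκ1 : κ ≤ 1) (hγ : 0 < γ) (hγκ : γ ≤ κ / 36) :
    ∃ n0 : ℕ, ∀ (V Ω : Type) [Fintype V] [Fintype Ω] [Nonempty Ω]
      (S : Ω → Finset ((V × V) × V)), n0 ≤ Fintype.card V →
      Fintype.card Ω ≤ Fintype.card V ^ 3 →
      (∀ ω, 3 / 4 * κ * (Fintype.card V : ℝ) ^ 3 ≤ (S ω).card) →
      ∃ (m : ℕ) (f : Fin m → (V × V) × V), (m : ℝ) ≤ γ * (Fintype.card V : ℝ) ∧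
        (∀ i, ∃ ω, f i ∈ S ω) ∧ (∀ i j, i ≠ j → Disjoint (xtv (f i)) (xtv (f j))) ∧
        ∀ ω, κ * γ / 32 * (Fintype.card V : ℝ) ≤
          ((univ : Finset (Fin m)).filter (fun i => f i ∈ S ω)).card := by
  have hlog : ∀ᶠ n : ℕ in Filter.atTop, 3 * Real.log n ≤ κ * γ / 32 * n := by
    have h1 := (Real.isLittleO_log_id_atTop.comp_tendsto tendsto_natCast_atTop_atTop).bound
      (show 0 < κ * γ / 96 by positivity)
    filter_upwards [h1, Filter.eventually_ge_atTop 1] with n hn hn1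
    simp only [Function.comp_apply, id, Real.norm_eq_abs] at hn
    rw [abs_of_nonneg (Real.log_nonneg (by exact_mod_cast hn1)),
      abs_of_nonneg (Nat.cast_nonneg n)] at hn
    linarith
  have hbig : ∀ᶠ n : ℕ in Filter.atTop, 2 ≤ γ * (n : ℝ) :=
    (Filter.Tendsto.const_mul_atTop hγ tendsto_natCast_atTop_atTop).eventually_ge_atTop 2
  obtain ⟨n0, hn0⟩ := Filter.eventually_atTop.1 (hlog.and (hbig.and (Filter.eventually_ge_atTop 1)))
  refine ⟨n0, ?_⟩
  intro V Ω _ _ _ S hV hΩ hS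
  obtain ⟨hl, hg, hn1⟩ := hn0 _ hV
  set N := Fintype.card V with hN
  set n : ℝ := (N : ℝ) with hn
  have hnpos : (0 : ℝ) < n := by rw [hn]; exact_mod_cast hn1
  set m := ⌊γ * n⌋₊ with hm
  have hm1 : (m : ℝ) ≤ γ * n := Nat.floor_le (by positivity)
  have hm2 : γ * n / 2 ≤ m := by
    have := Nat.lt_floor_add_one (γ * n)
    rw [← hm] at this
    linarith
  have hT : Fintype.card ((V × V) × V) = N ^ 3 := by
    rw [Fintype.card_prod, Fintype.card_prod]; ring
  obtain ⟨f, hf1, hf2, hf3⟩ := xp_hits S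
    (fun t => (univ : Finset ((V × V) × V)).filter (fun p => ¬ Disjoint (xtv p) (xtv t)))
    (by
      intro s t h
      simp only [mem_filter, mem_univ, true_and] at h ⊢
      exact fun h' => h h'.symm)
    (9 * N ^ 2)
    (by
      intro t
      refine (xp_cnt_trip (xtv t)).trans ?_
      have := xtv_card t
      calc 3 * (xtv t).card * N ^ 2 ≤ 3 * 3 * N ^ 2 := by gcongr
        _ = _ := by ring)
    (κ / 4) (by positivity) (by rw [hT]; positivity) m
    (by
      intro ω
      refine le_trans ?_ (hS ω)
      rw [hT]
      push_cast
      rw [← hn]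
      have : 9 * n ^ 2 * (m : ℝ) ≤ 9 * n ^ 2 * (κ / 36 * n) := by
        gcongr
        exact hm1.trans (by gcongr)
      nlinarith [pow_pos hnpos 3])
    (by positivity) m le_rfl
  refine ⟨m, fun i => f i, hm1, fun i => hf1 i i.2, ?_, ?_⟩
  · intro i j hij
    have := hf2 i i.2 j j.2 (fun h => hij (Fin.ext h))
    simpa using this
  · intro ω
    have e1 : ((range m).filter (fun i => f i ∈ S ω)).card ≤
        ((univ : Finset (Fin m)).filter (fun i : Fin m => f i ∈ S ω)).card := by
      have : (range m).filter (fun i => f i ∈ S ω) ⊆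
          ((univ : Finset (Fin m)).filter (fun i : Fin m => f i ∈ S ω)).image Fin.val := by
        intro i hi
        obtain ⟨h1, h2⟩ := mem_filter.1 hi
        exact mem_image.2 ⟨⟨i, mem_range.1 h1⟩, by simpa using h2, rfl⟩
      exact (card_le_card this).trans card_image_le
    set h := ((range m).filter (fun i => f i ∈ S ω)).card with hh
    have e2 : (1 / 2 : ℝ) ^ h ≤ n ^ 3 * (1 - κ / 4 / 2) ^ m := by
      have e3 : (1 / 2 : ℝ) ^ h ≤
          ∑ ω, (1 / 2 : ℝ) ^ ((range m).filter (fun i => f i ∈ S ω)).card :=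
        single_le_sum (f := fun ω => (1 / 2 : ℝ) ^ ((range m).filter (fun i => f i ∈ S ω)).card)
          (fun _ _ => by positivity) (mem_univ ω)
      have hf4 : ∑ ω, (1 / 2 : ℝ) ^ ((range m).filter (fun i => f i ∈ S ω)).card ≤
          (Fintype.card Ω : ℝ) * (1 - κ / 4 / 2) ^ m := by convert hf3
      refine e3.trans (hf4.trans ?_)
      apply mul_le_mul_of_nonneg_right
      · rw [hn]; exact_mod_cast hΩ
      · apply pow_nonneg; linarith
    have e4 : (1 - κ / 4 / 2) ^ m ≤ Real.exp (-(κ / 8) * m) := by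
      rw [show -(κ / 8) * (m : ℝ) = (m : ℝ) * (-(κ / 8)) by ring, Real.exp_nat_mul]
      apply pow_le_pow_left₀ (by linarith)
      have := Real.add_one_le_exp (-(κ / 8))
      linarith
    have e5 : Real.exp (-(h : ℝ)) ≤ (1 / 2 : ℝ) ^ h := by
      rw [show -(h : ℝ) = (h : ℝ) * (-1) by ring, Real.exp_nat_mul]
      apply pow_le_pow_left₀ (Real.exp_pos _).le
      rw [Real.exp_neg, one_div]
      apply inv_anti₀ (by norm_num)
      have := Real.add_one_le_exp (1 : ℝ)
      linarith
    have e6 : n ^ 3 = Real.exp (3 * Real.log n) := by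
      rw [show 3 * Real.log n = ((3 : ℕ) : ℝ) * Real.log n by norm_num, Real.exp_nat_mul,
        Real.exp_log hnpos]
    have e7 : Real.exp (-(h : ℝ)) ≤ Real.exp (3 * Real.log n + -(κ / 8) * m) := by
      rw [Real.exp_add, ← e6]
      refine e5.trans (e2.trans ?_)
      gcongr
    have e8 := Real.exp_le_exp.1 e7
    have e9 : κ * (γ * n / 2) ≤ κ * m := by gcongr
    have e10 : (h : ℝ) ≤ ((univ : Finset (Fin m)).filter (fun i : Fin m => f i ∈ S ω)).card := by
      exact_mod_cast e1
    refine le_trans ?_ e10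
    linarith

structure XAbs {V : Type} [Fintype V] (R : V → V → V → Prop) (c : ℝ) (J ι : Type) [Fintype J]
    [Fintype ι] (p : ι → V × V) (C : Finset V) (A : J → Finset V) (r : ℕ) : Prop where
  gp : ∀ i, XGP R c (p i)
  pne : ∀ i, (p i).1 ≠ (p i).2
  pdis : ∀ i j, i ≠ j → Disjoint (xpv (p i)) (xpv (p j))
  pC : ∀ i, Disjoint (xpv (p i)) C
  pA : ∀ i j, Disjoint (xpv (p i)) (A j)
  CA : ∀ j, Disjoint C (A j)
  Adis : ∀ j j', j ≠ j' → Disjoint (A j) (A j')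
  cover : ∀ v, (∃ i, v ∈ xpv (p i)) ∨ v ∈ C ∨ ∃ j, v ∈ A j
  card : Fintype.card ι = C.card + Fintype.card J * r
  abs : ∀ Rs : J → Finset V, (∀ j, Rs j ⊆ A j) → (∀ j, r ≤ (Rs j).card) →
    ∃ g : ι → V, Function.Injective g ∧ (∀ i, R (p i).1 (p i).2 (g i)) ∧
      ∀ i, g i ∈ C ∨ ∃ j, g i ∈ Rs j

lemma xp_absfun {V J : Type} [Fintype V] [Nonempty V] [Fintype J] (R : V → V → V → Prop)
    (m r : ℕ) (f : Fin m → (V × V) × V) (Z : Finset V) (qs : J × Fin r → V × V)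
    (zs : {z // z ∈ Z} → V × V) (A : J → Finset V)
    (hc : ∀ i i', i ≠ i' → (f i).2 ≠ (f i').2) (hcZ : ∀ i, (f i).2 ∉ Z)
    (hcA : ∀ i j, (f i).2 ∉ A j) (hZA : ∀ z ∈ Z, ∀ j, z ∉ A j)
    (hA : ∀ j j', j ≠ j' → Disjoint (A j) (A j'))
    (hRf : ∀ i, R (f i).2 (f i).1.1 (f i).1.2)
    (hRz : ∀ z : {z // z ∈ Z}, R z (zs z).1 (zs z).2)
    (hits : ∀ j, ∀ v ∈ A j, ∀ l, Fintype.card J * r ≤ ((univ : Finset (Fin m)).filter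
      (fun i => R v (f i).1.1 (f i).1.2 ∧ R (f i).2 (qs (j, l)).1 (qs (j, l)).2)).card)
    (Rs : J → Finset V) (hRs : ∀ j, Rs j ⊆ A j) (hr : ∀ j, r ≤ (Rs j).card) :
    ∃ g : Fin m ⊕ ((J × Fin r) ⊕ {z // z ∈ Z}) → V, Function.Injective g ∧
      (∀ i, R (g i) (Sum.elim (fun i => (f i).1) (Sum.elim qs zs) i).1
        (Sum.elim (fun i => (f i).1) (Sum.elim qs zs) i).2) ∧
      ∀ i, ((∃ k, g i = (f k).2) ∨ g i ∈ Z) ∨ ∃ j, g i ∈ Rs j := by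
  have hv : ∀ j, ∃ v : Fin r → V, Function.Injective v ∧ ∀ l, v l ∈ Rs j := by
    intro j
    obtain ⟨T, hT, hTc⟩ := exists_subset_card_eq (hr j)
    exact ⟨fun l => (T.equivFinOfCardEq hTc).symm l,
      fun a b h => (T.equivFinOfCardEq hTc).symm.injective (Subtype.ext h),
      fun l => hT ((T.equivFinOfCardEq hTc).symm l).2⟩
  choose v hvinj hvmem using hv
  by_cases hm : Nonempty (Fin m)
  swap
  · -- no special triples : then there are no (j, l)
    have hE : ∀ s : J × Fin r, False := by
      rintro ⟨j, l⟩
      have h1 := hits j _ (hRs j (hvmem j l)) l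
      have h2 : (univ : Finset (Fin m)) = ∅ := by
        rw [univ_eq_empty_iff]; exact not_nonempty_iff.1 hm
      rw [h2, filter_empty, card_empty] at h1
      have h3 : 0 < Fintype.card J := Fintype.card_pos_iff.2 ⟨j⟩
      have h4 : 0 < r := l.pos
      have := Nat.mul_pos h3 h4
      omega
    refine ⟨Sum.elim (fun i => (f i).2) (Sum.elim (fun s => (hE s).elim) (fun z => z)), ?_, ?_, ?_⟩
    · rintro (i | s | z) (i' | s' | z') h
      · exact absurd ⟨i⟩ hm
      · exact absurd ⟨i⟩ hm
      · exact absurd ⟨i⟩ hm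
      · exact (hE s).elim
      · exact (hE s).elim
      · exact (hE s).elim
      · exact absurd ⟨i'⟩ hm
      · exact (hE s').elim
      · simp only [Sum.elim_inr] at h
        rw [Subtype.ext h]
    · rintro (i | s | z)
      · exact absurd ⟨i⟩ hm
      · exact (hE s).elim
      · exact hRz z
    · rintro (i | s | z)
      · exact absurd ⟨i⟩ hm
      · exact (hE s).elim
      · left; right; exact z.2
  let vv : J × Fin r → V := fun s => v s.1 s.2
  have hvvA : ∀ s, vv s ∈ A s.1 := fun s => hRs _ (hvmem _ _)
  have hvv : Function.Injective vv := by
    rintro ⟨j, l⟩ ⟨j', l'⟩ h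
    by_cases hj : j = j'
    · subst hj
      exact Prod.ext rfl (hvinj j h)
    · exfalso
      refine disjoint_left.1 (hA j j' hj) (hvvA (j, l)) ?_
      rw [h]; exact hvvA (j', l')
  obtain ⟨τ, hτ, hτinj⟩ := xp_sdr (univ : Finset (J × Fin r)) (fun s => (univ : Finset (Fin m)).filter
      (fun i => R (vv s) (f i).1.1 (f i).1.2 ∧ R (f i).2 (qs s).1 (qs s).2)) (by
    rintro ⟨j, l⟩ _
    rw [card_univ, Fintype.card_prod, Fintype.card_fin]
    exact hits j _ (hvvA (j, l)) l)
  have hτ1 : ∀ s, R (vv s) (f (τ s)).1.1 (f (τ s)).1.2 := fun s => (mem_filter.1 (hτ s (mem_univ _))).2.1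
  have hτ2 : ∀ s, R (f (τ s)).2 (qs s).1 (qs s).2 := fun s => (mem_filter.1 (hτ s (mem_univ _))).2.2
  have hτi : Function.Injective τ := fun a b h => hτinj (mem_coe.2 (mem_univ a)) (mem_coe.2 (mem_univ b)) h
  let g1 : Fin m → V := fun i => if h : ∃ s, τ s = i then vv h.choose else (f i).2
  have hg1a : ∀ s, g1 (τ s) = vv s := by
    intro s
    have h : ∃ s', τ s' = τ s := ⟨s, rfl⟩
    simp only [g1, dif_pos h]
    rw [hτi h.choose_spec]
  have hg1b : ∀ i, (¬ ∃ s, τ s = i) → g1 i = (f i).2 := fun i h => dif_neg h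
  have hcinj : ∀ i i', (f i).2 = (f i').2 → i = i' := by
    intro i i' h
    by_contra hne
    exact hc i i' hne h
  refine ⟨Sum.elim g1 (Sum.elim (fun s => (f (τ s)).2) (fun z => z)), ?_, ?_, ?_⟩
  · rintro (i | s | z) (i' | s' | z') h
    · simp only [Sum.elim_inl] at h
      congr 1
      by_cases h1 : ∃ s, τ s = i <;> by_cases h2 : ∃ s, τ s = i'
      · obtain ⟨s, rfl⟩ := h1
        obtain ⟨s', rfl⟩ := h2
        rw [hg1a, hg1a] at h
        rw [hvv h]
      · obtain ⟨s, rfl⟩ := h1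
        rw [hg1a, hg1b i' h2] at h
        exact absurd (h ▸ hvvA s) (hcA i' s.1)
      · obtain ⟨s', rfl⟩ := h2
        rw [hg1a, hg1b i h1] at h
        exact absurd (h ▸ hvvA s') (hcA i s'.1)
      · rw [hg1b i h1, hg1b i' h2] at h
        exact hcinj _ _ h
    · simp only [Sum.elim_inl, Sum.elim_inr] at h
      exfalso
      by_cases h1 : ∃ s, τ s = i
      · obtain ⟨s, rfl⟩ := h1
        rw [hg1a] at h
        exact absurd (h ▸ hvvA s) (hcA _ s.1)
      · rw [hg1b i h1] at h
        exact h1 ⟨s', (hcinj _ _ h).symm⟩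
    · simp only [Sum.elim_inl, Sum.elim_inr] at h
      exfalso
      by_cases h1 : ∃ s, τ s = i
      · obtain ⟨s, rfl⟩ := h1
        rw [hg1a] at h
        exact hZA z' z'.2 s.1 (h ▸ hvvA s)
      · rw [hg1b i h1] at h
        exact hcZ i (h ▸ z'.2)
    · simp only [Sum.elim_inl, Sum.elim_inr] at h
      exfalso
      by_cases h1 : ∃ s, τ s = i'
      · obtain ⟨s', rfl⟩ := h1
        rw [hg1a] at h
        exact absurd (h ▸ hvvA s') (hcA _ s'.1)
      · rw [hg1b i' h1] at h
        exact h1 ⟨s, (hcinj _ _ h)⟩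
    · simp only [Sum.elim_inl, Sum.elim_inr] at h
      rw [hτi (hcinj _ _ h)]
    · simp only [Sum.elim_inl, Sum.elim_inr] at h
      exact absurd (h ▸ z'.2) (hcZ (τ s))
    · simp only [Sum.elim_inl, Sum.elim_inr] at h
      exfalso
      by_cases h1 : ∃ s, τ s = i'
      · obtain ⟨s, rfl⟩ := h1
        rw [hg1a] at h
        exact hZA z z.2 s.1 (h ▸ hvvA s)
      · rw [hg1b i' h1] at h
        exact hcZ i' (h ▸ z.2)
    · simp only [Sum.elim_inl, Sum.elim_inr] at h
      exact absurd (h ▸ z.2) (hcZ (τ s'))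
    · simp only [Sum.elim_inl, Sum.elim_inr] at h
      rw [Subtype.ext h]
  · rintro (i | s | z)
    · simp only [Sum.elim_inl]
      by_cases h1 : ∃ s, τ s = i
      · obtain ⟨s, rfl⟩ := h1
        rw [hg1a]; exact hτ1 s
      · rw [hg1b i h1]; exact hRf i
    · exact hτ2 s
    · exact hRz z
  · rintro (i | s | z)
    · simp only [Sum.elim_inl]
      by_cases h1 : ∃ s, τ s = i
      · obtain ⟨s, rfl⟩ := h1
        rw [hg1a]; right; exact ⟨s.1, hvmem _ _⟩
      · rw [hg1b i h1]; left; left; exact ⟨i, rfl⟩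
    · left; left; exact ⟨τ s, rfl⟩
    · left; right; exact z.2

set_option maxHeartbeats 4000000 in
lemma xp_absorber (α ζ c : ℝ) (hα : 0 < α) (hα1 : α ≤ 1) (hζ : 0 < ζ) (hζα : ζ ≤ α / 80)
    (hc : 0 < c) (hc1 : c ≤ 1) :
    ∃ (ρ ε0 : ℝ) (n0 : ℕ), 0 < ρ ∧ 0 < ε0 ∧
      ∀ (V : Type) [Fintype V] (R : V → V → V → Prop) (ε : ℝ), n0 ≤ Fintype.card V →
      (∀ x y z, R x y z → R y z x) →
      (∀ x y z, R x y z → x ≠ y ∧ y ≠ z ∧ x ≠ z) → ε ≤ ε0 → XTyp R c ε →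
      (∀ v, α * (Fintype.card V : ℝ) ^ 2 ≤
        ((univ : Finset (V × V)).filter (fun p => R v p.1 p.2)).card) →
      ∃ (J ι : Type) (_ : Fintype J) (_ : Fintype ι) (p : ι → V × V) (C : Finset V)
        (A : J → Finset V) (r : ℕ), Nonempty J ∧ XAbs R c J ι p C A r ∧
        ρ * (Fintype.card V : ℝ) ≤ r ∧ (Fintype.card ι : ℝ) ≤ 3 * ζ * (Fintype.card V : ℝ) ∧
        ∀ j, 2 * r ≤ (A j).card := by
  set κ : ℝ := α ^ 5 * ζ / 128 with hκ
  set γ : ℝ := α ^ 5 * ζ / 10000 with hγ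
  set δ : ℝ := α * ζ / 4 with hδ
  set ρ : ℝ := δ * κ * γ / 64 with hρ
  have hκ0 : 0 < κ := by positivity
  have hγ0 : 0 < γ := by positivity
  have hδ0 : 0 < δ := by positivity
  have hρ0 : 0 < ρ := by positivity
  have hα5 : α ^ 5 ≤ 1 := pow_le_one₀ hα.le hα1
  have hα52 : α ^ 5 ≤ α ^ 2 := pow_le_pow_of_le_one hα.le hα1 (by norm_num)
  have hα5ζ : α ^ 5 * ζ ≤ ζ := by nlinarith
  have hα5ζ0 : 0 < α ^ 5 * ζ := by positivity
  have hκ1 : κ ≤ 1 := by rw [hκ]; linarith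
  have hγκ : γ ≤ κ / 36 := by rw [hγ, hκ]; linarith
  have hγζ : γ ≤ ζ := by rw [hγ]; linarith
  have hγδ : 3 * γ ≤ α * δ / 64 := by
    rw [hγ, hδ]
    have : α ^ 5 * ζ ≤ α ^ 2 * ζ := by gcongr
    nlinarith
  clear_value ρ δ γ κ
  obtain ⟨n1, hn1⟩ := xp_istar κ γ hκ0 hκ1 hγ0 hγκ
  refine ⟨ρ, min (κ / 8) c, max (max n1 1) (max ⌈32 / (α * δ)⌉₊ ⌈1 / ρ⌉₊), hρ0,
    by positivity, ?_⟩
  intro V _ R ε hV hrot hdist hε htyp hdeg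
  have hVn1 : n1 ≤ Fintype.card V := (le_max_left _ _).trans ((le_max_left _ _).trans hV)
  have hV1 : 1 ≤ Fintype.card V := (le_max_right _ _).trans ((le_max_left _ _).trans hV)
  have hV2 : 32 / (α * δ) ≤ (Fintype.card V : ℝ) :=
    Nat.ceil_le.1 ((le_max_left _ _).trans ((le_max_right _ _).trans hV))
  have hV3 : 1 / ρ ≤ (Fintype.card V : ℝ) :=
    Nat.ceil_le.1 ((le_max_right _ _).trans ((le_max_right _ _).trans hV))
  set n : ℝ := (Fintype.card V : ℝ) with hn
  have hn0 : 0 < n := by rw [hn]; exact_mod_cast hV1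
  have hV2' : 32 ≤ α * δ * n := by
    rw [div_le_iff₀ (by positivity)] at hV2; linarith
  have hV3' : 1 ≤ ρ * n := by
    rw [div_le_iff₀ hρ0] at hV3; linarith
  have : Nonempty V := Fintype.card_pos_iff.1 hV1
  have hε1 : ε ≤ κ / 8 := hε.trans (min_le_left _ _)
  have hε2 : ε ≤ c := hε.trans (min_le_right _ _)
  have hgp := xp_gp R c ε hc hc1 hε2 htyp
  rw [← hn] at hgp
  obtain ⟨𝒜, h𝒜dis, h𝒜, hrem⟩ := xp_classes R α ζ hα hα1 hζ hV1 hdeg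
  rw [← hn] at hrem
  rw [← hn, ← hδ, ← hκ] at h𝒜
  let J := {A // A ∈ 𝒜}
  let A0 : J → Finset V := fun j => j.1
  have hA0dis : ∀ j j' : J, j ≠ j' → Disjoint (A0 j) (A0 j') := fun j j' h =>
    h𝒜dis _ j.2 _ j'.2 (fun h' => h (Subtype.ext h'))
  have hA0 : ∀ j : J, δ * n ≤ (A0 j).card := fun j => (h𝒜 _ j.2).1
  have hQ : ∀ j : J, ∃ Q : Finset (V × V),
        α / 2 * n ^ 2 ≤ Q.card ∧ ∀ v ∈ A0 j, ∀ q ∈ Q,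
          κ * n ^ 3 ≤
          (((univ : Finset ((V × V) × V)).filter (fun t => R v t.1.1 t.1.2 ∧ R t.2 t.1.1 t.1.2 ∧
            R t.2 q.1 q.2)).card : ℝ) := fun j => (h𝒜 _ j.2).2
  choose Q hQc hQe using hQ
  have hJne : Nonempty J := by
    by_contra hne
    have : 𝒜 = ∅ := by
      rw [eq_empty_iff_forall_notMem]
      exact fun A hA => hne ⟨⟨A, hA⟩⟩
    rw [this] at hrem
    simp only [biUnion_empty, sdiff_empty, card_univ] at hrem
    rw [← hn] at hrem
    have h1 : ζ * n ≤ 1 * n := by gcongr; linarith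
    linarith
  -- events
  let cnt : V × (V × V) → Finset ((V × V) × V) := fun ω =>
    (univ : Finset ((V × V) × V)).filter (fun t => R ω.1 t.1.1 t.1.2 ∧ R t.2 t.1.1 t.1.2 ∧
            R t.2 ω.2.1 ω.2.2)
  let Ω := {ω : V × (V × V) // κ * n ^ 3 ≤ ((cnt ω).card : ℝ)}
  have hΩne : Nonempty Ω := by
    obtain ⟨j⟩ := hJne
    have h1 : (0 : ℝ) < (A0 j).card := lt_of_lt_of_le (by positivity) (hA0 j)
    have h2 : (0 : ℝ) < (Q j).card := lt_of_lt_of_le (by positivity) (hQc j)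
    obtain ⟨v, hv⟩ := card_pos.1 (show 0 < (A0 j).card by exact_mod_cast h1)
    obtain ⟨q, hq⟩ := card_pos.1 (show 0 < (Q j).card by exact_mod_cast h2)
    exact ⟨⟨(v, q), hQe j v hv q hq⟩⟩
  let S : Ω → Finset ((V × V) × V) := fun ω => (cnt ω.1).filter (fun t => XGP R c t.1)
  have hS : ∀ ω, 3 / 4 * κ * n ^ 3 ≤ ((S ω).card : ℝ) := by
    intro ω
    have e1 : cnt ω.1 ⊆ S ω ∪ ((univ : Finset (V × V)).filter (fun p => ¬ XGP R c p)) ×ˢ univ := by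
      intro t ht
      by_cases h : XGP R c t.1
      · exact mem_union_left _ (mem_filter.2 ⟨ht, h⟩)
      · exact mem_union_right _ (by simp [h])
    have e2 := (card_le_card e1).trans (card_union_le _ _)
    rw [card_product, card_univ] at e2
    have e3 : ((cnt ω.1).card : ℝ) ≤ (S ω).card +
        ((univ : Finset (V × V)).filter (fun p => ¬ XGP R c p)).card * n := by
      have e2' : ((cnt ω.1).card : ℝ) ≤ (S ω).card +
        ((univ : Finset (V × V)).filter (fun p => ¬ XGP R c p)).card * (Fintype.card V : ℝ) := by
        exact_mod_cast e2
      exact e2'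
    have e4 : (((univ : Finset (V × V)).filter (fun p => ¬ XGP R c p)).card : ℝ) * n ≤
        2 * ε * n ^ 2 * n := by gcongr
    have e5 := ω.2
    have e6 : 2 * ε * n ^ 2 * n ≤ κ / 4 * n ^ 3 := by
      have : 2 * ε ≤ κ / 4 := by linarith
      calc 2 * ε * n ^ 2 * n = 2 * ε * n ^ 3 := by ring
        _ ≤ _ := by gcongr
    linarith
  obtain ⟨m, f, hm, hfS, hfdis, hfhit⟩ := hn1 V Ω S hVn1 (by
    refine (Fintype.card_subtype_le _).trans ?_
    rw [Fintype.card_prod, Fintype.card_prod]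
    apply le_of_eq; ring) hS
  rw [← hn] at hm hfhit
  have hfR : ∀ i, R (f i).2 (f i).1.1 (f i).1.2 ∧ XGP R c (f i).1 := by
    intro i
    obtain ⟨ω, hω⟩ := hfS i
    have h1 := mem_filter.1 hω
    exact ⟨(mem_filter.1 h1.1).2.2.1, h1.2⟩
  let Vm : Finset V := univ.biUnion (fun i => xtv (f i))
  have hVm : (Vm.card : ℝ) ≤ 3 * (γ * n) := by
    have : Vm.card ≤ 3 * m := by
      calc Vm.card ≤ ∑ i : Fin m, (xtv (f i)).card := card_biUnion_le
        _ ≤ ∑ i : Fin m, 3 := sum_le_sum fun i _ => xtv_card _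
        _ = 3 * m := by simp [mul_comm]
    have : (Vm.card : ℝ) ≤ 3 * m := by exact_mod_cast this
    linarith
  have hVmem : ∀ i, ∀ v ∈ xtv (f i), v ∈ Vm := fun i v hv => mem_biUnion.2 ⟨i, mem_univ _, hv⟩
  have hc_mem : ∀ i, (f i).2 ∈ xtv (f i) := fun i => by simp [xtv]
  have hp_sub : ∀ i, xpv (f i).1 ⊆ xtv (f i) := fun i => by
    intro v hv
    simp only [xpv, xtv, mem_insert, mem_singleton] at hv ⊢
    tauto
  -- reserves
  have hB : ∀ j, ∃ B ⊆ A0 j, B.card = ⌊α / 16 * ((A0 j).card : ℝ)⌋₊ := by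
    intro j
    apply exists_subset_card_eq
    apply Nat.floor_le_of_le
    calc α / 16 * ((A0 j).card : ℝ) ≤ 1 * ((A0 j).card : ℝ) := by gcongr; linarith
      _ = _ := one_mul _
  choose B hBA hBc using hB
  have hBle : ∀ j, ((B j).card : ℝ) ≤ α / 16 * (A0 j).card := fun j => by
    rw [hBc]; exact Nat.floor_le (by positivity)
  have hBge : ∀ j, α * δ / 32 * n ≤ ((B j).card : ℝ) := fun j => by
    have h1 := Nat.lt_floor_add_one (α / 16 * ((A0 j).card : ℝ))
    rw [← hBc] at h1
    have h2 : α / 16 * (δ * n) ≤ α / 16 * (A0 j).card := by gcongr; exact hA0 j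
    linarith
  have hsumA : ∑ j, ((A0 j).card : ℝ) ≤ n := by
    have : (univ.biUnion A0).card = ∑ j, (A0 j).card :=
      card_biUnion fun j _ j' _ h => hA0dis j j' h
    rw [hn]
    exact_mod_cast this ▸ card_le_univ (univ.biUnion A0)
  let Bt : Finset V := univ.biUnion B
  have hBt : (Bt.card : ℝ) ≤ α / 16 * n := by
    calc (Bt.card : ℝ) ≤ ∑ j, ((B j).card : ℝ) := by exact_mod_cast card_biUnion_le
      _ ≤ ∑ j, α / 16 * ((A0 j).card : ℝ) := sum_le_sum fun j _ => hBle j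
      _ = α / 16 * ∑ j, ((A0 j).card : ℝ) := by rw [mul_sum]
      _ ≤ _ := by gcongr
  have hJc : (Fintype.card J : ℝ) * δ ≤ 1 := by
    have : (Fintype.card J : ℝ) * (δ * n) ≤ n := by
      calc (Fintype.card J : ℝ) * (δ * n) = ∑ j : J, δ * n := by
            rw [sum_const, nsmul_eq_mul, card_univ]
        _ ≤ ∑ j, ((A0 j).card : ℝ) := sum_le_sum fun j _ => hA0 j
        _ ≤ n := hsumA
    have h : (Fintype.card J * δ) * n ≤ 1 * n := by linarith
    exact le_of_mul_le_mul_right h hn0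
  let r := ⌊2 * ρ * n⌋₊
  have hr1 : (r : ℝ) ≤ 2 * ρ * n := Nat.floor_le (by positivity)
  have hr2 : ρ * n ≤ r := by
    have : 2 * ρ * n < (r : ℝ) + 1 := Nat.lt_floor_add_one (2 * ρ * n)
    linarith
  have hJr : (Fintype.card J : ℝ) * r ≤ κ * γ / 32 * n := by
    calc (Fintype.card J : ℝ) * r ≤ Fintype.card J * (2 * ρ * n) := by gcongr
      _ = (Fintype.card J * δ) * (κ * γ / 32 * n) := by rw [hρ]; ring
      _ ≤ 1 * (κ * γ / 32 * n) := by gcongr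
      _ = _ := one_mul _
  have hJr2 : (Fintype.card J : ℝ) * r ≤ ζ * n := by
    refine hJr.trans ?_
    have : κ * γ / 32 ≤ ζ := by
      have h1 : κ * γ ≤ 1 * γ := by gcongr
      linarith
    gcongr
  let Z0 : Finset V := (univ : Finset V) \ 𝒜.biUnion id
  have hZ0A : ∀ z ∈ Z0, ∀ j, z ∉ A0 j := fun z hz j hj =>
    (mem_sdiff.1 hz).2 (mem_biUnion.2 ⟨j.1, j.2, hj⟩)
  let Z : Finset V := Z0 \ Vm
  have hZc : (Z.card : ℝ) ≤ ζ * n := by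
    have : (Z.card : ℝ) ≤ Z0.card := by exact_mod_cast card_le_card sdiff_subset
    exact this.trans hrem.le
  let X0 : Finset V := Bt ∪ Z0 ∪ Vm
  have hX0 : (X0.card : ℝ) ≤ α / 16 * n + ζ * n + 3 * (γ * n) := by
    have : X0.card ≤ Bt.card + Z0.card + Vm.card :=
      (card_union_le _ _).trans (Nat.add_le_add_right (card_union_le _ _) _)
    have : (X0.card : ℝ) ≤ Bt.card + Z0.card + Vm.card := by exact_mod_cast this
    have h2 : (Z0.card : ℝ) ≤ ζ * n := hrem.le
    linarith
  let I := (J × Fin r) ⊕ {z // z ∈ Z}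
  have hIc : (Fintype.card I : ℝ) = (Fintype.card J : ℝ) * r + Z.card := by
    rw [Fintype.card_sum, Fintype.card_prod, Fintype.card_fin]; push_cast; simp [J]
  let base : I → Finset (V × V) := Sum.elim (fun s => Q s.1)
    (fun z => (univ : Finset (V × V)).filter (fun p => R z p.1 p.2))
  have hbase : ∀ i, α / 2 * n ^ 2 ≤ ((base i).card : ℝ) := by
    rintro (s | z)
    · exact hQc s.1
    · refine le_trans ?_ (hdeg z)
      have : 0 ≤ α * n ^ 2 := by positivity
      linarith
  let F : I → Finset (V × V) := fun i => (base i).filter (fun p => XGP R c p ∧ Disjoint (xpv p) X0)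
  have hF : ∀ i, 4 * Fintype.card V * Fintype.card I < (F i).card := by
    intro i
    have e1 : base i ⊆ F i ∪ ((univ : Finset (V × V)).filter (fun p => ¬ XGP R c p) ∪
        (univ : Finset (V × V)).filter (fun p => ¬ Disjoint (xpv p) X0)) := by
      intro p hp
      simp only [F, mem_union, mem_filter, mem_univ, true_and]
      tauto
    have e2 := (card_le_card e1).trans ((card_union_le _ _).trans
      (Nat.add_le_add_left (card_union_le _ _) _))
    have e3 := xp_cnt_pair X0
    have e4 : ((base i).card : ℝ) ≤ (F i).card +
        (((univ : Finset (V × V)).filter (fun p => ¬ XGP R c p)).card + 2 * X0.card * n) := by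
      rw [hn]
      exact_mod_cast e2.trans (Nat.add_le_add_left (Nat.add_le_add_left e3 _) _)
    have e5 := hbase i
    have e6 : 2 * (X0.card : ℝ) * n ≤ 2 * (α / 16 * n + ζ * n + 3 * (γ * n)) * n := by gcongr
    have e7 : 4 * n * (Fintype.card I : ℝ) ≤ 4 * n * (2 * ζ * n) := by
      gcongr; rw [hIc]; linarith
    have e8 : 4 * n * (Fintype.card I : ℝ) < (F i).card := by
      have hκα : κ ≤ α / 80 := by rw [hκ]; linarith
      have hγα : γ ≤ α / 800 := by rw [hγ]; linarith
      have e9 : 0 < (α / 2 - 2 * ε - 2 * (α / 16 + ζ + 3 * γ) - 8 * ζ) * n ^ 2 := by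
        apply mul_pos _ (by positivity)
        linarith
      have e10 : 2 * (α / 16 * n + ζ * n + 3 * (γ * n)) * n =
        2 * (α / 16 + ζ + 3 * γ) * n ^ 2 := by ring
      have e11 : 4 * n * (2 * ζ * n) = 8 * ζ * n ^ 2 := by ring
      have e12 : (α / 2 - 2 * ε - 2 * (α / 16 + ζ + 3 * γ) - 8 * ζ) * n ^ 2 = α / 2 * n ^ 2
        - 2 * ε * n ^ 2 - 2 * (α / 16 + ζ + 3 * γ) * n ^ 2 - 8 * ζ * n ^ 2 := by ring
      linarith
    rw [hn] at e8
    exact_mod_cast e8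
  obtain ⟨qz, hqz, hqzdis⟩ := xp_greedy (univ : Finset I) F
    (fun t => (univ : Finset (V × V)).filter (fun p => ¬ Disjoint (xpv p) (xpv t)))
    (by
      intro s t h
      simp only [mem_filter, mem_univ, true_and] at h ⊢
      exact fun h' => h h'.symm)
    (4 * Fintype.card V)
    (by
      intro t
      refine (xp_cnt_pair (xpv t)).trans ?_
      have := xpv_card t
      calc 2 * (xpv t).card * Fintype.card V ≤ 2 * 2 * Fintype.card V := by gcongr
        _ = _ := by ring)
    (fun i _ => by rw [card_univ]; exact hF i)
  have hq1 : ∀ i, qz i ∈ base i := fun i => (mem_filter.1 (hqz i (mem_univ _))).1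
  have hq2 : ∀ i, XGP R c (qz i) := fun i => (mem_filter.1 (hqz i (mem_univ _))).2.1
  have hq3 : ∀ i, Disjoint (xpv (qz i)) X0 := fun i => (mem_filter.1 (hqz i (mem_univ _))).2.2
  have hq4 : ∀ i j, i ≠ j → Disjoint (xpv (qz i)) (xpv (qz j)) := by
    intro i j hij
    have := hqzdis i (mem_univ _) j (mem_univ _) hij
    simpa using this
  have hq5 : ∀ i, (qz i).1 ≠ (qz i).2 := by
    rintro (s | z)
    · have h1 := hq1 (Sum.inl s)
      have h2 : (0 : ℝ) < (A0 s.1).card := lt_of_lt_of_le (by positivity) (hA0 s.1)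
      obtain ⟨v, hv⟩ := card_pos.1 (show 0 < (A0 s.1).card by exact_mod_cast h2)
      have h3 := hQe s.1 v hv _ h1
      have h4 : (0 : ℝ) < κ * n ^ 3 := by positivity
      have h5 := h4.trans_le h3
      obtain ⟨t, ht⟩ := card_pos.1 (Nat.cast_pos.1 h5)
      exact (hdist _ _ _ (mem_filter.1 ht).2.2.2).2.1
    · have h1 := hq1 (Sum.inr z)
      exact (hdist _ _ _ (mem_filter.1 h1).2).2.1
  let Vq : Finset V := univ.biUnion (fun i => xpv (qz i))
  let A : J → Finset V := fun j => A0 j \ (Vm ∪ Vq)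
  let C : Finset V := univ.image (fun i => (f i).2) ∪ Z
  let qs : J × Fin r → V × V := fun s => qz (Sum.inl s)
  let zs : {z // z ∈ Z} → V × V := fun z => qz (Sum.inr z)
  let p : Fin m ⊕ I → V × V := Sum.elim (fun i => (f i).1) (Sum.elim qs zs)
  have hpr : ∀ i : I, p (Sum.inr i) = qz i := by
    rintro (s | z) <;> rfl
  have hpl : ∀ i, p (Sum.inl i) = (f i).1 := fun i => rfl
  have hCX : C ⊆ X0 := by
    intro v hv
    rcases mem_union.1 hv with hv | hv
    · obtain ⟨i, -, rfl⟩ := mem_image.1 hv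
      exact mem_union_right _ (hVmem i _ (hc_mem i))
    · exact mem_union_left _ (mem_union_right _ (mem_sdiff.1 hv).1)
  have hcne : ∀ i i', i ≠ i' → (f i).2 ≠ (f i').2 := by
    intro i i' hne h
    exact disjoint_left.1 (hfdis i i' hne) (hc_mem i) (h ▸ hc_mem i')
  have hcZ : ∀ i, (f i).2 ∉ Z := fun i h => (mem_sdiff.1 h).2 (hVmem i _ (hc_mem i))
  have hAdis : ∀ j j', j ≠ j' → Disjoint (A j) (A j') := fun j j' h =>
    disjoint_of_subset_left sdiff_subset (disjoint_of_subset_right sdiff_subset (hA0dis j j' h))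
  have hcA : ∀ i j, (f i).2 ∉ A j := fun i j h =>
    (mem_sdiff.1 h).2 (mem_union_left _ (hVmem i _ (hc_mem i)))
  have hZA : ∀ z ∈ Z, ∀ j, z ∉ A j := fun z hz j h =>
    hZ0A z (mem_sdiff.1 hz).1 j (mem_sdiff.1 h).1
  refine ⟨J, Fin m ⊕ I, inferInstance, inferInstance, p, C, A, r, hJne, ?_, hr2, ?_, ?_⟩
  · constructor
    · rintro (i | i)
      · exact (hfR i).2
      · rw [hpr]; exact hq2 i
    · rintro (i | i)
      · exact (hdist _ _ _ (hfR i).1).2.1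
      · rw [hpr]; exact hq5 i
    · rintro (i | i) (i' | i') hne
      · exact disjoint_of_subset_left (hp_sub i) (disjoint_of_subset_right (hp_sub i')
          (hfdis i i' (fun h => hne (by rw [h]))))
      · rw [hpr, hpl]
        refine (disjoint_of_subset_right ?_ (hq3 i')).symm
        exact fun v hv => mem_union_right _ (hVmem i v (hp_sub i hv))
      · rw [hpr, hpl]
        refine (disjoint_of_subset_right ?_ (hq3 i))
        exact fun v hv => mem_union_right _ (hVmem i' v (hp_sub i' hv))
      · rw [hpr, hpr]
        exact hq4 i i' (fun h => hne (by rw [h]))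
    · rintro (i | i)
      · rw [hpl, disjoint_left]
        intro v hv hvC
        rcases mem_union.1 hvC with hvC | hvC
        · obtain ⟨i', -, rfl⟩ := mem_image.1 hvC
          by_cases hii : i = i'
          · subst hii
            have := hdist _ _ _ (hfR i).1
            simp only [xpv, mem_insert, mem_singleton] at hv
            rcases hv with hv | hv
            · exact this.1 hv
            · exact this.2.2 hv
          · exact disjoint_left.1 (hfdis i i' hii) (hp_sub i hv) (hc_mem i')
        · exact (mem_sdiff.1 hvC).2 (hVmem i v (hp_sub i hv))
      · rw [hpr]; exact disjoint_of_subset_right hCX (hq3 i)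
    · rintro (i | i) j
      · rw [hpl, disjoint_left]
        intro v hv hvA
        exact (mem_sdiff.1 hvA).2 (mem_union_left _ (hVmem i v (hp_sub i hv)))
      · rw [hpr, disjoint_left]
        intro v hv hvA
        exact (mem_sdiff.1 hvA).2 (mem_union_right _ (mem_biUnion.2 ⟨i, mem_univ _, hv⟩))
    · intro j
      rw [disjoint_left]
      intro v hv hvA
      rcases mem_union.1 hv with hv | hv
      · obtain ⟨i, -, rfl⟩ := mem_image.1 hv
        exact hcA i j hvA
      · exact hZA v hv j hvA
    · exact hAdis
    · intro v
      by_cases h1 : v ∈ Vm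
      · obtain ⟨i, -, hi⟩ := mem_biUnion.1 h1
        simp only [xtv, mem_insert, mem_singleton] at hi
        rcases hi with hi | hi | hi
        · left; exact ⟨Sum.inl i, by rw [hpl, xpv]; simp [hi]⟩
        · left; exact ⟨Sum.inl i, by rw [hpl, xpv]; simp [hi]⟩
        · right; left; exact mem_union_left _ (mem_image.2 ⟨i, mem_univ _, hi.symm⟩)
      · by_cases h2 : v ∈ Z0
        · right; left; exact mem_union_right _ (mem_sdiff.2 ⟨h2, h1⟩)
        · by_cases h3 : v ∈ Vq
          · obtain ⟨i, -, hi⟩ := mem_biUnion.1 h3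
            left; exact ⟨Sum.inr i, by rw [hpr]; exact hi⟩
          · right; right
            have : v ∈ 𝒜.biUnion id := by
              by_contra h
              exact h2 (mem_sdiff.2 ⟨mem_univ _, h⟩)
            obtain ⟨A', hA', hvA'⟩ := mem_biUnion.1 this
            refine ⟨⟨A', hA'⟩, mem_sdiff.2 ⟨hvA', ?_⟩⟩
            rw [mem_union]; tauto
    · have e1 : C.card = m + Z.card := by
        rw [card_union_of_disjoint, card_image_of_injective, card_univ, Fintype.card_fin]
        · intro i i' h
          by_contra hne
          exact hcne i i' hne h
        · rw [disjoint_left]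
          intro v hv
          obtain ⟨i, -, rfl⟩ := mem_image.1 hv
          exact hcZ i
      rw [e1]
      simp only [I, Fintype.card_sum, Fintype.card_prod, Fintype.card_fin, Fintype.card_coe]
      ring
    · intro Rs hRs hr
      obtain ⟨g, hg1, hg2, hg3⟩ := xp_absfun R m r f Z qs zs A hcne hcZ hcA hZA hAdis
        (fun i => (hfR i).1)
        (by
          intro z
          have h1 := hq1 (Sum.inr z)
          exact (mem_filter.1 h1).2)
        (by
          intro j v hv l
          have hq := hq1 (Sum.inl (j, l))
          have hω := hQe j v (mem_sdiff.1 hv).1 _ hq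
          have h1 := hfhit ⟨(v, qz (Sum.inl (j, l))), hω⟩
          have h2 : ((univ : Finset (Fin m)).filter
              (fun i => f i ∈ S ⟨(v, qz (Sum.inl (j, l))), hω⟩)).card ≤
              ((univ : Finset (Fin m)).filter (fun i => R v (f i).1.1 (f i).1.2 ∧
                R (f i).2 (qs (j, l)).1 (qs (j, l)).2)).card := by
            apply card_le_card
            intro i hi
            have h3 := (mem_filter.1 (mem_filter.1 (mem_filter.1 hi).2).1).2
            exact mem_filter.2 ⟨mem_univ _, h3.1, h3.2.2⟩
          have h3 : ((Fintype.card J * r : ℕ) : ℝ) ≤ (((univ : Finset (Fin m)).filter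
              (fun i => f i ∈ S ⟨(v, qz (Sum.inl (j, l))), hω⟩)).card : ℝ) := by
            push_cast
            exact hJr.trans h1
          have h4 : Fintype.card J * r ≤ ((univ : Finset (Fin m)).filter
              (fun i => f i ∈ S ⟨(v, qz (Sum.inl (j, l))), hω⟩)).card := by exact_mod_cast h3
          exact h4.trans h2)
        Rs hRs hr
      refine ⟨g, hg1, fun i => hrot _ _ _ (hg2 i), fun i => ?_⟩
      rcases hg3 i with (⟨k, hk⟩ | hk) | hk
      · left; exact mem_union_left _ (mem_image.2 ⟨k, mem_univ _, hk.symm⟩)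
      · left; exact mem_union_right _ hk
      · right; exact hk
  · have e1 : (Fintype.card (Fin m ⊕ I) : ℝ) = m + Fintype.card I := by
      rw [Fintype.card_sum, Fintype.card_fin]; push_cast; rfl
    rw [e1, hIc]
    have : γ * n ≤ ζ * n := by gcongr
    linarith
  · intro j
    have e1 : B j ⊆ A j ∪ Vm := by
      intro v hv
      by_cases h : v ∈ Vm
      · exact mem_union_right _ h
      · refine mem_union_left _ (mem_sdiff.2 ⟨hBA j hv, ?_⟩)
        rw [mem_union]
        rintro (h' | h')
        · exact h h'
        · obtain ⟨i, -, hi⟩ := mem_biUnion.1 h'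
          exact disjoint_left.1 (hq3 i) hi (mem_union_left _ (mem_union_left _
            (mem_biUnion.2 ⟨j, mem_univ _, hv⟩)))
    have e2 : ((B j).card : ℝ) ≤ (A j).card + Vm.card := by
      exact_mod_cast (card_le_card e1).trans (card_union_le _ _)
    have e3 := hBge j
    have e4 : 3 * γ * n ≤ α * δ / 64 * n := by gcongr
    have e5 : 4 * ρ ≤ α * δ / 64 := by
      have h1 : κ * γ ≤ 1 * γ := by gcongr
      have h2 : γ ≤ α / 800 := by rw [hγ]; linarith
      have h3 : δ * (κ * γ) ≤ δ * (α / 4) := by gcongr; linarith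
      rw [hρ]; linarith
    have e6 : 4 * ρ * n ≤ α * δ / 64 * n := by gcongr
    have e7 : (2 * r : ℝ) ≤ (A j).card := by linarith
    exact_mod_cast e7

lemma xEdges_univ_card {W : Type} [Fintype W] (H : SimpleGraph W) :
    (xEdges H univ).card = edgeCnt H := by
  unfold xEdges edgeCnt
  congr 1
  ext e
  simp

lemma mem_xEdges_univ {W : Type} [Fintype W] (H : SimpleGraph W) (e : Sym2 W) :
    e ∈ xEdges H univ ↔ e ∈ H.edgeSet := by
  simp [xEdges]

lemma xp_copy {V W : Type} [Fintype W] (E : Set (Finset V)) (H : SimpleGraph W) (φ : W → V)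
    (ψ : Sym2 W → V) (h : XPE (fun x y z => ({x, y, z} : Finset V) ∈ E) H univ φ ψ) :
    HasExpansionCopy E H := by
  refine ⟨φ, ψ, ?_, ?_, ?_, ?_⟩
  · have := h.injv
    rwa [coe_univ, Set.injOn_univ] at this
  · intro a ha b hb hab
    exact h.inje ((mem_xEdges_univ H a).2 ha) ((mem_xEdges_univ H b).2 hb) hab
  · exact fun x e he => h.disj x (mem_univ _) e ((mem_xEdges_univ H e).2 he)
  · exact fun x y hxy => h.edge x (mem_univ _) y (mem_univ _) hxy

lemma xp_nonisol {W : Type} [Fintype W] (H : SimpleGraph W) :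
    ((univ : Finset W).filter (fun w => ∃ x, H.Adj w x)).card ≤ 2 * edgeCnt H := by
  have : (univ : Finset W).filter (fun w => ∃ x, H.Adj w x) ⊆
      (xEdges H univ).biUnion (fun e => e.toFinset) := by
    intro w hw
    obtain ⟨x, hx⟩ := (mem_filter.1 hw).2
    exact mem_biUnion.2 ⟨s(w, x), (xEdges_mk _ _ _ _).2 ⟨hx, mem_univ _, mem_univ _⟩, by simp⟩
  refine (card_le_card this).trans (card_biUnion_le.trans ?_)
  rw [← xEdges_univ_card, mul_comm, ← smul_eq_mul]
  apply sum_le_card_nsmul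
  intro e _
  induction e using Sym2.ind with
  | _ x y => rw [Sym2.toFinset_mk_eq]; exact card_le_two

lemma xp_caseA {V W : Type} [Fintype V] [Fintype W] [Nonempty V] (R : V → V → V → Prop)
    (hsym : ∀ x y z, R x y z → R y x z) (c ε : ℝ) (hc : 0 < c) (hc1 : c ≤ 1) (hε : 0 < ε)
    (htyp : XTyp R c ε) (H : SimpleGraph W) (Δ : ℕ) (hΔ : 1 ≤ Δ) (hdeg : ∀ w, degOf H w ≤ Δ)
    (hεc : ε ≤ c ^ Δ) (hcount : Fintype.card W + edgeCnt H ≤ Fintype.card V)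
    (h1 : Δ * ε * (Fintype.card V : ℝ) + 2 * edgeCnt H < c ^ Δ * (Fintype.card V : ℝ))
    (h2 : (Δ + 1) * (2 * (edgeCnt H : ℝ)) ≤ c * (Fintype.card V : ℝ)) :
    ∃ φ ψ, XPE R H univ φ ψ := by
  set K : Finset W := (univ : Finset W).filter (fun w => ∃ x, H.Adj w x) with hK
  have hKc : K.card ≤ 2 * edgeCnt H := xp_nonisol H
  have hKc' : (K.card : ℝ) ≤ 2 * edgeCnt H := by exact_mod_cast hKc
  have hKmem : ∀ x y, H.Adj x y → x ∈ K := fun x y h => mem_filter.2 ⟨mem_univ _, y, h⟩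
  have hΔ0 : (0 : ℝ) ≤ Δ := by positivity
  obtain ⟨φ, ψ, hPE, -, -, -, -⟩ := xp_stage1 R hsym c ε hc hc1 hε htyp H Δ hΔ hdeg ∅ K
    (disjoint_empty_left _) (fun _ => Classical.arbitrary V) (by simp) (by simp) ∅ (by simp) univ
    (by rw [card_univ]; gcongr)
    (by
      intro w hw
      have : ((univ : Finset V).filter (fun v => ∀ x ∈ (∅ : Finset W), H.Adj x w →
        XThick R c univ (Classical.arbitrary V) v)) = univ := by
        ext; simp
      rw [this, card_univ, card_empty]
      push_cast
      linarith)
    (by simp)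
    (by
      rw [card_empty]
      have : (Δ + 1) * (K.card : ℝ) ≤ (Δ + 1) * (2 * (edgeCnt H : ℝ)) := by gcongr
      push_cast
      linarith)
  rw [empty_union] at hPE
  have hEE : xEdges H univ = xEdges H K := by
    apply subset_antisymm _ (xEdges_mono H (subset_univ _))
    intro e he
    induction e using Sym2.ind with
    | _ x y =>
      rw [xEdges_mk] at he ⊢
      exact ⟨he.1, hKmem _ _ he.1, hKmem _ _ he.1.symm⟩
  set U : Finset V := K.image φ ∪ (xEdges H univ).image ψ with hU
  have hUc : U.card ≤ K.card + edgeCnt H := by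
    refine (card_union_le _ _).trans (Nat.add_le_add card_image_le ?_)
    rw [← xEdges_univ_card]; exact card_image_le
  obtain ⟨g, hg, hginj⟩ := xp_sdr ((univ : Finset W) \ K) (fun _ => (univ : Finset V) \ U) (by
    intro i _
    rw [card_sdiff_of_subset (subset_univ _), card_sdiff_of_subset (subset_univ _), card_univ,
      card_univ]
    have := card_le_univ K
    omega)
  have hgU : ∀ w, w ∉ K → g w ∉ U := fun w hw => (mem_sdiff.1 (hg w (by simp [hw]))).2
  refine ⟨fun w => if w ∈ K then φ w else g w, ψ, ?_, ?_, ?_, ?_⟩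
  · intro x _ y _ hxy
    simp only at hxy
    split_ifs at hxy with hx hy hy
    · exact hPE.injv hx hy hxy
    · exact absurd (mem_union_left _ (mem_image.2 ⟨x, hx, hxy⟩)) (hgU y hy)
    · exact absurd (mem_union_left _ (mem_image.2 ⟨y, hy, hxy.symm⟩)) (hgU x hx)
    · exact hginj (by simp [hx]) (by simp [hy]) hxy
  · rw [hEE]; exact hPE.inje
  · intro x _ e he hxe
    split_ifs at hxe with hx
    · exact hPE.disj x hx e (hEE ▸ he) hxe
    · exact absurd (mem_union_right _ (mem_image.2 ⟨e, he, hxe.symm⟩)) (hgU x hx)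
  · intro x _ y _ hxy
    have hx := hKmem _ _ hxy
    have hy := hKmem _ _ hxy.symm
    simp only [hx, hy, if_true]
    exact hPE.edge x hx y hy hxy

lemma xp_sep {W : Type} [Fintype W] (H : SimpleGraph W) (μ : ℝ) (h : Separable H μ) :
    ∃ (X : Finset W) (Q : Type) (cf : W → Q), (X.card : ℝ) ≤ μ * (Fintype.card W : ℝ) ∧
      (∀ x y, x ∉ X → y ∉ X → H.Adj x y → cf x = cf y) ∧
      ∀ a, ((((univ : Finset W) \ X).filter (fun w => cf w = a)).card : ℝ) ≤
        μ * (Fintype.card W : ℝ) := by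
  obtain ⟨X, hX, hK⟩ := h
  have hμ0 : 0 ≤ μ * (Fintype.card W : ℝ) := le_trans (by positivity) hX
  let G' := SimpleGraph.induce ((↑X : Set W)ᶜ) H
  let cf : W → Option G'.ConnectedComponent := fun w =>
    if hw : w ∈ ((↑X : Set W)ᶜ) then some (G'.connectedComponentMk ⟨w, hw⟩) else none
  have hcf : ∀ w (hw : w ∈ ((↑X : Set W)ᶜ)), cf w = some (G'.connectedComponentMk ⟨w, hw⟩) :=
    fun w hw => dif_pos hw
  refine ⟨X, Option G'.ConnectedComponent, cf, hX, ?_, ?_⟩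
  · intro x y hx hy hxy
    have hx' : x ∈ ((↑X : Set W)ᶜ) := by simpa using hx
    have hy' : y ∈ ((↑X : Set W)ᶜ) := by simpa using hy
    rw [hcf x hx', hcf y hy']
    congr 1
    apply SimpleGraph.ConnectedComponent.sound
    apply SimpleGraph.Adj.reachable
    exact hxy
  · intro a
    cases a with
    | none =>
      have : ((univ : Finset W) \ X).filter (fun w => cf w = none) = ∅ := by
        rw [eq_empty_iff_forall_notMem]
        intro w hw
        rw [mem_filter, mem_sdiff] at hw
        have hw' : w ∈ ((↑X : Set W)ᶜ) := by simpa using hw.1.2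
        rw [hcf w hw'] at hw
        simp at hw
      have h0 : ((((univ : Finset W) \ X).filter (fun w => cf w = none)).card : ℝ) ≤
          μ * (Fintype.card W : ℝ) := by
        rw [this]; simpa using hμ0
      convert h0
    | some K =>
      have : (((univ : Finset W) \ X).filter (fun w => cf w = some K) : Finset W) =
          ((Subtype.val '' K.supp : Set W)).toFinset := by
        ext w
        simp only [mem_filter, mem_sdiff, mem_univ, true_and, Set.mem_toFinset, Set.mem_image]
        constructor
        · rintro ⟨h1, h2⟩
          have hw' : w ∈ ((↑X : Set W)ᶜ) := by simpa using h1
          rw [hcf w hw'] at h2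
          exact ⟨⟨w, hw'⟩, Option.some.inj h2, rfl⟩
        · rintro ⟨⟨x, hx⟩, hxK, rfl⟩
          refine ⟨by simpa using hx, ?_⟩
          rw [hcf x hx]
          congr 1
      have h0 : ((((univ : Finset W) \ X).filter (fun w => cf w = some K)).card : ℝ) ≤
          μ * (Fintype.card W : ℝ) := by
        rw [this, ← Set.ncard_eq_toFinset_card',
          Set.ncard_image_of_injective _ Subtype.val_injective]
        exact hK K
      convert h0

lemma xp_pick0 {Q : Type} (dd : Q → ℝ) (hd0 : ∀ a, 0 ≤ dd a) (M L : ℝ) (hM : ∀ a, dd a ≤ M)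
    (hL : 0 ≤ L) (hM0 : 0 ≤ M) (𝒬 : Finset Q) :
    L ≤ ∑ a ∈ 𝒬, dd a → ∃ T ⊆ 𝒬, L ≤ ∑ a ∈ T, dd a ∧ ∑ a ∈ T, dd a ≤ L + M := by
  induction 𝒬 using Finset.induction_on with
  | empty => exact fun h => ⟨∅, Subset.refl _, h, by simp; linarith⟩
  | insert a 𝒬 ha ih =>
    intro h
    by_cases h' : L ≤ ∑ a ∈ 𝒬, dd a
    · obtain ⟨T, hT, h1, h2⟩ := ih h'
      exact ⟨T, hT.trans (subset_insert _ _), h1, h2⟩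
    · refine ⟨insert a 𝒬, Subset.refl _, h, ?_⟩
      rw [sum_insert ha]
      have := hM a
      linarith

lemma xp_pick {Q : Type} (dd vv : Q → ℝ) (hd0 : ∀ a, 0 ≤ dd a) (hv0 : ∀ a, 0 ≤ vv a) (M L β : ℝ)
    (hM : ∀ a, dd a ≤ M)
    (hL : 0 ≤ L) (hM0 : 0 ≤ M) (hβ : 0 ≤ β) (𝒬 : Finset Q)
    (h : L + β * ∑ a ∈ 𝒬, vv a ≤ ∑ a ∈ 𝒬, dd a) :
    ∃ T ⊆ 𝒬, L ≤ ∑ a ∈ T, dd a ∧ β * ∑ a ∈ T, vv a ≤ L + M := by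
  have h1 : ∑ a ∈ 𝒬, dd a ≤ ∑ a ∈ 𝒬.filter (fun a => β * vv a ≤ dd a), dd a +
      β * ∑ a ∈ 𝒬, vv a := by
    rw [← sum_filter_add_sum_filter_not 𝒬 (fun a => β * vv a ≤ dd a), mul_sum,
      ← sum_filter_add_sum_filter_not 𝒬 (fun a => β * vv a ≤ dd a) (fun a => β * vv a)]
    have e1 : ∑ a ∈ 𝒬.filter (fun a => ¬ β * vv a ≤ dd a), dd a ≤
        ∑ a ∈ 𝒬.filter (fun a => ¬ β * vv a ≤ dd a), β * vv a :=
      sum_le_sum fun a ha => (not_le.1 (mem_filter.1 ha).2).le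
    have e2 : 0 ≤ ∑ a ∈ 𝒬.filter (fun a => β * vv a ≤ dd a), β * vv a :=
      sum_nonneg fun a _ => mul_nonneg hβ (hv0 a)
    linarith
  obtain ⟨T, hT, h2, h3⟩ := xp_pick0 dd hd0 M L hM hL hM0 _ (show L ≤ _ by linarith)
  refine ⟨T, hT.trans (filter_subset _ _), h2, le_trans ?_ h3⟩
  rw [mul_sum]
  exact sum_le_sum fun a ha => (mem_filter.1 (hT ha)).2

/-- vertices at distance at most two -/
noncomputable def xN {W : Type} [Fintype W] (H : SimpleGraph W) (x : W) : Finset W :=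
  (univ : Finset W).filter (fun y => y = x ∨ H.Adj x y ∨ ∃ z, H.Adj x z ∧ H.Adj z y)

lemma xN_symm {W : Type} [Fintype W] (H : SimpleGraph W) (x y : W) (h : x ∈ xN H y) :
    y ∈ xN H x := by
  simp only [xN, mem_filter, mem_univ, true_and] at h ⊢
  rcases h with h | h | ⟨z, h1, h2⟩
  · exact Or.inl h.symm
  · exact Or.inr (Or.inl h.symm)
  · exact Or.inr (Or.inr ⟨z, h2.symm, h1.symm⟩)

lemma xN_card {W : Type} [Fintype W] (H : SimpleGraph W) (Δ : ℕ) (hΔ : 1 ≤ Δ)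
    (hdeg : ∀ w, degOf H w ≤ Δ) (x : W) : (xN H x).card ≤ 3 * Δ ^ 2 := by
  have : xN H x ⊆ {x} ∪ ((univ : Finset W).filter (fun y => H.Adj x y) ∪
      ((univ : Finset W).filter (fun y => H.Adj x y)).biUnion
        (fun z => (univ : Finset W).filter (fun y => H.Adj z y))) := by
    intro y hy
    simp only [xN, mem_filter, mem_univ, true_and] at hy
    simp only [mem_union, mem_singleton, mem_filter, mem_univ, true_and, mem_biUnion]
    exact hy
  have h1 := (card_le_card this).trans ((card_union_le _ _).trans
      (Nat.add_le_add_left (card_union_le _ _) _))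
  have h2 : (((univ : Finset W).filter (fun y => H.Adj x y)).biUnion
        (fun z => (univ : Finset W).filter (fun y => H.Adj z y))).card ≤ Δ * Δ := by
    refine card_biUnion_le.trans ((sum_le_card_nsmul _ _ Δ (fun z _ => hdeg z)).trans ?_)
    rw [smul_eq_mul]
    exact Nat.mul_le_mul_right _ (hdeg x)
  have h3 : ((univ : Finset W).filter (fun y => H.Adj x y)).card ≤ Δ := hdeg x
  rw [card_singleton] at h1
  nlinarith

/-- conflicts between darts -/
noncomputable def xConf {W : Type} [Fintype W] (H : SimpleGraph W) (t : W × W) : Finset (W × W) :=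
  (univ : Finset (W × W)).filter (fun s => H.Adj s.1 s.2 ∧ H.Adj t.1 t.2 ∧
    ∃ x ∈ xpv s, ∃ y ∈ xpv t, x ∈ xN H y)

lemma xConf_symm {W : Type} [Fintype W] (H : SimpleGraph W) (s t : W × W) (h : s ∈ xConf H t) :
    t ∈ xConf H s := by
  simp only [xConf, mem_filter, mem_univ, true_and] at h ⊢
  obtain ⟨h1, h2, x, hx, y, hy, h3⟩ := h
  exact ⟨h2, h1, y, hy, x, hx, xN_symm H _ _ h3⟩

lemma xConf_card {W : Type} [Fintype W] (H : SimpleGraph W) (Δ : ℕ) (hΔ : 1 ≤ Δ)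
    (hdeg : ∀ w, degOf H w ≤ Δ) (t : W × W) : (xConf H t).card ≤ 12 * Δ ^ 3 := by
  let N : Finset W := xN H t.1 ∪ xN H t.2
  have hN : N.card ≤ 6 * Δ ^ 2 := by
    have h1 := xN_card H Δ hΔ hdeg t.1
    have h2 := xN_card H Δ hΔ hdeg t.2
    have := card_union_le (xN H t.1) (xN H t.2)
    simp only [N]; omega
  have : xConf H t ⊆ N.biUnion (fun x => ((univ : Finset W).filter (fun y => H.Adj x y)).image
      (fun y => (x, y))) ∪ N.biUnion (fun x => ((univ : Finset W).filter (fun y => H.Adj x y)).image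
      (fun y => (y, x))) := by
    rintro ⟨a, b⟩ hs
    simp only [xConf, mem_filter, mem_univ, true_and, xpv, mem_insert, mem_singleton] at hs
    obtain ⟨h1, h2, x, hx, y, hy, h3⟩ := hs
    have hxN : x ∈ N := by
      rcases hy with rfl | rfl
      · exact mem_union_left _ h3
      · exact mem_union_right _ h3
    rcases hx with rfl | rfl
    · apply mem_union_left
      simp only [mem_biUnion, mem_image, mem_filter, mem_univ, true_and]
      exact ⟨x, hxN, b, h1, rfl⟩
    · apply mem_union_right
      simp only [mem_biUnion, mem_image, mem_filter, mem_univ, true_and]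
      exact ⟨x, hxN, a, h1.symm, rfl⟩
  have hb : ∀ f : W → W → W × W, (N.biUnion (fun x => ((univ : Finset W).filter
      (fun y => H.Adj x y)).image (f x))).card ≤ N.card * Δ := fun f =>
    card_biUnion_le.trans ((sum_le_card_nsmul _ _ Δ (fun z _ => card_image_le.trans (hdeg z))).trans
      (by rw [smul_eq_mul]))
  have h1 := (card_le_card this).trans (card_union_le _ _)
  have h2 := hb (fun x y => (x, y))
  have h3 := hb (fun x y => (y, x))
  have h4 : N.card * Δ ≤ 6 * Δ ^ 2 * Δ := Nat.mul_le_mul_right _ hN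
  calc _ ≤ N.card * Δ + N.card * Δ := h1.trans (Nat.add_le_add h2 h3)
    _ ≤ 6 * Δ ^ 2 * Δ + 6 * Δ ^ 2 * Δ := Nat.add_le_add h4 h4
    _ = 12 * Δ ^ 3 := by ring

/-- spaced edges -/
structure XSp {W ι : Type} (H : SimpleGraph W) (K : Finset W) (g : ι → W × W) : Prop where
  adj : ∀ i, H.Adj (g i).1 (g i).2
  mem : ∀ i, ∀ x ∈ xpv (g i), x ∈ K
  ne : ∀ i j, i ≠ j → ∀ x ∈ xpv (g i), ∀ y ∈ xpv (g j), x ≠ y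
  nadj : ∀ i j, i ≠ j → ∀ x ∈ xpv (g i), ∀ y ∈ xpv (g j), ¬ H.Adj x y
  ncom : ∀ i j, i ≠ j → ∀ x ∈ xpv (g i), ∀ y ∈ xpv (g j), ∀ z, H.Adj x z → ¬ H.Adj y z

lemma xp_core {W ι Q : Type} [Fintype W] [Nonempty W] [Fintype ι] (H : SimpleGraph W) (Δ : ℕ)
    (hΔ : 1 ≤ Δ) (hdeg : ∀ w, degOf H w ≤ Δ) (X : Finset W) (cf : W → Q)
    (hcf : ∀ x y, x ∉ X → y ∉ X → H.Adj x y → cf x = cf y) (m β L : ℝ) (hm0 : 0 ≤ m)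
    (hm : ∀ a, ((((univ : Finset W) \ X).filter (fun w => cf w = a)).card : ℝ) ≤ m)
    (hβ : 0 < β)
    (hL : L + β * Fintype.card W + Δ * X.card ≤ edgeCnt H)
    (hι : 12 * (Δ : ℝ) ^ 3 * Fintype.card ι < L) :
    ∃ (K : Finset W) (g : ι → W × W), Disjoint K X ∧ β * K.card ≤ L + Δ * m ∧
      (∀ x y, x ∉ X → y ∉ X → H.Adj x y → x ∈ K → y ∈ K) ∧ XSp H K g := by
  have hL0 : 0 ≤ L := le_trans (by positivity) hι.le
  let Y : Finset W := univ \ X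
  let Dt : Finset (W × W) := (univ : Finset (W × W)).filter
    (fun p => H.Adj p.1 p.2 ∧ p.1 ∈ Y ∧ p.2 ∈ Y)
  let 𝒬 : Finset Q := univ.image cf
  let vv : Q → ℕ := fun a => (Y.filter (fun w => cf w = a)).card
  let dd : Q → ℕ := fun a => (Dt.filter (fun p => cf p.1 = a)).card
  have hvv : ∀ T : Finset Q, ∑ a ∈ T, vv a = (Y.filter (fun w => cf w ∈ T)).card := by
    intro T
    rw [card_eq_sum_card_fiberwise (s := Y.filter (fun w => cf w ∈ T)) (f := cf) (t := T)
      (fun w hw => mem_coe.2 (mem_filter.1 (mem_coe.1 hw)).2)]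
    refine sum_congr rfl fun a ha => ?_
    simp only [vv]
    congr 1
    ext w
    simp only [mem_filter]
    constructor
    · rintro ⟨h1, rfl⟩; exact ⟨⟨h1, ha⟩, rfl⟩
    · rintro ⟨⟨h1, _⟩, h2⟩; exact ⟨h1, h2⟩
  have hdd : ∀ T : Finset Q, ∑ a ∈ T, dd a = (Dt.filter (fun p => cf p.1 ∈ T)).card := by
    intro T
    rw [card_eq_sum_card_fiberwise (s := Dt.filter (fun p => cf p.1 ∈ T))
      (f := fun p : W × W => cf p.1) (t := T)
      (fun w hw => mem_coe.2 (mem_filter.1 (mem_coe.1 hw)).2)]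
    refine sum_congr rfl fun a ha => ?_
    simp only [dd]
    congr 1
    ext w
    simp only [mem_filter]
    constructor
    · rintro ⟨h1, rfl⟩; exact ⟨⟨h1, ha⟩, rfl⟩
    · rintro ⟨⟨h1, _⟩, h2⟩; exact ⟨h1, h2⟩
  have hddM : ∀ a, (dd a : ℝ) ≤ Δ * m := by
    intro a
    have h1 : dd a ≤ Δ * vv a := by
      have : Dt.filter (fun p => cf p.1 = a) ⊆ (Y.filter (fun w => cf w = a)).biUnion
          (fun x => ((univ : Finset W).filter (fun y => H.Adj x y)).image (fun y => (x, y))) := by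
        rintro ⟨x, y⟩ hp
        simp only [Dt, mem_filter, mem_univ, true_and] at hp
        simp only [mem_biUnion, mem_image, mem_filter, mem_univ, true_and]
        exact ⟨x, ⟨hp.1.2.1, hp.2⟩, y, hp.1.1, rfl⟩
      refine (card_le_card this).trans (card_biUnion_le.trans
        ((sum_le_card_nsmul _ _ Δ (fun z _ => card_image_le.trans (hdeg z))).trans ?_))
      rw [smul_eq_mul, mul_comm]
    have h2 : (dd a : ℝ) ≤ Δ * vv a := by exact_mod_cast h1
    refine h2.trans ?_
    gcongr
    exact hm a
  have hDt : (edgeCnt H : ℝ) ≤ Dt.card + Δ * X.card := by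
    have h1 := xp_new_card H Δ hdeg Y X
    have h2 : Y ∪ X = univ := by simp [Y]
    rw [h2] at h1
    have h3 : (xEdges H Y).card ≤ Dt.card := by
      have : xEdges H Y ⊆ Dt.image (fun p => s(p.1, p.2)) := by
        intro e he
        induction e using Sym2.ind with
        | _ x y =>
          rw [xEdges_mk] at he
          exact mem_image.2 ⟨(x, y), mem_filter.2 ⟨mem_univ _, he⟩, rfl⟩
      exact (card_le_card this).trans card_image_le
    have h4 := le_card_sdiff (xEdges H Y) (xEdges H univ)
    rw [← xEdges_univ_card]
    have h5 : (xEdges H univ).card ≤ Dt.card + Δ * X.card := by omega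
    exact_mod_cast h5
  have hall : Dt.filter (fun p => cf p.1 ∈ 𝒬) = Dt := by
    apply filter_true_of_mem
    exact fun p _ => mem_image_of_mem _ (mem_univ _)
  have hsum1 : ∑ a ∈ 𝒬, (dd a : ℝ) = Dt.card := by
    rw [← hall, ← hdd 𝒬]; push_cast; rfl
  have hsum2 : ∑ a ∈ 𝒬, (vv a : ℝ) ≤ Fintype.card W := by
    have := hvv 𝒬
    have h2 : ∑ a ∈ 𝒬, vv a ≤ Fintype.card W := this ▸ card_le_univ _
    exact_mod_cast h2
  obtain ⟨T, hT, hT1, hT2⟩ := xp_pick (fun a => (dd a : ℝ)) (fun a => (vv a : ℝ))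
    (fun a => by positivity) (fun a => by positivity) (Δ * m) L β hddM hL0 (by positivity) hβ.le 𝒬
    (by
      rw [hsum1]
      have : β * ∑ a ∈ 𝒬, (vv a : ℝ) ≤ β * Fintype.card W := by gcongr
      linarith)
  let K : Finset W := Y.filter (fun w => cf w ∈ T)
  have hKY : ∀ w, w ∈ K ↔ w ∉ X ∧ cf w ∈ T := by intro w; simp [K, Y]
  have hclosed : ∀ x y, x ∉ X → y ∉ X → H.Adj x y → x ∈ K → y ∈ K := by
    intro x y hx hy hxy hxK
    rw [hKY] at hxK ⊢
    exact ⟨hy, hcf x y hx hy hxy ▸ hxK.2⟩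
  obtain ⟨g, hg, hgc⟩ := xp_greedy (univ : Finset ι) (fun _ => Dt.filter (fun p => cf p.1 ∈ T))
    (xConf H) (xConf_symm H) (12 * Δ ^ 3) (xConf_card H Δ hΔ hdeg) (by
      intro i _
      rw [← hdd T, card_univ]
      have : ((∑ a ∈ T, dd a : ℕ) : ℝ) = ∑ a ∈ T, (dd a : ℝ) := by push_cast; rfl
      have h2 : ((12 * Δ ^ 3 * Fintype.card ι : ℕ) : ℝ) < ((∑ a ∈ T, dd a : ℕ) : ℝ) := by
        rw [this]; push_cast; linarith
      exact_mod_cast h2)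
  have hadj : ∀ i, H.Adj (g i).1 (g i).2 := fun i => by
    have := hg i (mem_univ _)
    simp only [Dt, mem_filter, mem_univ, true_and] at this
    exact this.1.1
  have hfar : ∀ i j, i ≠ j → ∀ x ∈ xpv (g i), ∀ y ∈ xpv (g j), x ∉ xN H y := by
    intro i j hij x hx y hy hxy
    exact hgc i (mem_univ _) j (mem_univ _) hij (mem_filter.2 ⟨mem_univ _, hadj i, hadj j,
      x, hx, y, hy, hxy⟩)
  refine ⟨K, g, ?_, ?_, hclosed, hadj, ?_, ?_, ?_, ?_⟩
  · rw [disjoint_left]; exact fun w hw => ((hKY w).1 hw).1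
  · have h1 : ∑ a ∈ T, (vv a : ℝ) = K.card := by
      have := hvv T
      exact_mod_cast this
    rw [← h1]; exact hT2
  · intro i x hx
    have := hg i (mem_univ _)
    simp only [Dt, Y, mem_filter, mem_univ, true_and, mem_sdiff] at this
    have h1 : (g i).1 ∈ K := (hKY _).2 ⟨this.1.2.1, this.2⟩
    simp only [xpv, mem_insert, mem_singleton] at hx
    rcases hx with rfl | rfl
    · exact h1
    · exact hclosed _ _ this.1.2.1 this.1.2.2 this.1.1 h1
  · intro i j hij x hx y hy hxy
    exact hfar i j hij x hx y hy (by simp [xN, hxy])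
  · intro i j hij x hx y hy hxy
    exact hfar i j hij x hx y hy (by simp [xN, hxy.symm])
  · intro i j hij x hx y hy z hxz hyz
    exact hfar i j hij x hx y hy (mem_filter.2 ⟨mem_univ _, Or.inr (Or.inr ⟨z, hyz, hxz.symm⟩)⟩)

lemma xmem_filter {α : Type*} {p : α → Prop} {inst : DecidablePred p} {s : Finset α} {a : α} :
    a ∈ @Finset.filter α p inst s ↔ a ∈ s ∧ p a := mem_filter

lemma xp_assign {β J : Type} [Fintype J] [Nonempty J] (cap : J → ℕ) (B : Finset β) :
    B.card ≤ ∑ j, cap j → ∃ f : β → J, ∀ j, (B.filter (fun b => f b = j)).card ≤ cap j := by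
  induction B using Finset.induction_on with
  | empty => exact fun _ => ⟨fun _ => Classical.arbitrary J, by simp⟩
  | insert a B ha ih =>
    intro h
    rw [card_insert_of_notMem ha] at h
    obtain ⟨f, hf⟩ := ih (by omega)
    have hs : ∑ j, (B.filter (fun b => f b = j)).card = B.card :=
      (card_eq_sum_card_fiberwise (s := B) (f := f) (t := univ) (fun _ _ => by simp)).symm
    obtain ⟨j, hj⟩ : ∃ j, (B.filter (fun b => f b = j)).card < cap j := by
      by_contra hcon
      push Not at hcon
      have : ∑ j, cap j ≤ ∑ j, (B.filter (fun b => f b = j)).card := sum_le_sum fun j _ => hcon j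
      omega
    refine ⟨Function.update f a j, fun i => ?_⟩
    have hB : B.filter (fun b => Function.update f a j b = i) = B.filter (fun b => f b = i) := by
      apply filter_congr
      intro b hb
      rw [Function.update_of_ne]
      rintro rfl
      exact ha hb
    rw [filter_insert, hB, Function.update_self]
    split_ifs with h1
    · subst h1
      exact (card_insert_le _ _).trans hj
    · exact hf i

lemma xp_assign2 {W J : Type} [Fintype J] [Nonempty J] (cap : J → ℕ) (Bv : Finset W)
    (Be : Finset (Sym2 W)) (h : Bv.card + Be.card ≤ ∑ j, cap j) :
    ∃ (fv : W → J) (fe : Sym2 W → J), ∀ j, (Bv.filter (fun b => fv b = j)).card +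
      (Be.filter (fun b => fe b = j)).card ≤ cap j := by
  obtain ⟨f, hf⟩ := xp_assign cap (Bv.disjSum Be) (by rwa [card_disjSum])
  refine ⟨fun w => f (Sum.inl w), fun e => f (Sum.inr e), fun j => ?_⟩
  refine le_trans (le_of_eq ?_) (hf j)
  rw [← card_disjSum]
  congr 1
  ext x
  rcases x with x | x <;> simp

lemma xp_bulk2 {V W J Q : Type} [Fintype V] [Fintype W] [Nonempty V] [Fintype J]
    (R : V → V → V → Prop)
    (hsym : ∀ x y z, R x y z → R y x z) (c ε : ℝ) (hc : 0 < c) (hc1 : c ≤ 1) (hε : 0 < ε)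
    (htyp : XTyp R c ε) (H : SimpleGraph W) (Δ : ℕ) (hΔ : 1 ≤ Δ) (hdeg : ∀ w, degOf H w ≤ Δ)
    (D1 : Finset W) (φ1 : W → V) (ψ1 : Sym2 W → V) (hPE : XPE R H D1 φ1 ψ1)
    (A : J → Finset V) (hA : ∀ i j, i ≠ j → Disjoint (A i) (A j))
    (hAv : ∀ j, ∀ x ∈ D1, φ1 x ∉ A j) (hAe : ∀ j, ∀ e ∈ xEdges H D1, ψ1 e ∉ A j)
    (r : ℕ) (j1 : J) (S : Finset V) (hSA : S ⊆ A j1) (hSr : 2 * S.card ≤ r)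
    (hAr : ∀ j, 2 * r ≤ (A j).card)
    (X : Finset W) (hX : ∀ w, w ∉ D1 → ∀ x ∈ D1, H.Adj x w → x ∈ X)
    (hcount : ((univ : Finset W) \ D1).card + (xEdges H univ \ xEdges H D1).card +
      Fintype.card J * r ≤ ∑ j, (A j).card)
    (hSc : ∀ w, w ∉ D1 → c ^ Δ * (S.card : ℝ) ≤
        ((S.filter (fun v => ∀ x ∈ D1, H.Adj x w → XThick R c S (φ1 x) v)).card : ℝ))
    (q m : ℝ) (hXm : (X.card : ℝ) ≤ m) (hq0 : 0 ≤ q) (hq1 : q + 2 * Δ * m ≤ c ^ Δ * S.card)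
    (hεc : ε ≤ c ^ Δ) (hq : Δ * ε * (Fintype.card V : ℝ) + m < c ^ Δ * q) (hm0 : 0 ≤ m)
    (hq2 : (Δ + 1) * m ≤ c * q)
    (cf : W → Q) (hcf : ∀ x y, x ∉ D1 → y ∉ D1 → H.Adj x y → cf x = cf y)
    (hcfm : ∀ a, ((((univ : Finset W) \ D1).filter (fun w => cf w = a)).card : ℝ) ≤ m) :
    ∃ φ ψ, XPE R H univ φ ψ ∧ (∀ x ∈ D1, φ x = φ1 x) ∧ (∀ e ∈ xEdges H D1, ψ e = ψ1 e) ∧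
      (∀ w, w ∉ D1 → ∃ j, φ w ∈ A j) ∧
      (∀ e ∈ xEdges H univ, e ∉ xEdges H D1 → ∃ j, ψ e ∈ A j) ∧
      ∀ j, r ≤ (A j \ (univ.image φ ∪ (xEdges H univ).image ψ)).card := by
  have : Nonempty J := ⟨j1⟩
  let Nv : Finset W := univ \ D1
  let Ne : Finset (Sym2 W) := xEdges H univ \ xEdges H D1
  let sv : W → Prop := fun w => ∃ x ∈ D1, H.Adj x w
  let se : Sym2 W → Prop := fun e => ∃ x ∈ D1, x ∈ e
  let Sv : Finset W := Nv.filter sv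
  let Se : Finset (Sym2 W) := Ne.filter se
  have hΔr : (1 : ℝ) ≤ Δ := by exact_mod_cast hΔ
  have hcΔ1 : c ^ Δ ≤ 1 := pow_le_one₀ hc.le hc1
  have hcΔc : c ^ Δ ≤ c := by
    calc c ^ Δ ≤ c ^ 1 := pow_le_pow_of_le_one hc.le hc1 hΔ
      _ = c := pow_one c
  have hSvc : Sv.card ≤ Δ * X.card := by
    have : Sv ⊆ X.biUnion (fun x => (univ : Finset W).filter (fun y => H.Adj x y)) := by
      intro w hw
      simp only [Sv, Nv, sv, mem_filter, mem_sdiff, mem_univ, true_and] at hw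
      obtain ⟨hw1, x, hx, hxw⟩ := hw
      exact mem_biUnion.2 ⟨x, hX w hw1 x hx hxw, mem_filter.2 ⟨mem_univ _, hxw⟩⟩
    refine (card_le_card this).trans (card_biUnion_le.trans
        ((sum_le_card_nsmul _ _ Δ (fun z _ => (hdeg z))).trans ?_))
    rw [smul_eq_mul, mul_comm]
  have hSec : Se.card ≤ Δ * X.card := by
    have : Se ⊆ X.biUnion (fun x => ((univ : Finset W).filter (fun y => H.Adj x y)).image
        (fun y => s(x, y))) := by
      intro e he
      simp only [Se, Ne, se, mem_filter, mem_sdiff] at he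
      obtain ⟨⟨he1, he2⟩, x, hx, hxe⟩ := he
      obtain ⟨y, rfl⟩ := hxe
      rw [xEdges_mk] at he1 he2
      have hy : y ∉ D1 := fun hy => he2 ⟨he1.1, hx, hy⟩
      exact mem_biUnion.2 ⟨x, hX y hy x hx he1.1, mem_image.2 ⟨y, mem_filter.2
        ⟨mem_univ _, he1.1⟩, rfl⟩⟩
    refine (card_le_card this).trans (card_biUnion_le.trans
        ((sum_le_card_nsmul _ _ Δ (fun z _ => card_image_le.trans (hdeg z))).trans ?_))
    rw [smul_eq_mul, mul_comm]
  set sp : ℕ := Sv.card + Se.card with hsp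
  have hspm : (sp : ℝ) ≤ 2 * Δ * m := by
    have h1 : sp ≤ 2 * (Δ * X.card) := by omega
    have h2 : (sp : ℝ) ≤ 2 * (Δ * X.card) := by exact_mod_cast h1
    have h3 : (Δ : ℝ) * X.card ≤ Δ * m := by gcongr
    linarith
  have hcS : c ^ Δ * (S.card : ℝ) ≤ S.card := by
    calc c ^ Δ * (S.card : ℝ) ≤ 1 * S.card := by gcongr
      _ = _ := one_mul _
  have hcS2 : c ^ Δ * (S.card : ℝ) ≤ c * S.card := by gcongr
  have hSr' : 2 * (S.card : ℝ) ≤ r := by exact_mod_cast hSr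
  have hspr : sp ≤ r := by
    have : (sp : ℝ) ≤ r := by
      have : (0 : ℝ) ≤ S.card := by positivity
      linarith
    exact_mod_cast this
  let cap : J → ℕ := fun j => (A j).card - r - (if j = j1 then sp else 0)
  have hcap : ∀ j, cap j + r + (if j = j1 then sp else 0) = (A j).card := by
    intro j
    have := hAr j
    simp only [cap]
    split_ifs <;> omega
  have hcapsum : ∑ j, cap j + Fintype.card J * r + sp = ∑ j, (A j).card := by
    rw [← sum_congr rfl (fun j _ => hcap j), sum_add_distrib, sum_add_distrib]
    simp
  obtain ⟨fv0, fe0, hf0⟩ := xp_assign2 cap (Nv.filter (fun w => ¬ sv w))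
    (Ne.filter (fun e => ¬ se e)) (by
      have h1 := card_filter_add_card_filter_not (s := Nv) sv
      have h2 := card_filter_add_card_filter_not (s := Ne) se
      have h3 : Nv.card + Ne.card + Fintype.card J * r ≤ ∑ j, (A j).card := hcount
      have h4 : sp = (Nv.filter sv).card + (Ne.filter se).card := rfl
      omega)
  let fv : W → Option J := fun w => if sv w then none else some (fv0 w)
  let fe : Sym2 W → Option J := fun e => if se e then none else some (fe0 e)
  let P : Option J → Finset V := fun o => o.elim S (fun j => A j \ S)
  have hP : ∀ i j, i ≠ j → Disjoint (P i) (P j) := by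
    intro i j hij
    rcases i with _ | i <;> rcases j with _ | j
    · exact absurd rfl hij
    · exact disjoint_sdiff
    · exact sdiff_disjoint
    · exact disjoint_of_subset_left sdiff_subset (disjoint_of_subset_right sdiff_subset
        (hA i j (fun h => hij (by rw [h]))))
  have hPA : ∀ o, ∃ j, P o ⊆ A j := by
    intro o
    rcases o with _ | j
    · exact ⟨j1, hSA⟩
    · exact ⟨j, sdiff_subset⟩
  have hPv : ∀ j, ∀ x ∈ D1, φ1 x ∉ P j := fun o x hx h =>
    (hPA o).elim fun j hj => hAv j x hx (hj h)
  have hPe : ∀ j, ∀ e ∈ xEdges H D1, ψ1 e ∉ P j := fun o x hx h =>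
    (hPA o).elim fun j hj => hAe j x hx (hj h)
  have hfibn : xFib H D1 fv fe none ≤ sp := by
    unfold xFib
    rw [hsp]
    refine Nat.add_le_add (card_le_card ?_) (card_le_card ?_)
    · intro w hw
      obtain ⟨h1, h2⟩ := xmem_filter.1 hw
      refine mem_filter.2 ⟨h1, ?_⟩
      by_contra h3
      simp [fv, h3] at h2
    · intro w hw
      obtain ⟨h1, h2⟩ := xmem_filter.1 hw
      refine mem_filter.2 ⟨h1, ?_⟩
      by_contra h3
      simp [fe, h3] at h2
  have hfibs : ∀ j, xFib H D1 fv fe (some j) ≤ cap j := by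
    intro j
    refine le_trans ?_ (hf0 j)
    unfold xFib
    refine Nat.add_le_add (card_le_card ?_) (card_le_card ?_)
    · intro w hw
      obtain ⟨h1, h2⟩ := xmem_filter.1 hw
      have h3 : ¬ sv w := fun h3 => by simp [fv, h3] at h2
      simp only [fv, h3, if_false, Option.some.injEq] at h2
      exact mem_filter.2 ⟨mem_filter.2 ⟨h1, h3⟩, h2⟩
    · intro w hw
      obtain ⟨h1, h2⟩ := xmem_filter.1 hw
      have h3 : ¬ se w := fun h3 => by simp [fe, h3] at h2
      simp only [fe, h3, if_false, Option.some.injEq] at h2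
      exact mem_filter.2 ⟨mem_filter.2 ⟨h1, h3⟩, h2⟩
  have hPs : ∀ j, (A j).card ≤ (P (some j)).card + (if j = j1 then S.card else 0) := by
    intro j
    split_ifs with h
    · have := le_card_sdiff S (A j)
      simp only [P, Option.elim]
      omega
    · have : A j \ S = A j := by
        rw [Finset.sdiff_eq_self_iff_disjoint]
        exact disjoint_of_subset_right hSA (hA j j1 h)
      simp only [P, Option.elim, this]
      omega
  have hPfib : ∀ j, q + xFib H D1 fv fe (some j) ≤ ((P (some j)).card : ℝ) := by
    intro j
    have h1 := hfibs j
    have h2 := hPs j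
    have h3 := hcap j
    have h4 : xFib H D1 fv fe (some j) + r ≤ (P (some j)).card + S.card := by
      split_ifs at h2 h3 <;> omega
    have h5 : (xFib H D1 fv fe (some j) : ℝ) + r ≤ (P (some j)).card + S.card := by
      exact_mod_cast h4
    have h6 : 0 ≤ 2 * Δ * m := by positivity
    linarith
  have hfibn' : (xFib H D1 fv fe none : ℝ) ≤ 2 * Δ * m := le_trans (by exact_mod_cast hfibn) hspm
  have hPn : q + xFib H D1 fv fe none ≤ c ^ Δ * (S.card : ℝ) := by linarith
  have hfeX : ∀ x ∈ D1, ∀ w, fe s(x, w) = none := by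
    intro x hx w
    have : se s(x, w) := ⟨x, hx, by simp⟩
    simp [fe, this]
  obtain ⟨φ, ψ, hI⟩ := xp_bulk R hsym c ε hc hc1 hε htyp H Δ hΔ hdeg D1 φ1 ψ1 hPE P fv fe hP hPv
    hPe q m
    (by
      intro w hw
      by_cases h : sv w
      · have e1 : fv w = none := by simp [fv, h]
        rw [e1]
        refine hPn.trans ((hSc w hw).trans ?_)
        have e2 : S.filter (fun v => ∀ x ∈ D1, H.Adj x w → XThick R c S (φ1 x) v) ⊆
          (P none).filter (fun v => ∀ x ∈ D1, H.Adj x w →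
            XThick R c (P (fe s(x, w))) (φ1 x) v) := by
          intro v hv
          obtain ⟨h1, h2⟩ := mem_filter.1 hv
          refine mem_filter.2 ⟨h1, fun x hx hxw => ?_⟩
          rw [hfeX x hx w]
          exact h2 x hx hxw
        exact_mod_cast card_le_card e2
      · have e1 : fv w = some (fv0 w) := by simp [fv, h]
        rw [e1]
        have e2 : (P (some (fv0 w))).filter (fun v => ∀ x ∈ D1, H.Adj x w →
            XThick R c (P (fe s(x, w))) (φ1 x) v) = P (some (fv0 w)) := by
          apply filter_true_of_mem
          exact fun v _ x hx hxw => absurd ⟨x, hx, hxw⟩ h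
        rw [e2]
        exact hPfib _)
    (by
      intro e _
      cases hfe : fe e with
      | none => exact hPn.trans hcS
      | some j => exact hPfib j)
    (by
      intro x hx w _ _
      rw [hfeX x hx w]
      exact hPn.trans hcS2)
    hεc hq hm0 hq2 cf hcf hcfm
  refine ⟨φ, ψ, hI.pe, hI.eqv, hI.eqe, ?_, ?_, ?_⟩
  · intro w hw
    obtain ⟨j, hj⟩ := hPA (fv w)
    exact ⟨j, hj (hI.memv w (mem_univ _) hw)⟩
  · intro e he he1
    obtain ⟨j, hj⟩ := hPA (fe e)
    exact ⟨j, hj (hI.meme e he he1)⟩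
  · intro j
    set U : Finset V := univ.image φ ∪ (xEdges H univ).image ψ with hU
    have hu : ∀ o, (U ∩ P o).card ≤ xFib H D1 fv fe o := fun o => hI.used_card hP hPv hPe o
    have h1 := hu (some j)
    have h2 := hu none
    have h3 := hfibs j
    have h4 := hcap j
    have h5 : (A j ∩ U).card ≤ cap j + (if j = j1 then sp else 0) := by
      split_ifs with h
      · have : A j ∩ U ⊆ (U ∩ P (some j)) ∪ (U ∩ P none) := by
          intro v hv
          obtain ⟨h1, h2⟩ := mem_inter.1 hv
          by_cases h3 : v ∈ S
          · exact mem_union_right _ (mem_inter.2 ⟨h2, h3⟩)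
          · exact mem_union_left _ (mem_inter.2 ⟨h2, mem_sdiff.2 ⟨h1, h3⟩⟩)
        have := (card_le_card this).trans (card_union_le _ _)
        omega
      · have : A j ∩ U ⊆ U ∩ P (some j) := by
          intro v hv
          obtain ⟨h1, h2⟩ := mem_inter.1 hv
          refine mem_inter.2 ⟨h2, mem_sdiff.2 ⟨h1, fun h3 => ?_⟩⟩
          exact disjoint_left.1 (hA j j1 h) h1 (hSA h3)
        have := card_le_card this
        omega
    have h6 := card_sdiff_add_card_inter (A j) U
    omega

noncomputable def xM {W ι : Type} [Fintype ι] (g : ι → W × W) : Finset (Sym2 W) :=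
  univ.image (fun i => s((g i).1, (g i).2))

lemma mem_xM {W ι : Type} [Fintype ι] (g : ι → W × W) (e : Sym2 W) :
    e ∈ xM g ↔ ∃ i, e = s((g i).1, (g i).2) := by
  simp only [xM, mem_image, mem_univ, true_and]
  exact ⟨fun ⟨i, h⟩ => ⟨i, h.symm⟩, fun ⟨i, h⟩ => ⟨i, h.symm⟩⟩

/-- the graph without the special edges -/
def xH {W ι : Type} [Fintype ι] (H : SimpleGraph W) (g : ι → W × W) : SimpleGraph W :=
  H.deleteEdges (xM g : Set (Sym2 W))

lemma xH_adj {W ι : Type} [Fintype ι] (H : SimpleGraph W) (g : ι → W × W) (x y : W) :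
    (xH H g).Adj x y ↔ H.Adj x y ∧ s(x, y) ∉ xM g := by
  simp [xH, SimpleGraph.deleteEdges_adj]

lemma xH_edges {W ι : Type} [Fintype W] [Fintype ι] (H : SimpleGraph W) (g : ι → W × W) :
    xEdges (xH H g) univ = xEdges H univ \ xM g := by
  ext e
  induction e using Sym2.ind with
  | _ x y =>
    rw [mem_sdiff, xEdges_mk, xEdges_mk, xH_adj]
    tauto

lemma xpv_fst {V : Type} (t : V × V) : t.1 ∈ xpv t := by simp [xpv]
lemma xpv_snd {V : Type} (t : V × V) : t.2 ∈ xpv t := by simp [xpv]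

lemma XSp.idx {W ι : Type} {H : SimpleGraph W} {K : Finset W} {g : ι → W × W} (h : XSp H K g)
    {i j : ι} {x : W} (hi : x ∈ xpv (g i)) (hj : x ∈ xpv (g j)) : i = j := by
  by_contra hne
  exact h.ne i j hne x hi x hj rfl

lemma XSp.idxM {W ι : Type} {H : SimpleGraph W} {K : Finset W} {g : ι → W × W} (h : XSp H K g)
    {i j : ι} (he : s((g i).1, (g i).2) = s((g j).1, (g j).2)) : i = j := by
  have h1 : (g i).1 ∈ s((g j).1, (g j).2) := he ▸ Sym2.mem_mk_left _ _
  apply h.idx (xpv_fst (g i))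
  simpa [xpv] using h1

lemma xM_card {W ι : Type} [Fintype ι] {H : SimpleGraph W} {K : Finset W} {g : ι → W × W}
    (h : XSp H K g) : (xM g).card = Fintype.card ι := by
  rw [xM, card_image_of_injective, card_univ]
  exact fun i j hij => h.idxM hij

lemma xM_sub {W ι : Type} [Fintype W] [Fintype ι] {H : SimpleGraph W} {K : Finset W}
    {g : ι → W × W} (h : XSp H K g) : xM g ⊆ xEdges H univ := by
  intro e he
  obtain ⟨i, rfl⟩ := (mem_xM g e).1 he
  exact (xEdges_mk _ _ _ _).2 ⟨h.adj i, mem_univ _, mem_univ _⟩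

lemma xp_final {V W ι : Type} [Fintype W] [Fintype ι] (R : V → V → V → Prop)
    (hsym : ∀ x y z, R x y z → R y x z) (H : SimpleGraph W) (K : Finset W) (g : ι → W × W)
    (hg : XSp H K g) (φ : W → V) (ψ : Sym2 W → V) (hPE : XPE R (xH H g) univ φ ψ) (p : ι → V × V)
    (hφ1 : ∀ i, φ (g i).1 = (p i).1) (hφ2 : ∀ i, φ (g i).2 = (p i).2) (k : ι → V)
    (hk : Function.Injective k) (hR : ∀ i, R (p i).1 (p i).2 (k i))
    (hk1 : ∀ i x, k i ≠ φ x) (hk2 : ∀ i, ∀ e ∈ xEdges (xH H g) univ, k i ≠ ψ e) :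
    ∃ ψ', XPE R H univ φ ψ' := by
  let ψ' : Sym2 W → V := fun e =>
    if h : ∃ i, e = s((g i).1, (g i).2) then k h.choose else ψ e
  have h1 : ∀ i, ψ' s((g i).1, (g i).2) = k i := by
    intro i
    have h : ∃ j, s((g i).1, (g i).2) = s((g j).1, (g j).2) := ⟨i, rfl⟩
    have : ψ' s((g i).1, (g i).2) = k h.choose := dif_pos h
    rw [this, ← hg.idxM h.choose_spec]
  have h2 : ∀ e, e ∉ xM g → ψ' e = ψ e := fun e he => dif_neg (fun h => he ((mem_xM g e).2 h))
  have h3 : ∀ e ∈ xEdges H univ, e ∉ xM g → e ∈ xEdges (xH H g) univ := fun e he he' => by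
    rw [xH_edges]; exact mem_sdiff.2 ⟨he, he'⟩
  refine ⟨ψ', hPE.injv, ?_, ?_, ?_⟩
  · intro e he e' he' hee
    by_cases hM : e ∈ xM g <;> by_cases hM' : e' ∈ xM g
    · obtain ⟨i, rfl⟩ := (mem_xM g e).1 hM
      obtain ⟨j, rfl⟩ := (mem_xM g e').1 hM'
      rw [h1, h1] at hee
      rw [hk hee]
    · obtain ⟨i, rfl⟩ := (mem_xM g e).1 hM
      rw [h1, h2 e' hM'] at hee
      exact absurd hee (hk2 i e' (h3 e' he' hM'))
    · obtain ⟨i, rfl⟩ := (mem_xM g e').1 hM'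
      rw [h1, h2 e hM] at hee
      exact absurd hee.symm (hk2 i e (h3 e he hM))
    · rw [h2 e hM, h2 e' hM'] at hee
      exact hPE.inje (h3 e he hM) (h3 e' he' hM') hee
  · intro x hx e he hxe
    by_cases hM : e ∈ xM g
    · obtain ⟨i, rfl⟩ := (mem_xM g e).1 hM
      rw [h1] at hxe
      exact hk1 i x hxe.symm
    · rw [h2 e hM] at hxe
      exact hPE.disj x hx e (h3 e he hM) hxe
  · intro x hx y hy hxy
    by_cases hM : s(x, y) ∈ xM g
    · obtain ⟨i, hi⟩ := (mem_xM g _).1 hM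
      rw [hi, h1]
      rcases Sym2.eq_iff.1 hi with ⟨rfl, rfl⟩ | ⟨rfl, rfl⟩
      · rw [hφ1, hφ2]; exact hR i
      · rw [hφ1, hφ2]; exact hsym _ _ _ (hR i)
    · rw [h2 _ hM]
      exact hPE.edge x hx y hy ((xH_adj _ _ _ _).2 ⟨hxy, hM⟩)

lemma xp_phi0 {V W ι : Type} [Nonempty V] (H : SimpleGraph W) (K : Finset W) (g : ι → W × W)
    (hg : XSp H K g) (p : ι → V × V) :
    ∃ φ0 : W → V, (∀ i, φ0 (g i).1 = (p i).1) ∧ ∀ i, φ0 (g i).2 = (p i).2 := by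
  refine ⟨fun x => if h : ∃ i, x = (g i).1 then (p h.choose).1 else
    if h : ∃ i, x = (g i).2 then (p h.choose).2 else Classical.arbitrary V, ?_, ?_⟩
  · intro i
    have h : ∃ j, (g i).1 = (g j).1 := ⟨i, rfl⟩
    have hi : i = h.choose := by
      apply hg.idx (xpv_fst (g i))
      have := xpv_fst (g h.choose)
      rwa [← h.choose_spec] at this
    simp only [dif_pos h]
    rw [← hi]
  · intro i
    have h0 : ¬ ∃ j, (g i).2 = (g j).1 := by
      rintro ⟨j, hj⟩
      have : i = j := by
        apply hg.idx (xpv_snd (g i))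
        rw [hj]; exact xpv_fst (g j)
      subst this
      exact (hg.adj i).ne hj.symm
    have h : ∃ j, (g i).2 = (g j).2 := ⟨i, rfl⟩
    have hi : i = h.choose := by
      apply hg.idx (xpv_snd (g i))
      have := xpv_snd (g h.choose)
      rwa [← h.choose_spec] at this
    simp only [dif_neg h0, dif_pos h]
    rw [← hi]

lemma xp_caseB {V W J ι Q : Type} [Fintype V] [Fintype W] [Nonempty V] [Fintype J] [Fintype ι]
    (R : V → V → V → Prop)
    (hsym : ∀ x y z, R x y z → R y x z) (c ε : ℝ) (hc : 0 < c) (hc1 : c ≤ 1) (hε : 0 < ε)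
    (htyp : XTyp R c ε) (p : ι → V × V) (C : Finset V) (A : J → Finset V) (r : ℕ)
    (hAbs : XAbs R c J ι p C A r) (j1 : J) (hAr : ∀ j, 2 * r ≤ (A j).card)
    (H : SimpleGraph W) (Δ : ℕ) (hΔ : 1 ≤ Δ) (hdeg : ∀ w, degOf H w ≤ Δ)
    (X : Finset W) (cf : W → Q)
    (hcf : ∀ x y, x ∉ X → y ∉ X → H.Adj x y → cf x = cf y) (m : ℝ) (hm0 : 0 ≤ m)
    (hm : ∀ a, ((((univ : Finset W) \ X).filter (fun w => cf w = a)).card : ℝ) ≤ m)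
    (hXm : (X.card : ℝ) ≤ m)
    (K : Finset W) (g : ι → W × W) (hKX : Disjoint K X)
    (hclo : ∀ x y, x ∉ X → y ∉ X → H.Adj x y → x ∈ K → y ∈ K) (hg : XSp H K g)
    (hcount : Fintype.card W + edgeCnt H ≤ Fintype.card V)
    (hn1 : Δ * ε * (Fintype.card V : ℝ) + (K.card + X.card) + 4 * Fintype.card ι <
      c ^ Δ * (c ^ 2 * Fintype.card V))
    (hn2 : 4 * (Fintype.card ι : ℝ) + (Δ + 1) * (K.card + X.card) ≤ c * Fintype.card V)
    (hn3 : ε * (Fintype.card V : ℝ) ≤ c ^ Δ * ((r / 2 : ℕ) : ℝ))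
    (q : ℝ) (hq0 : 0 ≤ q) (hq1 : q + 2 * Δ * m ≤ c ^ Δ * ((r / 2 : ℕ) : ℝ))
    (hεc : ε ≤ c ^ Δ) (hq : Δ * ε * (Fintype.card V : ℝ) + m < c ^ Δ * q)
    (hq2 : (Δ + 1) * m ≤ c * q) :
    ∃ φ ψ, XPE R H univ φ ψ := by
  obtain ⟨φ0, hφ01, hφ02⟩ := xp_phi0 H K g hg p
  set H' := xH H g with hH'
  have hHle : ∀ x y, H'.Adj x y → H.Adj x y := fun x y h => ((xH_adj H g x y).1 h).1
  have hdeg' : ∀ w, degOf H' w ≤ Δ := by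
    intro w
    refine le_trans (card_le_card ?_) (hdeg w)
    intro x hx
    rw [mem_filter] at hx ⊢
    exact ⟨hx.1, hHle _ _ hx.2⟩
  set D0 : Finset W := univ.biUnion (fun i => xpv (g i)) with hD0
  have hmD0 : ∀ x, x ∈ D0 ↔ ∃ i, x ∈ xpv (g i) := by
    intro x; simp [hD0]
  have hD0K : ∀ x ∈ D0, x ∈ K := by
    intro x hx
    obtain ⟨i, hi⟩ := (hmD0 x).1 hx
    exact hg.mem i x hi
  have hφ0p : ∀ i, ∀ x ∈ xpv (g i), φ0 x ∈ xpv (p i) := by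
    intro i x hx
    simp only [xpv, mem_insert, mem_singleton] at hx
    rcases hx with rfl | rfl
    · rw [hφ01]; exact xpv_fst _
    · rw [hφ02]; exact xpv_snd _
  have hD0c : D0.card = 2 * Fintype.card ι := by
    rw [hD0, card_biUnion]
    · rw [sum_congr rfl (fun i _ => show (xpv (g i)).card = 2 from card_pair (hg.adj i).ne)]
      simp [mul_comm]
    · intro i _ j _ hij
      refine Finset.disjoint_left.2 ?_
      intro x hx hx'
      exact hij (hg.idx hx hx')
  have hinj0 : Set.InjOn φ0 D0 := by
    intro x hx y hy hxy
    obtain ⟨i, hi⟩ := (hmD0 x).1 hx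
    obtain ⟨j, hj⟩ := (hmD0 y).1 hy
    have hij : i = j := by
      by_contra hne
      exact Finset.disjoint_left.1 (hAbs.pdis i j hne) (hφ0p i x hi) (hxy ▸ hφ0p j y hj)
    subst hij
    have hne := hAbs.pne i
    simp only [xpv, mem_insert, mem_singleton] at hi hj
    rcases hi with rfl | rfl <;> rcases hj with rfl | rfl
    · rfl
    · rw [hφ01, hφ02] at hxy; exact absurd hxy hne
    · rw [hφ01, hφ02] at hxy; exact absurd hxy.symm hne
    · rfl
  have hno : ∀ x ∈ D0, ∀ y ∈ D0, ¬ H'.Adj x y := by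
    intro x hx y hy hadj
    obtain ⟨i, hi⟩ := (hmD0 x).1 hx
    obtain ⟨j, hj⟩ := (hmD0 y).1 hy
    have hA := (xH_adj H g x y).1 hadj
    by_cases hij : i = j
    · subst hij
      apply hA.2
      rw [mem_xM]
      refine ⟨i, ?_⟩
      have hne := hA.1.ne
      simp only [xpv, mem_insert, mem_singleton] at hi hj
      rcases hi with rfl | rfl <;> rcases hj with rfl | rfl
      · exact absurd rfl hne
      · rfl
      · exact Sym2.eq_swap
      · exact absurd rfl hne
    · exact hg.nadj i j hij x hi y hj hA.1
  set K1 : Finset W := (K \ D0) ∪ X with hK1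
  have hXD0 : ∀ x ∈ D0, x ∉ X := fun x hx hX => Finset.disjoint_left.1 hKX (hD0K x hx) hX
  have hDK : Disjoint D0 K1 := by
    rw [Finset.disjoint_left]
    intro x hx hx'
    rcases mem_union.1 hx' with h | h
    · exact (mem_sdiff.1 h).2 hx
    · exact hXD0 x hx h
  have hD1 : ∀ x, x ∈ D0 ∪ K1 ↔ x ∈ K ∨ x ∈ X := by
    intro x
    simp only [hK1, mem_union, mem_sdiff]
    constructor
    · rintro (h | h | h)
      · exact Or.inl (hD0K x h)
      · exact Or.inl h.1
      · exact Or.inr h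
    · rintro (h | h)
      · by_cases hx : x ∈ D0 <;> tauto
      · tauto
  have hK1c : (K1.card : ℝ) ≤ K.card + X.card := by
    have : K1.card ≤ K.card + X.card :=
      (card_union_le _ _).trans (Nat.add_le_add_right (card_le_card sdiff_subset) _)
    exact_mod_cast this
  -- reserved sets
  have hSj : ∀ j, ∃ S ⊆ A j, S.card = 2 * r := fun j => exists_subset_card_eq (hAr j)
  choose Sj hSjA hSjc using hSj
  obtain ⟨S, hSS, hSc⟩ : ∃ S ⊆ Sj j1, S.card = r / 2 :=
    exists_subset_card_eq (by rw [hSjc]; omega)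
  set PP : Finset V := univ.biUnion (fun i => xpv (p i)) with hPP
  have hmPP : ∀ v, v ∈ PP ↔ ∃ i, v ∈ xpv (p i) := by
    intro x; simp [hPP]
  have hPPc : PP.card ≤ 2 * Fintype.card ι := by
    refine card_biUnion_le.trans ((sum_le_card_nsmul _ _ 2 (fun i _ => xpv_card _)).trans ?_)
    simp [mul_comm]
  set Forb : Finset V := PP ∪ C ∪ univ.biUnion Sj with hForb
  have hFP : ∀ i, ∀ v ∈ xpv (p i), v ∈ Forb := fun i v hv =>
    mem_union_left _ (mem_union_left _ ((hmPP v).2 ⟨i, hv⟩))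
  have hFC : ∀ v ∈ C, v ∈ Forb := fun v hv =>
    mem_union_left _ (mem_union_right _ hv)
  have hFS : ∀ j, ∀ v ∈ Sj j, v ∈ Forb := fun j v hv =>
    mem_union_right _ (mem_biUnion.2 ⟨j, mem_univ _, hv⟩)
  have hForbc : Forb.card ≤ 4 * Fintype.card ι := by
    have h1 : (univ.biUnion Sj).card ≤ Fintype.card J * (2 * r) := by
      refine card_biUnion_le.trans ((sum_le_card_nsmul _ _ (2 * r) (fun i _ => (hSjc i).le)).trans ?_)
      simp
    have h2 : Forb.card ≤ PP.card + C.card + (univ.biUnion Sj).card :=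
      (card_union_le _ _).trans (Nat.add_le_add_right (card_union_le _ _) _)
    have h3 := hAbs.card
    have h4 : Fintype.card J * (2 * r) = 2 * (Fintype.card J * r) := by ring
    omega
  have hForbr : (Forb.card : ℝ) ≤ 4 * Fintype.card ι := by exact_mod_cast hForbc
  have hc2 : c ^ 2 ≤ 1 := pow_le_one₀ hc.le hc1
  have hcand : ∀ w ∈ K1, Δ * ε * (Fintype.card V : ℝ) + K1.card + Forb.card < c ^ Δ *
      ((univ : Finset V).filter (fun v => ∀ x ∈ D0, H'.Adj x w →
        XThick R c univ (φ0 x) v)).card := by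
    intro w hw
    have hkey : c ^ 2 * (Fintype.card V : ℝ) ≤ ((univ : Finset V).filter (fun v =>
        ∀ x ∈ D0, H'.Adj x w → XThick R c univ (φ0 x) v)).card := by
      by_cases hex : ∃ i, ∃ x ∈ xpv (g i), H.Adj x w
      · obtain ⟨i, x0, hx0, hx0w⟩ := hex
        refine (hAbs.gp i).trans ?_
        have : ((univ : Finset V).filter (fun w =>
            XThick R c univ (p i).1 w ∧ XThick R c univ (p i).2 w)) ⊆
            ((univ : Finset V).filter (fun v =>
              ∀ x ∈ D0, H'.Adj x w → XThick R c univ (φ0 x) v)) := by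
          intro v hv
          rw [xmem_filter] at hv ⊢
          refine ⟨mem_univ _, ?_⟩
          intro x hx hxw
          obtain ⟨j, hj⟩ := (hmD0 x).1 hx
          have hij : i = j := by
            by_contra hne
            exact hg.ncom i j hne x0 hx0 x hj w hx0w (hHle _ _ hxw)
          subst hij
          simp only [xpv, mem_insert, mem_singleton] at hj
          rcases hj with rfl | rfl
          · rw [hφ01]; exact hv.2.1
          · rw [hφ02]; exact hv.2.2
        exact_mod_cast card_le_card this
      · have : ((univ : Finset V).filter (fun v =>
              ∀ x ∈ D0, H'.Adj x w → XThick R c univ (φ0 x) v)) = univ := by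
          rw [filter_true_of_mem]
          intro v _ x hx hxw
          obtain ⟨j, hj⟩ := (hmD0 x).1 hx
          exact absurd ⟨j, x, hj, hHle _ _ hxw⟩ hex
        rw [this, card_univ]
        have h0 : (0 : ℝ) ≤ Fintype.card V := by positivity
        calc c ^ 2 * (Fintype.card V : ℝ) ≤ 1 * Fintype.card V := by gcongr
          _ = _ := one_mul _
    have h5 : c ^ Δ * (c ^ 2 * (Fintype.card V : ℝ)) ≤ c ^ Δ * ((univ : Finset V).filter (fun v =>
        ∀ x ∈ D0, H'.Adj x w → XThick R c univ (φ0 x) v)).card :=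
      mul_le_mul_of_nonneg_left hkey (by positivity)
    linarith
  have hout : ∀ w, w ∉ D0 ∪ K1 → ∀ x ∈ D0, ¬ H'.Adj x w := by
    intro w hw x hx hadj
    rw [hD1] at hw
    push Not at hw
    exact hw.1 (hclo x w (hXD0 x hx) hw.2 (hHle _ _ hadj) (hD0K x hx))
  have hcol : (Forb.card : ℝ) + K1.card + Δ * K1.card ≤ c * (Fintype.card V : ℝ) := by
    have : ((Δ : ℝ) + 1) * K1.card ≤ (Δ + 1) * (K.card + X.card) :=
      mul_le_mul_of_nonneg_left hK1c (by positivity)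
    linarith
  obtain ⟨φ1, ψ1, hPE1, hφ10, hφ1F, hψ1F, hS1⟩ := xp_stage1 R hsym c ε hc hc1 hε htyp H' Δ hΔ hdeg'
    D0 K1 hDK φ0 hinj0 hno Forb
    (fun x hx => by
      obtain ⟨i, hi⟩ := (hmD0 x).1 hx
      exact hFP i _ (hφ0p i x hi)) S (by rw [hSc]; exact hn3) hcand hout hcol
  set D1 : Finset W := D0 ∪ K1 with hD1d
  set U1 : Finset V := D1.image φ1 ∪ (xEdges H' D1).image ψ1 with hU1
  set A' : J → Finset V := fun j => A j \ U1 with hA'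
  have hφ1D0 : ∀ x ∈ D0, ∃ i, φ1 x ∈ xpv (p i) := by
    intro x hx
    obtain ⟨i, hi⟩ := (hmD0 x).1 hx
    exact ⟨i, by rw [hφ10 x hx]; exact hφ0p i x hi⟩
  have hSjA' : ∀ j, Sj j ⊆ A' j := by
    intro j v hv
    refine mem_sdiff.2 ⟨hSjA j hv, ?_⟩
    intro hvU
    rcases mem_union.1 hvU with h | h
    · obtain ⟨x, hx, rfl⟩ := mem_image.1 h
      rcases mem_union.1 hx with hx | hx
      · obtain ⟨i, hi⟩ := hφ1D0 x hx
        exact Finset.disjoint_left.1 (hAbs.pA i j) hi (hSjA j hv)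
      · exact hφ1F x hx (hFS j _ hv)
    · obtain ⟨e, he, rfl⟩ := mem_image.1 h
      exact hψ1F e he (hFS j _ hv)
  have hcnt : ((univ : Finset W) \ D1).card + (xEdges H' univ \ xEdges H' D1).card +
      Fintype.card J * r ≤ ∑ j, (A' j).card := by
    have h1 : ((univ : Finset W) \ D1).card + D1.card = Fintype.card W := by
      rw [card_sdiff_add_card_eq_card (subset_univ _), card_univ]
    have h2 : (xEdges H' univ \ xEdges H' D1).card + (xEdges H' D1).card =
        (xEdges H' univ).card :=
      card_sdiff_add_card_eq_card (xEdges_mono H' (subset_univ _))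
    have h3 : (xEdges H' univ).card + Fintype.card ι = edgeCnt H := by
      rw [hH', xH_edges, ← xM_card hg, card_sdiff_add_card_eq_card (xM_sub hg), xEdges_univ_card]
    have h4 : D1.card = 2 * Fintype.card ι + K1.card := by
      rw [hD1d, card_union_of_disjoint hDK, hD0c]
    have h5 := hAbs.card
    have h6 : Fintype.card V ≤ PP.card + C.card + (univ.biUnion A).card := by
      rw [← card_univ]
      refine (card_le_card (t := PP ∪ C ∪ univ.biUnion A) ?_).trans
        ((card_union_le _ _).trans (Nat.add_le_add_right (card_union_le _ _) _))
      intro v _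
      rcases hAbs.cover v with h | h | ⟨j, h⟩
      · exact mem_union_left _ (mem_union_left _ ((hmPP v).2 h))
      · exact mem_union_left _ (mem_union_right _ h)
      · exact mem_union_right _ (mem_biUnion.2 ⟨j, mem_univ _, h⟩)
    have h7 : (univ.biUnion A).card ≤ (univ.biUnion A').card +
        (K1.image φ1 ∪ (xEdges H' D1).image ψ1).card := by
      refine (card_le_card ?_).trans (card_union_le _ _)
      intro v hv
      obtain ⟨j, _, hj⟩ := mem_biUnion.1 hv
      by_cases hvU : v ∈ U1
      · refine mem_union_right _ ?_
        rcases mem_union.1 hvU with h | h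
        · obtain ⟨x, hx, rfl⟩ := mem_image.1 h
          rcases mem_union.1 hx with hx | hx
          · obtain ⟨i, hi⟩ := hφ1D0 x hx
            exact absurd hj (Finset.disjoint_left.1 (hAbs.pA i j) hi)
          · exact mem_union_left _ (mem_image_of_mem _ hx)
        · exact mem_union_right _ h
      · exact mem_union_left _ (mem_biUnion.2 ⟨j, mem_univ _, mem_sdiff.2 ⟨hj, hvU⟩⟩)
    have h8 : (K1.image φ1 ∪ (xEdges H' D1).image ψ1).card ≤ K1.card + (xEdges H' D1).card :=
      (card_union_le _ _).trans (Nat.add_le_add card_image_le card_image_le)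
    have h9 : (univ.biUnion A').card ≤ ∑ j, (A' j).card := card_biUnion_le
    omega
  have hXsub : X ⊆ D1 := fun x hx => (hD1 x).2 (Or.inr hx)
  obtain ⟨φ, ψ, hPE, hφD, hψD, hφA, hψA, hleft⟩ := xp_bulk2 R hsym c ε hc hc1 hε htyp H' Δ hΔ hdeg'
    D1 φ1 ψ1 hPE1 A'
    (fun i j hij => (hAbs.Adis i j hij).mono sdiff_subset sdiff_subset)
    (fun j x hx h => (mem_sdiff.1 h).2 (mem_union_left _ (mem_image_of_mem _ hx)))
    (fun j e he h => (mem_sdiff.1 h).2 (mem_union_right _ (mem_image_of_mem _ he)))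
    r j1 S (hSS.trans (hSjA' j1)) (by rw [hSc]; omega)
    (fun j => by rw [← hSjc j]; exact card_le_card (hSjA' j))
    X
    (by
      intro w hw x hx hadj
      by_contra hxX
      rw [hD1] at hw hx
      push Not at hw
      have hxK : x ∈ K := by tauto
      exact hw.1 (hclo x w hxX hw.2 (hHle _ _ hadj) hxK))
    hcnt hS1 q m hXm hq0 (by rw [hSc]; exact hq1) hεc hq hm0 hq2 cf
    (fun x y hx hy hadj => hcf x y (fun h => hx (hXsub h)) (fun h => hy (hXsub h)) (hHle _ _ hadj))
    (fun a => le_trans (by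
      have : ((univ : Finset W) \ D1).filter (fun w => cf w = a) ⊆
          ((univ : Finset W) \ X).filter (fun w => cf w = a) :=
        filter_subset_filter _ (sdiff_subset_sdiff (subset_refl _) hXsub)
      exact_mod_cast card_le_card this) (hm a))
  have hD0D1 : D0 ⊆ D1 := subset_union_left
  obtain ⟨k, hkinj, hkR, hkmem⟩ := hAbs.abs
    (fun j => A' j \ (univ.image φ ∪ (xEdges H' univ).image ψ))
    (fun j => sdiff_subset.trans sdiff_subset) hleft
  have hgD0 : ∀ i, ∀ x ∈ xpv (g i), x ∈ D0 := fun i x hx => (hmD0 x).2 ⟨i, hx⟩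
  have e1 : ∀ i, φ (g i).1 = (p i).1 := fun i => by
    have h := hgD0 i _ (xpv_fst _)
    rw [hφD _ (hD0D1 h), hφ10 _ h, hφ01]
  have e2 : ∀ i, φ (g i).2 = (p i).2 := fun i => by
    have h := hgD0 i _ (xpv_snd _)
    rw [hφD _ (hD0D1 h), hφ10 _ h, hφ02]
  have e3 : ∀ i x, k i ≠ φ x := by
    intro i x hix
    rcases hkmem i with h | ⟨j, h⟩
    · rw [hix] at h
      by_cases hx : x ∈ D1
      · rw [hφD x hx] at h
        rcases mem_union.1 hx with hx | hx
        · obtain ⟨i', hi'⟩ := hφ1D0 x hx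
          exact Finset.disjoint_left.1 (hAbs.pC i') hi' h
        · exact hφ1F x hx (hFC _ h)
      · obtain ⟨j, hj⟩ := hφA x hx
        exact Finset.disjoint_left.1 (hAbs.CA j) h (mem_sdiff.1 hj).1
    · rw [hix] at h
      exact (mem_sdiff.1 h).2 (mem_union_left _ (mem_image_of_mem _ (mem_univ _)))
  have e4 : ∀ i, ∀ e ∈ xEdges H' univ, k i ≠ ψ e := by
    intro i e he hie
    rcases hkmem i with h | ⟨j, h⟩
    · rw [hie] at h
      by_cases hx : e ∈ xEdges H' D1
      · rw [hψD e hx] at h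
        exact hψ1F e hx (hFC _ h)
      · obtain ⟨j, hj⟩ := hψA e he hx
        exact Finset.disjoint_left.1 (hAbs.CA j) h (mem_sdiff.1 hj).1
    · rw [hie] at h
      exact (mem_sdiff.1 h).2 (mem_union_right _ (mem_image_of_mem _ he))
  obtain ⟨ψ', h'⟩ := xp_final R hsym H K g hg φ ψ hPE p e1 e2 k hkinj hkR e3 e4
  exact ⟨φ, ψ', h'⟩

lemma xp_hdeg {V : Type} [Fintype V] (E : Set (Finset V)) (hE : ∀ e ∈ E, e.card = 3) (v : V) :
    hDeg E v ≤ ((univ : Finset (V × V)).filter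
      (fun p => ({v, p.1, p.2} : Finset V) ∈ E)).card := by
  have h : ∀ e : Finset V, e ∈ E ∧ v ∈ e → ∃ p : V × V, e = {v, p.1, p.2} := by
    rintro e ⟨he, hv⟩
    have h2 : (e.erase v).card = 2 := by rw [card_erase_of_mem hv, hE e he]
    obtain ⟨x, y, _, hxy⟩ := card_eq_two.1 h2
    exact ⟨(x, y), by rw [← hxy, insert_erase hv]⟩
  rw [hDeg]
  refine card_le_card_of_injOn (fun e => if h' : e ∈ E ∧ v ∈ e then (h e h').choose else (v, v)) ?_ ?_
  · intro e he
    have he' : e ∈ E ∧ v ∈ e := by simpa using he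
    simp only [dif_pos he']
    have := (h e he').choose_spec
    simp only [coe_filter, mem_univ, true_and, Set.mem_setOf_eq]
    rw [← this]; exact he'.1
  · intro e he e' he' hee
    have h1 : e ∈ E ∧ v ∈ e := by simpa using he
    have h2 : e' ∈ E ∧ v ∈ e' := by simpa using he'
    simp only [dif_pos h1, dif_pos h2] at hee
    rw [(h e h1).choose_spec, (h e' h2).choose_spec, hee]

set_option maxHeartbeats 1000000 in
lemma xp_main (Δ : ℕ) (hΔ : 1 ≤ Δ) (d α : ℝ) (hd : 0 < d) (hα : 0 < α) (hd1 : d ≤ 1)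
    (hα1 : α ≤ 1) :
    ∃ (η μ : ℝ) (n₀ : ℕ), 0 < η ∧ 0 < μ ∧
    ∀ n : ℕ, n₀ ≤ n →
    ∀ (V : Type) [Fintype V] (E : Set (Finset V)),
      Fintype.card V = n →
      (∀ e ∈ E, e.card = 3) →
      (∀ U₁ U₂ U₃ : Finset V,
        d * (U₁.card : ℝ) * (U₂.card : ℝ) * (U₃.card : ℝ) - η * (n : ℝ) ^ 3 ≤
          (tripCount E U₁ U₂ U₃ : ℝ)) →
      (∀ v : V, α * (n : ℝ) ^ 2 ≤ (hDeg E v : ℝ)) →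
      ∀ (W : Type) [Fintype W] (H : SimpleGraph W),
        Separable H μ → (∀ w, degOf H w ≤ Δ) →
        Fintype.card W + edgeCnt H ≤ n →
        HasExpansionCopy E H := by
  have hΔr : (1 : ℝ) ≤ Δ := by exact_mod_cast hΔ
  have hΔ0 : (0 : ℝ) < Δ := by linarith
  obtain ⟨c, hcd⟩ : ∃ c : ℝ, c = d / 4 := ⟨_, rfl⟩
  have hc : 0 < c := by rw [hcd]; positivity
  have hc1 : c ≤ 1 := by linarith
  obtain ⟨a, had⟩ : ∃ a : ℝ, a = c ^ Δ := ⟨_, rfl⟩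
  have ha : 0 < a := by rw [had]; positivity
  have hac : a ≤ c := by
    rw [had]
    calc c ^ Δ ≤ c ^ 1 := pow_le_pow_of_le_one hc.le hc1 hΔ
      _ = c := pow_one c
  have ha1 : a ≤ 1 := hac.trans hc1
  have hc2 : c ^ 2 ≤ 1 := pow_le_one₀ hc.le hc1
  have hc2c : c ^ 2 ≤ c := by nlinarith
  obtain ⟨β, hβd⟩ : ∃ β : ℝ, β = a / (4 * (Δ + 1)) := ⟨_, rfl⟩
  have hβ : 0 < β := by rw [hβd]; positivity
  have hβe : 4 * (Δ + 1) * β = a := by rw [hβd]; field_simp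
  have hβ1 : β ≤ 1 := by nlinarith
  obtain ⟨θ, hθd⟩ : ∃ θ : ℝ, θ = a * c ^ 2 / (4 * (Δ + 1)) := ⟨_, rfl⟩
  have hθ : 0 < θ := by rw [hθd]; positivity
  have hθe : 4 * (Δ + 1) * θ = a * c ^ 2 := by rw [hθd]; field_simp
  have hac2 : a * c ^ 2 ≤ c := by
    calc a * c ^ 2 ≤ 1 * c := by gcongr
      _ = c := one_mul c
  have hac2a : a * c ^ 2 ≤ a := mul_le_of_le_one_right ha.le hc2
  have hθ1 : θ ≤ 1 := by nlinarith
  have hβθ : β * θ ≤ β := mul_le_of_le_one_right hβ.le hθ1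
  have hβθ' : β * θ ≤ θ := mul_le_of_le_one_left hθ.le hβ1
  obtain ⟨ζ, hζd⟩ : ∃ ζ : ℝ, ζ = min (α / 80) (β * θ / (444 * Δ ^ 3)) := ⟨_, rfl⟩
  have hζ : 0 < ζ := by rw [hζd]; positivity
  have hζα : ζ ≤ α / 80 := by rw [hζd]; exact min_le_left _ _
  have hZ : 444 * (Δ : ℝ) ^ 3 * ζ ≤ β * θ := by
    have h : ζ ≤ β * θ / (444 * Δ ^ 3) := by rw [hζd]; exact min_le_right _ _
    rw [le_div_iff₀ (by positivity)] at h
    linarith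
  have hΔ3 : (1 : ℝ) ≤ (Δ : ℝ) ^ 3 := one_le_pow₀ hΔr
  have hZ2 : 444 * ζ ≤ θ := by
    have : ζ ≤ (Δ : ℝ) ^ 3 * ζ := le_mul_of_one_le_left hζ.le hΔ3
    linarith
  obtain ⟨ρ, ε0, n0, hρ, hε0, habs⟩ := xp_absorber α ζ c hα hα1 hζ hζα hc hc1
  obtain ⟨ε, hεd⟩ : ∃ ε : ℝ, ε = min ε0 (min (a * c ^ 2 / (4 * Δ)) (a ^ 2 * ρ / (32 * Δ))) :=
    ⟨_, rfl⟩
  have hε : 0 < ε := by rw [hεd]; positivity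
  have hεε0 : ε ≤ ε0 := by rw [hεd]; exact min_le_left _ _
  have hE1 : Δ * ε ≤ a * c ^ 2 / 4 := by
    have h : ε ≤ a * c ^ 2 / (4 * Δ) := by
      rw [hεd]; exact (min_le_right _ _).trans (min_le_left _ _)
    rw [le_div_iff₀ (by positivity)] at h
    linarith
  have hE2 : Δ * ε ≤ a ^ 2 * ρ / 32 := by
    have h : ε ≤ a ^ 2 * ρ / (32 * Δ) := by
      rw [hεd]; exact (min_le_right _ _).trans (min_le_right _ _)
    rw [le_div_iff₀ (by positivity)] at h
    linarith
  have hεΔ : ε ≤ Δ * ε := le_mul_of_one_le_left hε.le hΔr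
  have hεa : ε ≤ a := by linarith
  obtain ⟨μ, hμd⟩ : ∃ μ : ℝ, μ = min (β * θ / (12 * Δ)) (a ^ 2 * ρ / (32 * (Δ + 1))) := ⟨_, rfl⟩
  have hμ : 0 < μ := by rw [hμd]; positivity
  have hM1 : Δ * μ ≤ β * θ / 12 := by
    have h : μ ≤ β * θ / (12 * Δ) := by rw [hμd]; exact min_le_left _ _
    rw [le_div_iff₀ (by positivity)] at h
    linarith
  have hM2 : (Δ + 1) * μ ≤ a ^ 2 * ρ / 32 := by
    have h : μ ≤ a ^ 2 * ρ / (32 * (Δ + 1)) := by rw [hμd]; exact min_le_right _ _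
    rw [le_div_iff₀ (by positivity)] at h
    linarith
  have hμΔ : μ ≤ Δ * μ := le_mul_of_one_le_left hμ.le hΔr
  have haρ : 0 < a ^ 2 * ρ := by positivity
  have haρ2 : a ^ 2 * ρ ≤ a * ρ := by
    have : a ^ 2 ≤ a := by nlinarith
    gcongr
  obtain ⟨N, hN⟩ := exists_nat_ge (2 / ρ)
  refine ⟨d / 4 * ε ^ 3, μ, max n0 (max N 1), by positivity, hμ, ?_⟩
  intro n hn V _ E hVn hE3 hden hdegE W _ H hsep hdeg hcount
  subst hVn
  have hn0 : n0 ≤ Fintype.card V := (le_max_left _ _).trans hn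
  have hnN : N ≤ Fintype.card V := (le_max_left _ _).trans ((le_max_right _ _).trans hn)
  have hn1 : 1 ≤ Fintype.card V := (le_max_right _ _).trans ((le_max_right _ _).trans hn)
  have hne : Nonempty V := Fintype.card_pos_iff.1 hn1
  obtain ⟨R, hR⟩ : ∃ R : V → V → V → Prop, R = fun x y z => ({x, y, z} : Finset V) ∈ E := ⟨_, rfl⟩
  have hsym : ∀ x y z, R x y z → R y x z := by
    intro x y z h
    rw [hR] at h ⊢
    have : ({y, x, z} : Finset V) = {x, y, z} := by ext; simp; tauto
    simpa only [this] using h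
  have hrot : ∀ x y z, R x y z → R y z x := by
    intro x y z h
    rw [hR] at h ⊢
    have : ({y, z, x} : Finset V) = {x, y, z} := by ext; simp; tauto
    simpa only [this] using h
  have hdist : ∀ x y z, R x y z → x ≠ y ∧ y ≠ z ∧ x ≠ z := by
    intro x y z h
    rw [hR] at h
    have h3 := hE3 _ h
    refine ⟨?_, ?_, ?_⟩ <;> rintro rfl
    · have : ({x, x, z} : Finset V).card ≤ 2 := by simpa using card_le_two
      omega
    · have : ({x, y, y} : Finset V).card ≤ 2 := by simpa using card_le_two
      omega
    · have : ({x, y, x} : Finset V).card ≤ 2 := by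
        have h' : ({x, y, x} : Finset V) = {x, y} := by ext; simp; tauto
        rw [h']; exact card_le_two
      omega
  have htyp : XTyp R c ε := by
    rw [hcd]
    refine xp_typ R d ε (d / 4 * ε ^ 3) hd hε ?_ hn1 ?_
    · have : 0 < d * ε ^ 3 := by positivity
      linarith
    · intro U₁ U₂ U₃
      refine (hden U₁ U₂ U₃).trans (le_of_eq ?_)
      rw [tripCount, hR]
  obtain ⟨nr, hnr⟩ : ∃ nr : ℝ, nr = (Fintype.card V : ℝ) := ⟨_, rfl⟩
  have hnrp : 0 < nr := by rw [hnr]; exact_mod_cast hn1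
  suffices h : ∃ φ ψ, XPE R H univ φ ψ by
    obtain ⟨φ, ψ, h⟩ := h
    rw [hR] at h
    exact xp_copy E H φ ψ h
  rcases lt_or_ge (edgeCnt H : ℝ) (β * nr) with hA | hB
  · refine xp_caseA R hsym c ε hc hc1 hε htyp H Δ hΔ hdeg (by rw [← had]; exact hεa) hcount ?_ ?_
    · rw [← had, ← hnr]
      have h1 : Δ * ε * nr ≤ a / 4 * nr := by
        apply mul_le_mul_of_nonneg_right _ hnrp.le
        linarith
      have h2 : 4 * β * nr ≤ a * nr := by
        apply mul_le_mul_of_nonneg_right _ hnrp.le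
        have : 0 ≤ Δ * β := by positivity
        linarith
      have h3 : 0 < a * nr := by positivity
      linarith
    · rw [← hnr]
      have h1 : ((Δ : ℝ) + 1) * (2 * edgeCnt H) ≤ (Δ + 1) * (2 * (β * nr)) := by gcongr
      have h2 : 4 * (Δ + 1) * β * nr ≤ c * nr := by
        rw [hβe]; exact mul_le_mul_of_nonneg_right hac hnrp.le
      have h3 : 0 ≤ 4 * (Δ + 1) * β * nr := by positivity
      linarith
  · have hWn : (Fintype.card W : ℝ) ≤ nr := by
      rw [hnr]
      have : Fintype.card W ≤ Fintype.card V := by omega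
      exact_mod_cast this
    have hWne : Nonempty W := by
      by_contra hcon
      rw [not_nonempty_iff] at hcon
      have : edgeCnt H = 0 := by
        rw [edgeCnt, card_eq_zero, filter_eq_empty_iff]
        intro e _ he
        induction e using Sym2.ind with
        | _ x y => exact hcon.elim x
      rw [this] at hB
      have : 0 < β * nr := by positivity
      push_cast at hB
      linarith
    obtain ⟨X, Q, cf, hXc, hcf, hcls⟩ := xp_sep H μ hsep
    have hμW : μ * Fintype.card W ≤ μ * nr := by gcongr
    obtain ⟨J, ι, _, _, p, C, A, r, ⟨j1⟩, hAbs, hr, hιc, hAr⟩ := habs V R ε hn0 hrot hdist hεε0 htyp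
      (fun v => (hdegE v).trans (by
        have := xp_hdeg E hE3 v
        rw [hR]
        exact_mod_cast this))
    rw [← hnr] at hr hιc
    have hXc' : (X.card : ℝ) ≤ μ * nr := hXc.trans hμW
    have hcls' := fun a => (hcls a).trans hμW
    have hζn : 0 < (Δ : ℝ) ^ 3 * ζ * nr := by positivity
    have t1 : Δ * (X.card : ℝ) ≤ Δ * μ * nr := by
      rw [mul_assoc]; exact mul_le_mul_of_nonneg_left hXc' hΔ0.le
    have t2 : Δ * μ * nr ≤ β * θ / 12 * nr := mul_le_mul_of_nonneg_right hM1 hnrp.le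
    have t3 : β * θ * nr ≤ β * nr := mul_le_mul_of_nonneg_right hβθ hnrp.le
    have t4 : 444 * (Δ : ℝ) ^ 3 * ζ * nr ≤ β * θ * nr := mul_le_mul_of_nonneg_right hZ hnrp.le
    have t5 : 0 < β * nr := by positivity
    obtain ⟨K, g, hKX, hKc, hclo, hg⟩ := xp_core (ι := ι) H Δ hΔ hdeg X cf hcf (μ * nr) (β / 4)
      (37 * Δ ^ 3 * ζ * nr) (by positivity) hcls' (by positivity)
      (by
        have : β / 4 * (Fintype.card W : ℝ) ≤ β / 4 * nr := by gcongr
        linarith)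
      (by
        have : 12 * (Δ : ℝ) ^ 3 * Fintype.card ι ≤ 12 * Δ ^ 3 * (3 * ζ * nr) := by gcongr
        linarith)
    have hKn : (K.card : ℝ) ≤ 2 / 3 * (θ * nr) := by
      have h1 : β * (K.card : ℝ) ≤ β * (2 / 3 * (θ * nr)) := by linarith
      exact le_of_mul_le_mul_left h1 hβ
    have hXn : (X.card : ℝ) ≤ 1 / 12 * (θ * nr) := by
      have : μ * nr ≤ θ / 12 * nr := by
        apply mul_le_mul_of_nonneg_right _ hnrp.le
        linarith
      linarith
    have hKXn : (K.card : ℝ) + X.card ≤ θ * nr := by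
      have : 0 < θ * nr := by positivity
      linarith
    have hιn : 4 * (Fintype.card ι : ℝ) ≤ θ * nr := by
      have : 444 * ζ * nr ≤ θ * nr := mul_le_mul_of_nonneg_right hZ2 hnrp.le
      have h0 : 0 < ζ * nr := by positivity
      linarith
    have hθn : 4 * (Δ + 1) * θ * nr = a * c ^ 2 * nr := by rw [hθe]
    have hΔθ : θ * nr ≤ Δ * (θ * nr) := le_mul_of_one_le_left (by positivity) hΔr
    have hs : ρ * nr / 4 ≤ ((r / 2 : ℕ) : ℝ) := by
      have h1 : 2 ≤ ρ * nr := by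
        have : 2 / ρ ≤ nr := hN.trans (by rw [hnr]; exact_mod_cast hnN)
        rw [div_le_iff₀ hρ] at this
        linarith
      have h2 : (r : ℝ) ≤ 2 * ((r / 2 : ℕ) : ℝ) + 1 := by
        have : r ≤ 2 * (r / 2) + 1 := by omega
        exact_mod_cast this
      linarith
    obtain ⟨s, hsd⟩ : ∃ s : ℝ, s = ((r / 2 : ℕ) : ℝ) := ⟨_, rfl⟩
    rw [← hsd] at hs
    have hsp : 0 < s := lt_of_lt_of_le (by positivity) hs
    have hs2 : a ^ 2 * ρ * nr / 4 ≤ a ^ 2 * s := by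
      calc a ^ 2 * ρ * nr / 4 = a ^ 2 * (ρ * nr / 4) := by ring
        _ ≤ _ := by gcongr
    have hs3 : a ^ 2 * s ≤ a * s := by
      have : a ^ 2 ≤ a := by nlinarith
      gcongr
    have hs4 : a ^ 2 * s ≤ c * (a * s) := by
      calc a ^ 2 * s = a * (a * s) := by ring
        _ ≤ _ := by gcongr
    have u1 : Δ * ε * nr ≤ a ^ 2 * ρ / 32 * nr := mul_le_mul_of_nonneg_right hE2 hnrp.le
    have u2 : (Δ + 1) * μ * nr ≤ a ^ 2 * ρ / 32 * nr := mul_le_mul_of_nonneg_right hM2 hnrp.le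
    have u3 : ε * nr ≤ Δ * ε * nr := mul_le_mul_of_nonneg_right hεΔ hnrp.le
    have u4 : 0 < μ * nr := by positivity
    have u5 : 0 < Δ * μ * nr := by positivity
    have u6 : 0 < a ^ 2 * ρ * nr := by positivity
    have u7 : Δ * ε * nr ≤ a * c ^ 2 / 4 * nr := mul_le_mul_of_nonneg_right hE1 hnrp.le
    have u8 : a * c ^ 2 * nr ≤ c * nr := mul_le_mul_of_nonneg_right hac2 hnrp.le
    have u9 : 0 < θ * nr := by positivity
    refine xp_caseB R hsym c ε hc hc1 hε htyp p C A r hAbs j1 hAr H Δ hΔ hdeg X cf hcf (μ * nr)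
      u4.le hcls' hXc' K g hKX hclo hg hcount ?_ ?_ ?_ (a * s / 2) (by positivity) ?_
      (by rw [← had]; exact hεa) ?_ ?_
    · rw [← had, ← hnr]; linarith
    · rw [← hnr]
      have : ((Δ : ℝ) + 1) * (K.card + X.card) ≤ (Δ + 1) * (θ * nr) := by gcongr
      linarith
    · rw [← had, ← hnr, ← hsd]; linarith
    · rw [← had, ← hsd]; linarith
    · rw [← had, ← hnr]; linarith
    · linarith

end Helpers

/-! ## Statement 2 -/

theorem stmt2 (Δ : ℕ) (hΔ : 1 ≤ Δ) (d α : ℝ) (hd : 0 < d) (hα : 0 < α) :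
    ∃ (η μ : ℝ) (n₀ : ℕ), 0 < η ∧ 0 < μ ∧
    ∀ n : ℕ, n₀ ≤ n →
    ∀ (V : Type) [Fintype V] (E : Set (Finset V)),
      Fintype.card V = n →
      (∀ e ∈ E, e.card = 3) →
      (∀ U₁ U₂ U₃ : Finset V,
        d * (U₁.card : ℝ) * (U₂.card : ℝ) * (U₃.card : ℝ) - η * (n : ℝ) ^ 3 ≤
          (tripCount E U₁ U₂ U₃ : ℝ)) →
      (∀ v : V, α * (n : ℝ) ^ 2 ≤ (hDeg E v : ℝ)) →
      ∀ (W : Type) [Fintype W] (H : SimpleGraph W),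
        Separable H μ → (∀ w, degOf H w ≤ Δ) →
        Fintype.card W + edgeCnt H ≤ n →
        HasExpansionCopy E H := by
  obtain ⟨η, μ, n₀, hη, hμ, h⟩ := xp_main Δ hΔ (min d 1) (min α 1) (by positivity) (by positivity)
    (min_le_right _ _) (min_le_right _ _)
  refine ⟨η, μ, n₀, hη, hμ, ?_⟩
  intro n hn V _ E hVn hE hden hdegE W _ H
  refine h n hn V E hVn hE (fun U₁ U₂ U₃ => le_trans ?_ (hden U₁ U₂ U₃))
    (fun v => le_trans ?_ (hdegE v)) W H
  · have : min d 1 * (U₁.card : ℝ) * (U₂.card : ℝ) * (U₃.card : ℝ) ≤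
        d * (U₁.card : ℝ) * (U₂.card : ℝ) * (U₃.card : ℝ) := by
      gcongr
      exact min_le_left _ _
    linarith
  · gcongr
    exact min_le_left _ _
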